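/- arXiv:math/0007211 — 5 statements merged into one kernel-verified Lean document; each statement's English description precedes it below -/
import Mathlib

section
/- Let F = F₁ ∩ ⋯ ∩ Fₙ where each Fᵢ is a henselian algebraic extension of F inside a fixed separable closure, and the valuations v₁, …, vₙ induced on F by F₁, …, Fₙ are pairwise independent. Then each Fᵢ is a henselisation of (F, vᵢ). -/
/-- `(L, O)` is a henselisation of `K` (mapped into `L` by `f`): a minimal henselian
separably algebraic valued extension. -/
def IsHenselisation {K L : Type*} [Field K] [Field L] (f : K →+* L)
    (O : ValuationSubring L) : Prop :=
  (∀ x : L, ∃ p : Polynomial K, p ≠ 0 ∧ p.Separable ∧ Polynomial.eval₂ f x p = 0) ∧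
  HenselianLocalRing ↥O ∧
  ∀ E : Subfield L, f.range ≤ E.toSubring → HenselianLocalRing ↥(O.comap (Subfield.subtype E)) → E = ⊤

/-- Independence of two valuation subrings of a field. -/
def VSIndependent {F : Type*} [Field F] (A B : ValuationSubring F) : Prop :=
  A ≠ ⊤ ∧ B ≠ ⊤ ∧ Subring.closure ((A : Set F) ∪ (B : Set F)) = ⊤

/-!
It suffices that `F` is dense in `Fᵢ`: a henselian field `E` that is dense in a separable algebraic
extension `L` is equal to `L`, because Newton's form of Hensel's lemma, applied over `E` near
`x : L`, gives the minimal polynomial of `x` over `E` a root in `E`.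

For the density, let `x ∈ Fᵢ` have minimal polynomial `p` over `F`, and let `f` be a product of
`deg p` distinct monic linear factors over `F`. Independence gives `e ∈ F` that is close to `1` for
`vᵢ` and close to `0` for the other `vⱼ`. Then `f + e (p - f)` is close to `p` for `vᵢ`, so it has a
root in `Fᵢ` near `x`; and it is close to `f` for each other `vⱼ`, so it splits over `Fⱼ`. Thus that
root lies in every `Fⱼ`, that is, in `F`.
-/

open Polynomial Topology Filter

section HenselianLocalRing

open IsLocalRing

variable {R : Type*} [CommRing R]

theorem isUnit_iff_of_sub_mem_maximalIdeal [IsLocalRing R] {x y : R}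
    (h : x - y ∈ maximalIdeal R) : IsUnit x ↔ IsUnit y := by
  rw [← residue_ne_zero_iff_isUnit, ← residue_ne_zero_iff_isUnit,
    sub_eq_zero.1 ((map_sub (residue R) x y).symm.trans ((residue_eq_zero_iff _).2 h))]

variable [HenselianLocalRing R]

theorem exists_isUnit_pow_add_pow_add_mul_eval_eq_zero {m : R} (hm : m ∈ maximalIdeal R)
    {W : R[X]} {N : ℕ} (hW : W.natDegree ≤ N) :
    ∃ z : R, IsUnit z ∧ z ^ (N + 2) + (z ^ (N + 1) + m * W.eval z) = 0 := by
  let Q : R[X] := X ^ (N + 2) + (X ^ (N + 1) + C m * W)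
  have monic : Q.Monic := by
    have : (X ^ (N + 1) + C m * W).natDegree ≤ N + 1 := by
      compute_degree
      exact max_le le_rfl (hW.trans N.le_succ)
    exact monic_X_pow_add
      ((degree_le_of_natDegree_le this).trans_lt (Nat.cast_lt.2 (N + 1).lt_succ_self))
  have root_mod : Q.eval (-1) ∈ maximalIdeal R := by
    have : Q.eval (-1) = m * W.eval (-1) := by
      simp only [Q, eval_add, eval_mul, eval_pow, eval_X, eval_C]; ring
    exact this ▸ Ideal.mul_mem_right _ _ hm
  have simple_mod : Q.derivative.eval (-1) - (-1) ^ (N + 1) ∈ maximalIdeal R := by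
    have : Q.derivative.eval (-1) - (-1) ^ (N + 1) = m * W.derivative.eval (-1) := by
      simp only [Q, derivative_add, derivative_mul, derivative_X_pow, derivative_C, eval_add,
        eval_mul, eval_pow, eval_X, eval_C, eval_zero, Nat.add_one_sub_one]
      push_cast
      ring
    exact this ▸ Ideal.mul_mem_right _ _ hm
  obtain ⟨z, hz, hz_mod⟩ := HenselianLocalRing.is_henselian Q monic (-1) root_mod
    ((isUnit_iff_of_sub_mem_maximalIdeal simple_mod).2 (isUnit_one.neg.pow _))
  refine ⟨z, (isUnit_iff_of_sub_mem_maximalIdeal hz_mod).2 isUnit_one.neg, ?_⟩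
  simpa only [Q, IsRoot, eval_add, eval_mul, eval_pow, eval_X, eval_C] using hz

theorem exists_dvd_and_add_add_sq_mul_eval_eq_zero {m : R} (hm : m ∈ maximalIdeal R) (w : R[X]) :
    ∃ y, m ∣ y ∧ m + y + y ^ 2 * w.eval y = 0 := by
  -- The defining property of henselian rings needs a monic polynomial: substitute `y = m / z`.
  set w' := w.comp (C m * X) with hw'
  set N := w'.natDegree
  have hN : (reflect N w').natDegree ≤ N := natDegree_reflect_le.trans_eq (max_self N)
  obtain ⟨z, hz_unit, hz⟩ := exists_isUnit_pow_add_pow_add_mul_eval_eq_zero hm hN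
  obtain ⟨u, hzu⟩ := hz_unit.exists_right_inv
  have hw : (reflect N w').eval z * u ^ N = w.eval (m * u) := by
    let _ : Invertible u := ⟨z, hzu, mul_comm z u ▸ hzu⟩
    have : (reflect N w').eval z * u ^ N = w'.eval u :=
      eval₂_reflect_mul_pow (RingHom.id R) u N w' le_rfl
    simpa only [hw', eval_comp, eval_mul, eval_C, eval_X] using this
  have hzu_pow (k : ℕ) : (z * u) ^ k = 1 := by rw [hzu, one_pow]
  refine ⟨m * u, dvd_mul_right _ _, ?_⟩
  rw [← hw]
  linear_combination m * u ^ (N + 2) * hz - m * hzu_pow (N + 2) - m * u * hzu_pow (N + 1)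

theorem exists_isRoot_dvd_sub_of_eval_eq_sq_mul {p : R[X]} {a m : R} (hm : m ∈ maximalIdeal R)
    (h : p.eval a = p.derivative.eval a ^ 2 * m) :
    ∃ b, p.IsRoot b ∧ p.derivative.eval a * m ∣ b - a := by
  set d := p.derivative.eval a
  set r := (taylor a p).divX.divX
  have expand (x : R) : p.eval (d * x + a) = d ^ 2 * (m + x + x ^ 2 * r.eval (d * x)) := by
    have hr : (taylor a p) = (r * X + C d) * X + C (d ^ 2 * m) := by
      have h0 : (taylor a p).coeff 0 = d ^ 2 * m := by rw [taylor_coeff_zero, h]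
      have h1 : (taylor a p).divX.coeff 0 = d := by rw [coeff_divX, taylor_coeff_one]
      rw [← h0, ← h1, divX_mul_X_add, divX_mul_X_add]
    have := congrArg (eval (d * x)) hr
    rw [taylor_eval] at this
    simp only [eval_add, eval_mul, eval_X, eval_C] at this
    linear_combination this
  obtain ⟨y, hy_dvd, hy⟩ :=
    exists_dvd_and_add_add_sq_mul_eval_eq_zero hm (r.comp (C d * X))
  refine ⟨d * y + a, ?_, ?_⟩
  · rw [IsRoot, expand, ← mul_zero (d ^ 2), ← hy]
    simp only [eval_comp, eval_mul, eval_C, eval_X]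
  · rw [add_sub_cancel_right]
    exact mul_dvd_mul_left d hy_dvd

end HenselianLocalRing

section Valuation

variable {L Γ : Type*} [Field L] [LinearOrderedCommGroupWithZero Γ] (v : Valuation L Γ)

theorem exists_ne_zero_forall_valuation_mul_coeff_le_one (p : L[X]) :
    ∃ c, c ≠ 0 ∧ ∀ k, v (c * p.coeff k) ≤ 1 := by
  obtain rfl | hp := eq_or_ne p 0
  · exact ⟨1, one_ne_zero, by simp⟩
  obtain ⟨k, hk, hmax⟩ :=
    p.support.exists_max_image (fun k ↦ v (p.coeff k)) (support_nonempty.2 hp)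
  have hk0 : p.coeff k ≠ 0 := mem_support_iff.1 hk
  refine ⟨(p.coeff k)⁻¹, inv_ne_zero hk0, fun j ↦ ?_⟩
  rw [← div_eq_inv_mul, map_div₀, div_le_one₀ (zero_lt_iff.2 (v.ne_zero_iff.2 hk0))]
  by_cases hj : j ∈ p.support
  · exact hmax j hj
  · simp [notMem_support_iff.1 hj]

theorem exists_ne_zero_valuation_le_and_le {x y : L} (hx : x ≠ 0) (hy : y ≠ 0) :
    ∃ z, z ≠ 0 ∧ v z ≤ v x ∧ v z ≤ v y :=
  (le_total (v x) (v y)).elim (fun h ↦ ⟨x, hx, le_rfl, h⟩) fun h ↦ ⟨y, hy, h, le_rfl⟩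

/-- The factor `c` clears the denominators of the Taylor coefficients of `p` at `a`. -/
theorem exists_isRoot_valuation_sub_mul_le [HenselianLocalRing v.valuationSubring] {p : L[X]}
    {a c : L} (hc : ∀ k, v (c * (taylor a p).coeff k) ≤ 1)
    (ha : v (p.eval a) < v c * v (p.derivative.eval a) ^ 2) :
    ∃ b, p.IsRoot b ∧ v (b - a) * v (p.derivative.eval a) ≤ v (p.eval a) := by
  have hc0 : c ≠ 0 := by rintro rfl; simp at ha
  have hd0 : p.derivative.eval a ≠ 0 := by intro h; simp [h] at ha
  obtain ⟨q, hq⟩ : ∃ q : v.valuationSubring[X],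
      q.map (algebraMap v.valuationSubring L) = C c * taylor a p :=
    (mem_lifts _).1 <| (lifts_iff_coeff_lifts _).2 fun k ↦
      ⟨⟨c * (taylor a p).coeff k, hc k⟩, (coeff_C_mul _).symm⟩
  have q_eval (x : v.valuationSubring) : algebraMap _ L (q.eval x) = c * p.eval (x + a) := by
    rw [← eval_map_apply, hq, eval_mul, eval_C, taylor_eval]
    rfl
  have q_derivative : algebraMap _ L (q.derivative.eval 0) = c * p.derivative.eval a := by
    have := congrArg (coeff · 1) hq
    simpa only [coeff_map, coeff_C_mul, taylor_coeff_one, ← coeff_zero_eq_eval_zero,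
      coeff_derivative, Nat.cast_zero, zero_add, mul_one] using this
  have hlt : v (p.eval a / (c * p.derivative.eval a ^ 2)) < 1 := by
    rw [map_div₀, map_mul, map_pow]
    exact (div_lt_one₀ (zero_le.trans_lt ha)).2 ha
  obtain ⟨m, hm⟩ : ∃ m, algebraMap v.valuationSubring L m =
      p.eval a / (c * p.derivative.eval a ^ 2) := ⟨⟨_, hlt.le⟩, rfl⟩
  have newton : q.eval 0 = q.derivative.eval 0 ^ 2 * m := by
    apply FaithfulSMul.algebraMap_injective v.valuationSubring L
    rw [map_mul, map_pow, q_eval, q_derivative, ZeroMemClass.coe_zero, zero_add, hm]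
    field_simp
  obtain ⟨b, hb, y, hy⟩ :=
    exists_isRoot_dvd_sub_of_eval_eq_sq_mul
      (v.mem_maximalIdeal_iff.2 ((congrArg v hm).trans_lt hlt)) newton
  have hb_root : p.IsRoot (b + a) := by
    have := q_eval b
    rwa [hb, map_zero, zero_eq_mul, or_iff_right hc0] at this
  have hby : (b : L) * p.derivative.eval a = p.eval a * y := by
    have := congrArg (algebraMap _ L) hy
    rw [sub_zero, map_mul, map_mul, q_derivative, hm] at this
    rw [show (b : L) = _ from this]
    field_simp
    rfl
  refine ⟨b + a, hb_root, ?_⟩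
  rw [add_sub_cancel_right, ← map_mul, hby, map_mul]
  exact mul_le_of_le_one_right' y.2

end Valuation

section Valued

open Valued

section Basic

variable {R Γ : Type*} [Field R] [LinearOrderedCommGroupWithZero Γ] [Valued R Γ]

theorem mem_nhds_iff_exists_valuation_sub_lt {s : Set R} {x : R} :
    s ∈ 𝓝 x ↔ ∃ c : R, c ≠ 0 ∧ {y | v (y - x) < v c} ⊆ s := by
  rw [Valued.mem_nhds]
  constructor
  · rintro ⟨γ, hγ⟩
    obtain ⟨c, hc : v.restrict c = γ⟩ :=
      MonoidWithZeroHom.ValueGroup₀.restrict₀_surjective _ γ.val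
    refine ⟨c, v.restrict.ne_zero_iff.1 (hc ▸ γ.ne_zero), ?_⟩
    simpa only [← hc, v.restrict_lt_iff] using hγ
  · rintro ⟨c, hc, hs⟩
    refine ⟨Units.mk0 (v.restrict c) (v.restrict.ne_zero_iff.2 hc), ?_⟩
    simpa only [Units.val_mk0, v.restrict_lt_iff] using hs

theorem eventually_valuation_lt {c : R} (hc : c ≠ 0) : ∀ᶠ y in 𝓝 (0 : R), v y < v c :=
  mem_nhds_iff_exists_valuation_sub_lt.2 ⟨c, hc, fun y hy ↦ by simpa using hy⟩

theorem eventually_valuation_mul_coeff_taylor_le_one {P : R[X]} {a c : R}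
    (hc : ∀ k, v (c * (taylor a P).coeff k) ≤ 1) :
    ∀ᶠ y in 𝓝 a, ∀ k, v (c * (taylor y P).coeff k) ≤ 1 := by
  have each (k : ℕ) : ∀ᶠ y in 𝓝 a, v (c * (taylor y P).coeff k) ≤ 1 := by
    simp only [taylor_coeff] at hc ⊢
    have : Continuous fun y ↦ c * (hasseDeriv k P).eval y := by fun_prop
    exact this.continuousAt.preimage_mem_nhds ((isOpen_integer R).mem_nhds (hc k))
  filter_upwards [(Finset.range (P.natDegree + 1)).eventually_all.2 fun k _ ↦ each k] with y hy k
  by_cases hk : k ∈ Finset.range (P.natDegree + 1)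
  · exact hy k hk
  · rw [coeff_eq_zero_of_natDegree_lt (by simpa using hk)]
    simp

end Basic

section Henselian

variable {L Γ : Type*} [Field L] [LinearOrderedCommGroupWithZero Γ] [Valued L Γ]
  [HenselianLocalRing (v : Valuation L Γ).valuationSubring]

theorem eventually_exists_isRoot_add_C_mul {P : L[X]} {a : L} (ha : P.IsRoot a)
    (hd : P.derivative.eval a ≠ 0) (Q : L[X]) {U : Set L} (hU : U ∈ 𝓝 a) :
    ∀ᶠ t in 𝓝 (0 : L), ∃ b ∈ U, (P + C t * Q).IsRoot b := by
  set d := P.derivative.eval a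
  obtain ⟨u, hu, hUu⟩ := mem_nhds_iff_exists_valuation_sub_lt.1 hU
  obtain ⟨c₁, hc₁, hP⟩ := exists_ne_zero_forall_valuation_mul_coeff_le_one v (taylor a P)
  obtain ⟨c₂, hc₂, hQ⟩ := exists_ne_zero_forall_valuation_mul_coeff_le_one v (taylor a Q)
  obtain ⟨c, hc, hcc₁, hcc₂⟩ := exists_ne_zero_valuation_le_and_le v hc₁ hc₂
  have value_tendsto : Tendsto (fun t ↦ t * Q.eval a) (𝓝 0) (𝓝 0) :=
    Continuous.tendsto' (by fun_prop) _ _ (zero_mul _)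
  have derivative_tendsto : Tendsto (fun t ↦ d + t * Q.derivative.eval a) (𝓝 0) (𝓝 d) :=
    Continuous.tendsto' (by fun_prop) _ _ (by rw [zero_mul, add_zero])
  filter_upwards [eventually_valuation_lt one_ne_zero,
    value_tendsto.eventually (eventually_valuation_lt (mul_ne_zero hc (pow_ne_zero 2 hd))),
    value_tendsto.eventually (eventually_valuation_lt (mul_ne_zero hu hd)),
    derivative_tendsto.eventually (locally_const (v.ne_zero_iff.2 hd))]
    with t ht hc_lt hu_lt hd_eq
  have eval_eq : (P + C t * Q).eval a = t * Q.eval a := by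
    rw [eval_add, ha, zero_add, eval_mul, eval_C]
  have derivative_eq : (P + C t * Q).derivative.eval a = d + t * Q.derivative.eval a := by
    rw [derivative_add, derivative_C_mul, eval_add, eval_mul, eval_C]
  have integral (k : ℕ) : v (c * (taylor a (P + C t * Q)).coeff k) ≤ 1 := by
    have shrink {c' x : L} (hcc' : v c ≤ v c') (hx : v (c' * x) ≤ 1) : v (c * x) ≤ 1 := by
      rw [map_mul] at hx ⊢
      exact (mul_le_mul_left hcc' _).trans hx
    rw [map_add, taylor_mul, taylor_C, coeff_add, coeff_C_mul, mul_add, mul_left_comm]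
    refine v.map_add_le (shrink hcc₁ (hP k)) ?_
    rw [map_mul]
    exact mul_le_one' (by simpa only [map_one] using ht.le) (shrink hcc₂ (hQ k))
  obtain ⟨b, hb, hba⟩ := exists_isRoot_valuation_sub_mul_le v integral <| by
    rw [eval_eq, derivative_eq, hd_eq, ← map_pow, ← map_mul]; exact hc_lt
  rw [eval_eq, derivative_eq, hd_eq] at hba
  rw [v.map_mul u d] at hu_lt
  exact ⟨b, hUu (lt_of_mul_lt_mul_right (hba.trans_lt hu_lt) zero_le), hb⟩

theorem eventually_splits_add_C_mul {P Q : L[X]} (hP : P.Splits) (hsep : P.Separable)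
    (hQ : Q.degree < P.degree) : ∀ᶠ t in 𝓝 (0 : L), (P + C t * Q).Splits := by
  classical
  obtain ⟨U, hU, hdisj⟩ := P.roots.toFinset.finite_toSet.t2_separation
  have near (a : L) (ha : a ∈ P.roots.toFinset) :
      ∀ᶠ t in 𝓝 (0 : L), ∃ b ∈ U a, (P + C t * Q).IsRoot b := by
    have ha' : P.IsRoot a := isRoot_of_mem_roots (Multiset.mem_toFinset.1 ha)
    exact eventually_exists_isRoot_add_C_mul ha'
      (hsep.eval₂_derivative_ne_zero (RingHom.id L) ha') Q ((hU a).2.mem_nhds (hU a).1)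
  filter_upwards [P.roots.toFinset.eventually_all.2 near] with t ht
  choose! b hbU hb using ht
  have degree_eq : (P + C t * Q).degree = P.degree :=
    degree_add_eq_left_of_degree_lt ((smul_eq_C_mul t ▸ degree_smul_le t Q).trans_lt hQ)
  have hPt : P + C t * Q ≠ 0 := by
    rintro h
    rw [h, degree_zero, eq_comm, degree_eq_bot] at degree_eq
    exact hsep.ne_zero degree_eq
  have hb_inj : Set.InjOn b P.roots.toFinset := fun x hx y hy hxy ↦
    hdisj.elim hx hy (Set.not_disjoint_iff.2 ⟨b x, hbU x hx, hxy ▸ hbU y hy⟩)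
  have hb_roots : P.roots.toFinset.image b ⊆ (P + C t * Q).roots.toFinset :=
    Finset.image_subset_iff.2 fun a ha ↦ Multiset.mem_toFinset.2 ((mem_roots hPt).2 (hb a ha))
  refine splits_iff_card_roots.2 ((card_roots' _).antisymm ?_)
  calc (P + C t * Q).natDegree = P.roots.card := by
        rw [natDegree_eq_of_degree_eq degree_eq, splits_iff_card_roots.1 hP]
    _ = (P.roots.toFinset.image b).card := by
        rw [Finset.card_image_of_injOn hb_inj,
          Multiset.toFinset_card_of_nodup (nodup_roots hsep)]
    _ ≤ (P + C t * Q).roots.card :=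
        (Finset.card_le_card hb_roots).trans (Multiset.toFinset_card_le _)

end Henselian

section Induced

variable (K L : Type*) {Γ : Type*} [Field K] [Field L] [Algebra K L]
  [LinearOrderedCommGroupWithZero Γ] [Valued L Γ]

/-- The valuation that a valued field `L` induces on a subfield `K`. -/
abbrev inducedValuation : Valuation K Γ := v.comap (algebraMap K L)

end Induced

section Dense

variable {E L Γ : Type*} [Field E] [Field L] [Algebra E L] [LinearOrderedCommGroupWithZero Γ]
  [Valued L Γ] [HenselianLocalRing (inducedValuation E L).valuationSubring]

theorem exists_isRoot_of_denseRange (hE : DenseRange (algebraMap E L)) {p : E[X]} {α : L}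
    (hα : aeval α p = 0) (hα' : aeval α p.derivative ≠ 0) : ∃ b, p.IsRoot b := by
  set P := p.map (algebraMap E L) with hP
  replace hα : P.eval α = 0 := (eval_map_algebraMap p α).trans hα
  replace hα' : P.derivative.eval α ≠ 0 := by
    rwa [hP, derivative_map, eval_map_algebraMap]
  obtain ⟨c₀, hc₀, hPc₀⟩ := exists_ne_zero_forall_valuation_mul_coeff_le_one v (taylor α P)
  obtain ⟨c, hc⟩ : ∃ c : E, v (algebraMap E L c) = v c₀ :=
    hE.mem_nhds (locally_const (v.ne_zero_iff.2 hc₀))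
  have hPc (k : ℕ) : v (algebraMap E L c * (taylor α P).coeff k) ≤ 1 := by
    rw [map_mul, hc, ← map_mul]; exact hPc₀ k
  have value_tendsto : Tendsto (P.eval ·) (𝓝 α) (𝓝 0) := P.continuous.tendsto' α 0 hα
  obtain ⟨β, hβ, hβ', hβc⟩ : ∃ β,
      v (P.eval (algebraMap E L β)) < v (c₀ * P.derivative.eval α ^ 2) ∧
      v (P.derivative.eval (algebraMap E L β)) = v (P.derivative.eval α) ∧
      ∀ k, v (algebraMap E L c * (taylor (algebraMap E L β) P).coeff k) ≤ 1 :=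
    hE.mem_nhds <|
      (value_tendsto.eventually <|
        eventually_valuation_lt (mul_ne_zero hc₀ (pow_ne_zero 2 hα'))).and <|
      (P.derivative.continuous.continuousAt.eventually <|
        locally_const (v.ne_zero_iff.2 hα')).and <|
      eventually_valuation_mul_coeff_taylor_le_one hPc
  have integral (k : ℕ) : inducedValuation E L (c * (taylor β p).coeff k) ≤ 1 := by
    rw [Valuation.comap_apply, map_mul, ← coeff_map, map_taylor]
    exact hβc k
  have small : inducedValuation E L (p.eval β) <
      inducedValuation E L c * inducedValuation E L (p.derivative.eval β) ^ 2 := by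
    simp only [Valuation.comap_apply, ← eval_map_apply, ← derivative_map]
    rwa [hβ', hc, ← map_pow, ← map_mul]
  exact (exists_isRoot_valuation_sub_mul_le _ integral small).imp fun _ hb ↦ hb.1

theorem surjective_of_denseRange [Algebra.IsSeparable E L] (hE : DenseRange (algebraMap E L)) :
    Function.Surjective (algebraMap E L) := by
  intro x
  have hsep : (minpoly E x).Separable := Algebra.IsSeparable.isSeparable E x
  obtain ⟨b, hb⟩ := exists_isRoot_of_denseRange hE (minpoly.aeval E x)
    (hsep.aeval_derivative_ne_zero (minpoly.aeval E x))
  have irreducible := minpoly.irreducible (Algebra.IsSeparable.isIntegral E x)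
  exact minpoly.mem_range_of_degree_eq_one E x
    (degree_eq_one_of_irreducible_of_root irreducible hb)

end Dense

end Valued

section Approximation

variable {K : Type*} [Field K]

theorem mul_mem_of_vsIndependent {A B : ValuationSubring K} (h : VSIndependent A B)
    {J : AddSubgroup K} (hA : ∀ a ∈ A, ∀ y ∈ J, a * y ∈ J) (hB : ∀ b ∈ B, ∀ y ∈ J, b * y ∈ J)
    (x : K) {y : K} (hy : y ∈ J) : x * y ∈ J := by
  have hx : x ∈ Subring.closure ((A : Set K) ∪ B) := h.2.2 ▸ Subring.mem_top x
  induction hx using Subring.closure_induction generalizing y with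
  | mem x hx => exact hx.elim (hA x · y hy) (hB x · y hy)
  | zero => exact (zero_mul y).symm ▸ J.zero_mem
  | one => rwa [one_mul]
  | add x x' _ _ ihx ihx' => exact (add_mul x x' y).symm ▸ J.add_mem (ihx hy) (ihx' hy)
  | neg x _ ih => exact (neg_mul x y).symm ▸ J.neg_mem (ih hy)
  | mul x x' _ _ ihx ihx' => exact (mul_assoc x x' y).symm ▸ ihx (ihx' hy)

section Pair

variable {Γ Γ' : Type*} [LinearOrderedCommGroupWithZero Γ] [LinearOrderedCommGroupWithZero Γ']
  {v : Valuation K Γ} {w : Valuation K Γ'}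

theorem isNontrivial_of_vsIndependent (h : VSIndependent v.valuationSubring w.valuationSubring) :
    v.IsNontrivial ∧ w.IsNontrivial :=
  ⟨not_not.1 (mt v.valuationSubring_eq_top_iff.2 h.1),
    not_not.1 (mt w.valuationSubring_eq_top_iff.2 h.2.1)⟩

theorem exists_valuation_lt_and_valuation_lt
    (h : VSIndependent v.valuationSubring w.valuationSubring) {c d : K} (hc : c ≠ 0) (hd : d ≠ 0) :
    ∃ u, v c < v u ∧ w u < w d := by
  obtain ⟨hv, hw⟩ := isNontrivial_of_vsIndependent h
  obtain ⟨π, hπ0, hπ⟩ := hw.exists_lt_one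
  obtain ⟨t, ht⟩ := hv.exists_one_lt
  by_contra! H
  -- `J` is stable under both valuation rings, hence under `K`, but its elements are bounded.
  let J : AddSubgroup K :=
    { carrier := {y | ∀ b, w b ≤ 1 → v (y * b) ≤ v c}
      zero_mem' := fun b _ ↦ by simp
      add_mem' := fun hy hz b hb ↦ add_mul _ _ b ▸ v.map_add_le (hy b hb) (hz b hb)
      neg_mem' := fun hy b hb ↦ by rw [neg_mul, Valuation.map_neg]; exact hy b hb }
  have v_mul_mem : ∀ a ∈ v.valuationSubring, ∀ y ∈ J, a * y ∈ J := fun a ha y hy b hb ↦ by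
    rw [mul_assoc, map_mul]
    exact (mul_le_of_le_one_left' ha).trans (hy b hb)
  have w_mul_mem : ∀ a ∈ w.valuationSubring, ∀ y ∈ J, a * y ∈ J := fun a ha y hy b hb ↦ by
    rw [mul_comm a, mul_assoc]
    exact hy _ ((map_mul w a b).trans_le (mul_le_one' ha hb))
  have hdπ : d * π ∈ J := fun b hb ↦ not_lt.1 fun hlt ↦ (H _ hlt).not_gt <| by
    rw [mul_assoc, map_mul]
    exact mul_lt_of_lt_one_right (zero_lt_iff.2 (w.ne_zero_iff.2 hd))
      ((map_mul w π b).trans_lt (mul_lt_one_of_lt_of_le hπ hb))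
  have hct : v (c * t) ≤ v c := by
    simpa [div_mul_cancel₀ (c * t) (mul_ne_zero hd hπ0)] using
      mul_mem_of_vsIndependent h v_mul_mem w_mul_mem (c * t / (d * π)) hdπ 1 (map_one w).le
  rw [map_mul] at hct
  exact hct.not_gt (lt_mul_of_one_lt_right (zero_lt_iff.2 (v.ne_zero_iff.2 hc)) ht)

theorem exists_valuation_sub_one_lt_and_lt
    (h : VSIndependent v.valuationSubring w.valuationSubring) {c d : K} (hc : c ≠ 0) (hd : d ≠ 0) :
    ∃ e, v (e - 1) < v c ∧ w e < w d := by
  obtain ⟨c', hc', hc'1, hc'c⟩ := exists_ne_zero_valuation_le_and_le v one_ne_zero hc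
  obtain ⟨d', hd', hd'1, hd'd⟩ := exists_ne_zero_valuation_le_and_le w one_ne_zero hd
  rw [map_one] at hc'1 hd'1
  obtain ⟨u, hu, hu'⟩ := exists_valuation_lt_and_valuation_lt h (inv_ne_zero hc') hd'
  have hv0 : 0 < v c' := zero_lt_iff.2 (v.ne_zero_iff.2 hc')
  have hu1 : 1 < v u := (map_inv₀ v c' ▸ (one_le_inv₀ hv0).2 hc'1).trans_lt hu
  have hv1 : v (1 + u) = v u := v.map_add_eq_of_lt_right ((map_one v).trans_lt hu1)
  have hw1 : w (1 + u) = 1 := w.map_one_add_of_lt (hu'.trans_le hd'1)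
  have h1u : 1 + u ≠ 0 := w.ne_zero_iff.1 (hw1 ▸ one_ne_zero)
  refine ⟨u / (1 + u), ?_, ?_⟩
  · rw [div_sub_one h1u, sub_add_cancel_right, map_div₀, Valuation.map_neg, map_one, hv1, one_div]
    refine (inv_lt_of_inv_lt₀ hv0 ?_).trans_le hc'c
    rwa [← map_inv₀]
  · rw [map_div₀, hw1, div_one]
    exact hu'.trans_le hd'd

end Pair

section Clip

/-- The function `x ↦ x / (1 + x (x - 1))`. Under any valuation it keeps elements close to `0` or
to `1` there and makes large elements small; this controls the valuations that the element
separating one pair of independent valuations says nothing about. -/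
def clip (x : K) : K := x / (1 + x * (x - 1))

variable {Γ : Type*} [LinearOrderedCommGroupWithZero Γ] {v : Valuation K Γ} {x : K}

theorem valuation_clip_of_lt_one (h : v x < 1) : v (clip x) = v x := by
  have hx1 : v (x - 1) ≤ 1 := v.map_sub_le h.le (map_one v).le
  rw [clip, map_div₀, v.map_one_add_of_lt ((map_mul v _ _).trans_lt (mul_lt_one_of_lt_of_le h hx1)),
    div_one]

theorem valuation_clip_lt_one (h : 1 < v x) : v (clip x) < 1 := by
  have hx1 : v (x - 1) = v x := v.map_sub_eq_of_lt_left ((map_one v).trans_lt h)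
  have hxx : v x < v (x * (x - 1)) := by
    rw [map_mul, hx1]; exact lt_mul_of_one_lt_left (zero_lt_one.trans h) h
  rw [clip, map_div₀, v.map_add_eq_of_lt_right ((map_one v).trans_lt (h.trans hxx))]
  exact (div_lt_one₀ (zero_le.trans_lt hxx)).2 hxx

theorem valuation_clip_sub_one_le (h : v (x - 1) < 1) : v (clip x - 1) ≤ v (x - 1) := by
  have hx : v x = 1 := by simpa using v.map_one_add_of_lt h
  have hden : v (1 + x * (x - 1)) = 1 :=
    v.map_one_add_of_lt (by rwa [map_mul, hx, one_mul])
  have hden0 : 1 + x * (x - 1) ≠ 0 := v.ne_zero_iff.1 (hden ▸ one_ne_zero)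
  have : clip x - 1 = -((x - 1) * (x - 1)) / (1 + x * (x - 1)) := by
    rw [clip]; field_simp; ring
  rw [this, map_div₀, hden, div_one, Valuation.map_neg, map_mul]
  exact mul_le_of_le_one_left' h.le

end Clip

section Family

variable {ι : Type*} {Γ : ι → Type*} [∀ j, LinearOrderedCommGroupWithZero (Γ j)]
  {v : ∀ j, Valuation K (Γ j)}

theorem exists_valuation_le_one_and_forall_valuation_eq (n : ι) (x : K) :
    ∃ y, v n y ≤ 1 ∧ ∀ j, (v j x < 1 → v j y = v j x) ∧
      (v j (x - 1) < 1 → v j (y - 1) ≤ v j (x - 1)) := by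
  -- If `v n x = 1`, the denominator of `clip x` may be small.
  obtain hx | hx := le_or_gt (v n x) 1
  · exact ⟨x, hx, fun _ ↦ ⟨fun _ ↦ rfl, fun _ ↦ le_rfl⟩⟩
  · exact ⟨clip x, (valuation_clip_lt_one hx).le,
      fun _ ↦ ⟨valuation_clip_of_lt_one, valuation_clip_sub_one_le⟩⟩

theorem exists_valuation_sub_one_lt_and_forall_mem_lt {i : ι} (s : Finset ι)
    (h : ∀ j ∈ s, VSIndependent (v i).valuationSubring (v j).valuationSubring)
    {c : K} {d : ι → K} (hc : c ≠ 0) (hd : ∀ j ∈ s, d j ≠ 0) :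
    ∃ e, v i (e - 1) < v i c ∧ ∀ j ∈ s, v j e < v j (d j) := by
  classical
  induction s using Finset.induction_on generalizing c d with
  | empty => exact ⟨1, by simpa [zero_lt_iff] using hc, by simp⟩
  | insert n s _ ih =>
    rw [Finset.forall_mem_insert] at h hd
    obtain ⟨c', hc', hc'1, hc'c⟩ := exists_ne_zero_valuation_le_and_le (v i) one_ne_zero hc
    rw [map_one] at hc'1
    obtain ⟨z, hzi, hzn⟩ := exists_valuation_sub_one_lt_and_lt h.1 hc' hd.1
    have hz1 : v i z = 1 := by simpa using (v i).map_one_add_of_lt (hzi.trans_le hc'1)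
    have hz0 : z ≠ 0 := (v i).ne_zero_iff.1 (hz1 ▸ one_ne_zero)
    have bound : ∀ j ∈ s, ∃ b, b ≠ 0 ∧ v j b ≤ v j 1 ∧ v j b ≤ v j (d j / z) := fun j hj ↦
      exists_ne_zero_valuation_le_and_le (v j) one_ne_zero (div_ne_zero (hd.2 j hj) hz0)
    choose! b hb0 hb1 hb using bound
    obtain ⟨x, hxi, hxs⟩ := ih h.2 hc' hb0
    obtain ⟨y, hyn, hy⟩ := exists_valuation_le_one_and_forall_valuation_eq (v := v) n x
    have hyi : v i (y - 1) < v i c' := ((hy i).2 (hxi.trans_le hc'1)).trans_lt hxi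
    have hys : ∀ j ∈ s, v j y < v j (b j) := fun j hj ↦ by
      rw [(hy j).1 ((hxs j hj).trans_le ((hb1 j hj).trans_eq (map_one _)))]
      exact hxs j hj
    refine ⟨y * z, ?_, Finset.forall_mem_insert _ _ _ |>.2 ⟨?_, fun j hj ↦ ?_⟩⟩
    · rw [show y * z - 1 = (y - 1) * z + (z - 1) by ring]
      refine ((v i).map_add_lt ?_ hzi).trans_le hc'c
      rwa [map_mul, hz1, mul_one]
    · rw [map_mul]
      exact (mul_le_of_le_one_left' hyn).trans_lt hzn
    · have := (hys j hj).trans_le (hb j hj)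
      rwa [map_div₀, lt_div_iff₀ (zero_lt_iff.2 ((v j).ne_zero_iff.2 hz0)), ← map_mul] at this

end Family

end Approximation

section Algebraic

variable {K L Γ : Type*} [Field K] [Field L] [Algebra K L] [LinearOrderedCommGroupWithZero Γ]

theorem exists_ne_zero_valuation_algebraMap_le [Algebra.IsAlgebraic K L] (v : Valuation L Γ)
    {x : L} (hx : x ≠ 0) : ∃ c : K, c ≠ 0 ∧ v (algebraMap K L c) ≤ v x := by
  have hx_int : IsIntegral K x := Algebra.IsIntegral.isIntegral x
  by_contra! H
  have hx1 : v x ≤ 1 := by simpa using (H 1 one_ne_zero).le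
  set a := (minpoly K x).coeff 0
  set q := (minpoly K x).divX
  have ha : a ≠ 0 := minpoly.coeff_zero_ne_zero hx_int hx
  have hva : v (algebraMap K L a) ≠ 0 := by simpa using ha
  have term_lt (b : K) (k : ℕ) : v (b • x ^ k * x) < v (algebraMap K L a) := by
    rw [Algebra.smul_def, map_mul, map_mul, map_pow, mul_right_comm]
    refine (mul_le_of_le_one_right' (pow_le_one' hx1 k)).trans_lt ?_
    obtain rfl | hb := eq_or_ne b 0
    · simpa [zero_lt_iff] using ha
    · have := H (a / b) (div_ne_zero ha hb)
      rwa [map_div₀, map_div₀, lt_div_iff₀' (zero_lt_iff.2 (by simpa using hb))] at this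
  have eq_neg : aeval x q * x = -algebraMap K L a := by
    rw [eq_neg_iff_add_eq_zero, ← minpoly.aeval K x, ← divX_mul_X_add (minpoly K x)]
    simp only [map_add, map_mul, aeval_X, aeval_C, q, a]
  have sum_lt : v (∑ k ∈ Finset.range (q.natDegree + 1), q.coeff k • x ^ k * x) <
      v (algebraMap K L a) := v.map_sum_lt hva fun k _ ↦ term_lt (q.coeff k) k
  rw [← Finset.sum_mul, ← aeval_eq_sum_range, eq_neg, Valuation.map_neg] at sum_lt
  exact sum_lt.false

end Algebraic

section Interpolation

theorem exists_monic_natDegree_eq_splits_separable (K : Type*) [Field K] [Infinite K] (n : ℕ) :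
    ∃ h : K[X], h.Monic ∧ h.natDegree = n ∧ h.Splits ∧ h.Separable := by
  obtain ⟨s, hs⟩ := Infinite.exists_subset_card_eq K n
  refine ⟨Lagrange.nodal s id, Lagrange.nodal_monic, hs ▸ Lagrange.natDegree_nodal, ?_, ?_⟩
  · exact Splits.prod fun a _ ↦ Splits.X_sub_C a
  · exact separable_prod_X_sub_C_iff'.2 fun _ _ _ _ h ↦ h

theorem infinite_of_isNontrivial {K Γ : Type*} [Field K] [LinearOrderedCommGroupWithZero Γ]
    {v : Valuation K Γ} (h : v.IsNontrivial) : Infinite K := by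
  by_contra hK
  have : Finite K := not_infinite_iff_finite.1 hK
  obtain ⟨c, hc0, hc1⟩ := h.exists_lt_one
  exact hc1.ne (FiniteField.valuation_algebraMap_eq_one v c hc0)

section Single

variable {K L Γ : Type*} [Field K] [Field L] [Algebra K L] [Algebra.IsAlgebraic K L]
  [LinearOrderedCommGroupWithZero Γ] [Valued L Γ]

theorem exists_forall_inducedValuation_lt_imp {P : L → Prop} (hP : ∀ᶠ t in 𝓝 0, P t) :
    ∃ c : K, c ≠ 0 ∧
      ∀ y, inducedValuation K L y < inducedValuation K L c → P (algebraMap K L y) := by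
  obtain ⟨x, hx, hxP⟩ := mem_nhds_iff_exists_valuation_sub_lt.1 hP
  obtain ⟨c, hc, hcx⟩ := exists_ne_zero_valuation_algebraMap_le (K := K) Valued.v hx
  exact ⟨c, hc, fun y hy ↦ hxP (by simpa using hy.trans_le hcx)⟩

end Single

variable {K : Type*} [Field K] {ι : Type*} [Finite ι] {L Γ : ι → Type*} [∀ j, Field (L j)]
  [∀ j, Algebra K (L j)] [∀ j, LinearOrderedCommGroupWithZero (Γ j)] [∀ j, Valued (L j) (Γ j)]
  {i : ι}

theorem exists_algebraMap_sub_one_and_forall_algebraMap [∀ j, Algebra.IsAlgebraic K (L j)]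
    (h : ∀ j ≠ i, VSIndependent (inducedValuation K (L i)).valuationSubring
      (inducedValuation K (L j)).valuationSubring)
    {P : L i → Prop} (hP : ∀ᶠ t in 𝓝 0, P t) {Q : ∀ j, L j → Prop}
    (hQ : ∀ j, ∀ᶠ t in 𝓝 0, Q j t) :
    ∃ e : K, P (algebraMap K (L i) (e - 1)) ∧ ∀ j ≠ i, Q j (algebraMap K (L j) e) := by
  classical
  have := Fintype.ofFinite ι
  obtain ⟨c, hc, hcP⟩ := exists_forall_inducedValuation_lt_imp (K := K) hP
  choose d hd hdQ using fun j ↦ exists_forall_inducedValuation_lt_imp (K := K) (hQ j)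
  obtain ⟨e, hei, hej⟩ := exists_valuation_sub_one_lt_and_forall_mem_lt
    (v := fun j ↦ inducedValuation K (L j)) (Finset.univ.erase i)
    (fun j hj ↦ h j (Finset.ne_of_mem_erase hj)) hc fun j _ ↦ hd j
  exact ⟨e, hcP _ hei, fun j hj ↦ hdQ j e (hej j (by simpa using hj))⟩

theorem exists_isRoot_mem_and_forall_splits [∀ j, Algebra.IsAlgebraic K (L j)] [Infinite K]
    [∀ j, HenselianLocalRing (Valued.v : Valuation (L j) (Γ j)).valuationSubring]
    (h : ∀ j ≠ i, VSIndependent (inducedValuation K (L i)).valuationSubring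
      (inducedValuation K (L j)).valuationSubring)
    {x : L i} (hx : IsSeparable K x) {U : Set (L i)} (hU : U ∈ 𝓝 x) :
    ∃ g : K[X], g ≠ 0 ∧ (∃ b ∈ U, (g.map (algebraMap K (L i))).IsRoot b) ∧
      ∀ j ≠ i, (g.map (algebraMap K (L j))).Splits := by
  set p := minpoly K x
  have hp : p.Monic := minpoly.monic hx.isIntegral
  obtain ⟨f, hf, hf_deg, hf_splits, hf_sep⟩ :=
    exists_monic_natDegree_eq_splits_separable K p.natDegree
  have degree_eq : f.degree = p.degree := by
    rw [degree_eq_natDegree hf.ne_zero, hf_deg, degree_eq_natDegree hp.ne_zero]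
  have degree_lt : (p - f).degree < f.degree :=
    degree_sub_lt_right degree_eq.symm hf.ne_zero (hp.leadingCoeff.trans hf.leadingCoeff.symm)
  have root_near : ∀ᶠ t in 𝓝 (0 : L i), ∃ b ∈ U,
      (p.map (algebraMap K (L i)) + C t * (p - f).map (algebraMap K (L i))).IsRoot b := by
    have hroot : (p.map (algebraMap K (L i))).IsRoot x := by
      rw [IsRoot, eval_map_algebraMap, minpoly.aeval]
    refine eventually_exists_isRoot_add_C_mul hroot ?_ _ hU
    rw [derivative_map, eval_map_algebraMap]
    exact hx.aeval_derivative_ne_zero (minpoly.aeval K x)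
  have splits_near (j : ι) : ∀ᶠ t in 𝓝 (0 : L j),
      (f.map (algebraMap K (L j)) + C t * (p - f).map (algebraMap K (L j))).Splits :=
    eventually_splits_add_C_mul (hf_splits.map _) hf_sep.map (by simpa only [degree_map])
  obtain ⟨e, root_e, splits_e⟩ :=
    exists_algebraMap_sub_one_and_forall_algebraMap h root_near splits_near
  have interpolate : p + C (e - 1) * (p - f) = f + C e * (p - f) := by rw [C_sub, C_1]; ring
  have degree_g : (f + C e * (p - f)).degree = f.degree :=
    degree_add_eq_left_of_degree_lt ((smul_eq_C_mul e ▸ degree_smul_le e _).trans_lt degree_lt)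
  refine ⟨f + C e * (p - f), fun h0 ↦ ?_, ?_, fun j hj ↦ ?_⟩
  · rw [h0, degree_zero, eq_comm, degree_eq_bot] at degree_g
    exact hf.ne_zero degree_g
  · simpa only [← interpolate, Polynomial.map_add, Polynomial.map_mul, map_C] using root_e
  · simpa only [Polynomial.map_add, Polynomial.map_mul, map_C] using splits_e j hj

end Interpolation

section Intersection

variable {K : Type*} [Field K] {ι : Type*} {L : ι → Type*} [∀ j, Field (L j)]
  [∀ j, Algebra K (L j)] {Ω : Type*} [Field Ω] [Algebra K Ω] [∀ j, Algebra (L j) Ω]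
  [∀ j, IsScalarTower K (L j) Ω] {i : ι}

theorem mem_range_algebraMap_of_isRoot_of_forall_splits
    (hK : ⨅ j, (algebraMap (L j) Ω).fieldRange ≤ (algebraMap K Ω).fieldRange) {g : K[X]}
    (hg : g ≠ 0) {b : L i} (hb : (g.map (algebraMap K (L i))).IsRoot b)
    (hsplits : ∀ j ≠ i, (g.map (algebraMap K (L j))).Splits) :
    b ∈ Set.range (algebraMap K (L i)) := by
  have root_Ω : (g.map (algebraMap K Ω)).IsRoot (algebraMap (L i) Ω b) := by
    rw [IsScalarTower.algebraMap_eq K (L i) Ω, ← Polynomial.map_map]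
    exact hb.map
  have mem (j : ι) : algebraMap (L i) Ω b ∈ (algebraMap (L j) Ω).fieldRange := by
    obtain rfl | hj := eq_or_ne j i
    · exact ⟨b, rfl⟩
    · refine (hsplits j hj).mem_range_of_isRoot (map_ne_zero hg) ?_
      rwa [Polynomial.map_map, ← IsScalarTower.algebraMap_eq]
  obtain ⟨y, hy⟩ := hK ((Subfield.mem_iInf).2 mem)
  refine ⟨y, (algebraMap (L i) Ω).injective ?_⟩
  rw [← IsScalarTower.algebraMap_apply, hy]

theorem denseRange_algebraMap_of_vsIndependent [Finite ι] {Γ : ι → Type*}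
    [∀ j, LinearOrderedCommGroupWithZero (Γ j)] [∀ j, Valued (L j) (Γ j)]
    [∀ j, Algebra.IsAlgebraic K (L j)] [Algebra.IsSeparable K (L i)]
    [∀ j, HenselianLocalRing (Valued.v : Valuation (L j) (Γ j)).valuationSubring]
    (hK : ⨅ j, (algebraMap (L j) Ω).fieldRange ≤ (algebraMap K Ω).fieldRange)
    (h : ∀ j ≠ i, VSIndependent (inducedValuation K (L i)).valuationSubring
      (inducedValuation K (L j)).valuationSubring) :
    DenseRange (algebraMap K (L i)) := by
  intro x
  have hx : IsSeparable K x := Algebra.IsSeparable.isSeparable K x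
  by_cases hi : ∃ j, j ≠ i
  · obtain ⟨j, hj⟩ := hi
    have := infinite_of_isNontrivial (isNontrivial_of_vsIndependent (h j hj)).1
    refine mem_closure_iff_nhds.2 fun U hU ↦ ?_
    obtain ⟨g, hg, ⟨b, hbU, hb⟩, hsplits⟩ := exists_isRoot_mem_and_forall_splits h hx hU
    exact ⟨b, hbU, mem_range_algebraMap_of_isRoot_of_forall_splits hK hg hb hsplits⟩
  · have hroot : ((minpoly K x).map (algebraMap K (L i))).IsRoot x := by
      rw [IsRoot, eval_map_algebraMap, minpoly.aeval]
    exact subset_closure <| mem_range_algebraMap_of_isRoot_of_forall_splits hK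
      (minpoly.ne_zero hx.isIntegral) hroot fun j hj ↦ (hi ⟨j, hj⟩).elim

end Intersection

section Henselisation

variable {K L Γ : Type*} [Field K] [Field L] [LinearOrderedCommGroupWithZero Γ]

theorem isHenselisation_of_denseRange [Algebra K L] [Algebra.IsSeparable K L] [Valued L Γ]
    [HenselianLocalRing (Valued.v : Valuation L Γ).valuationSubring]
    (hK : DenseRange (algebraMap K L)) :
    IsHenselisation (algebraMap K L) (Valued.v : Valuation L Γ).valuationSubring := by
  refine ⟨fun x ↦ ?_, ‹_›, fun E hE hO ↦ ?_⟩
  · have hx : IsSeparable K x := Algebra.IsSeparable.isSeparable K x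
    exact ⟨minpoly K x, hx.ne_zero, hx, minpoly.aeval K x⟩
  let _ : Algebra K E := ((algebraMap K L).codRestrict E fun y ↦ hE ⟨y, rfl⟩).toAlgebra
  have : IsScalarTower K E L := .of_algebraMap_eq fun _ ↦ rfl
  have : Algebra.IsSeparable E L := Algebra.isSeparable_tower_top_of_isSeparable K E L
  have : HenselianLocalRing (inducedValuation E L).valuationSubring := hO
  have dense : DenseRange (algebraMap E L) :=
    Dense.mono (Set.range_subset_iff.2 fun y ↦ ⟨algebraMap K E y, rfl⟩) hK
  refine eq_top_iff.2 fun x _ ↦ ?_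
  obtain ⟨y, rfl⟩ := surjective_of_denseRange dense x
  exact y.2

end Henselisation

theorem stmt7_general {Ω ι : Type*} [Field Ω] [Finite ι] (Fs : ι → Subfield Ω) (F : Subfield Ω)
    (hF : F = ⨅ j, Fs j) (hle : ∀ j, F ≤ Fs j) (halg : ∀ j, ∀ x ∈ Fs j, IsAlgebraic F x)
    (Os : ∀ j, ValuationSubring (Fs j)) (hhens : ∀ j, HenselianLocalRing (Os j)) (i : ι)
    (hsep : ∀ x ∈ Fs i, IsSeparable F x)
    (hindep : ∀ j ≠ i, VSIndependent ((Os i).comap (Subfield.inclusion (hle i)))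
      ((Os j).comap (Subfield.inclusion (hle j)))) :
    IsHenselisation (Subfield.inclusion (hle i)) (Os i) := by
  let _ (j : ι) : Algebra F (Fs j) := (Subfield.inclusion (hle j)).toAlgebra
  let _ (j : ι) := Valued.mk' (Os j).valuation
  have (j : ι) : IsScalarTower F (Fs j) Ω := .of_algebraMap_eq fun _ ↦ rfl
  have (j : ι) : Algebra.IsAlgebraic F (Fs j) :=
    ⟨fun x ↦ (isAlgebraic_algebraMap_iff (algebraMap (Fs j) Ω).injective).1 (halg j x x.2)⟩
  have : Algebra.IsSeparable F (Fs i) :=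
    ⟨fun x ↦ IsSeparable.tower_bot (hsep x x.2)⟩
  have hv (j : ι) : (Valued.v : Valuation (Fs j) _).valuationSubring = Os j :=
    (Os j).valuationSubring_valuation
  have (j : ι) : HenselianLocalRing (Valued.v : Valuation (Fs j) _).valuationSubring :=
    (hv j).symm ▸ hhens j
  have hK : ⨅ j, (algebraMap (Fs j) Ω).fieldRange ≤ (algebraMap F Ω).fieldRange := fun x hx ↦ by
    refine ⟨⟨x, hF ▸ Subfield.mem_iInf.2 fun j ↦ ?_⟩, rfl⟩
    obtain ⟨y, rfl⟩ := Subfield.mem_iInf.1 hx j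
    exact y.2
  have induced (j : ι) : (inducedValuation F (Fs j)).valuationSubring =
      (Os j).comap (Subfield.inclusion (hle j)) :=
    congrArg (ValuationSubring.comap · _) (hv j)
  have dense : DenseRange (algebraMap F (Fs i)) :=
    denseRange_algebraMap_of_vsIndependent (L := fun j ↦ Fs j) hK fun j hj ↦
      induced i ▸ induced j ▸ hindep j hj
  exact hv i ▸ isHenselisation_of_denseRange dense

set_option maxHeartbeats 1000000 in
theorem stmt7 {Ω : Type*} [Field Ω] {n : ℕ} (Fs : Fin n → Subfield Ω)
    (F : Subfield Ω) (hF : F = ⨅ i, Fs i)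
    -- each `Fs i` is a separably algebraic extension of `F` (all inside a fixed
    -- separable closure):
    (halg : ∀ x : Ω, ∃ p : Polynomial ↥F, p ≠ 0 ∧ p.Separable ∧
      Polynomial.eval₂ F.subtype x p = 0)
    (hle : ∀ i, F ≤ Fs i)
    -- valuations: each `Fs i` carries a valuation subring `Os i` and is henselian:
    (Os : ∀ i, ValuationSubring ↥(Fs i))
    (hhens : ∀ i, HenselianLocalRing ↥(Os i))
    -- the induced valuations on `F` are pairwise independent:
    (hindep : ∀ i j, i ≠ j →
      @VSIndependent ↥F _ ((Os i).comap (Subfield.inclusion (hle i)))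
        ((Os j).comap (Subfield.inclusion (hle j)))) :
    ∀ i, IsHenselisation (Subfield.inclusion (hle i)) (Os i) := by
  have hsep (x : Ω) : IsSeparable F x :=
    let ⟨_, _, hp, hx⟩ := halg x; hp.of_dvd (minpoly.dvd F x hx)
  exact fun i ↦ stmt7_general Fs F hF hle (fun _ x _ ↦ (hsep x).isIntegral.isAlgebraic) Os hhens i
    (fun x _ ↦ hsep x) fun j hj ↦ hindep i j hj.symm
end

section
/- Let (F', v') / (F, v) be an immediate extension of valued fields, with (F', v') henselian and absolutely defectless, and with F relatively algebraically closed in F'. Then (F, v) is henselian and absolutely defectless, and the restriction map res : G_{F'} → G_F between absolute Galois groups is an isomorphism. -/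
/-!
Since `F'` is henselian, its valuation ring has a unique prolongation to `Ω'`, namely its integral
closure, so every element of `G_{F'}` preserves `W`. Let `M` be the separable closure of `F` in
`Ω'`. Because `F' / F` is immediate, the value group of `W` is torsion, and its residue field
algebraic, over those of `M`; as `M` is separably closed, for every `x ≠ 0` some `x ^ q ^ e` agrees
with an element of `M` up to a `1`-unit, where `q` is the residue characteristic exponent. An
automorphism that acts on `M` by `1`-units therefore does so on `Ω'`, since a `q`-power root of a
`1`-unit is a `1`-unit, and is trivial as `F'` is defectless. This makes `G_{F'} → G_F` injective,
and transports defectlessness to `F`. The map is surjective because its image is compact with fixed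
field `F`, and Hensel's lemma descends because the lifted roots are algebraic over `F`.
-/

open Polynomial Pointwise

/-! ### Maximal ideals over henselian local rings -/

section

variable {B G : Type*} [CommRing B] [Group G] [MulSemiringAction G B]

theorem exists_sub_one_mem_and_forall_mem_smul [Finite G] (P : Ideal B) [hP : P.IsMaximal] :
    ∃ b : B, b - 1 ∈ P ∧ ∀ g : G, g • P ≠ P → b ∈ g • P := by
  classical
  have : Fintype G := Fintype.ofFinite G
  have hmax (g : G) : (g • P).IsMaximal := by
    rw [Ideal.pointwise_smul_eq_comap]
    exact Ideal.comap_isMaximal_of_equiv (MulSemiringAction.toRingEquiv G B g).symm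
  have hcop : P ⊔ ⨅ g ∈ ({g | g • P ≠ P} : Finset G), g • P = ⊤ :=
    Ideal.sup_iInf_eq_top fun g hg => hP.coprime_of_ne (hmax g) (Finset.mem_filter.1 hg).2.symm
  obtain ⟨p, hp, b, hb, hpb⟩ := Submodule.mem_sup.1 (hcop ▸ Submodule.mem_top (x := (1 : B)))
  refine ⟨b, by simpa [← hpb] using hp, fun g hg => ?_⟩
  simp only [Ideal.mem_iInf] at hb
  exact hb g (by simpa using hg)

theorem exists_stabilizer_le_and_sub_one_mem_and_forall_mem_smul [Finite G] (P : Ideal B)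
    [P.IsMaximal] :
    ∃ c : B, MulAction.stabilizer G P ≤ MulAction.stabilizer G c ∧ c - 1 ∈ P ∧
      ∀ g : G, g • P ≠ P → c ∈ g • P := by
  have : Fintype (MulAction.stabilizer G P) := Fintype.ofFinite _
  obtain ⟨b, hb1, hb⟩ := exists_sub_one_mem_and_forall_mem_smul (G := G) P
  refine ⟨∏ d : MulAction.stabilizer G P, d • b, fun d hd => ?_, ?_, fun g hg => ?_⟩
  · exact Finset.smul_prod_perm b (⟨d, hd⟩ : MulAction.stabilizer G P)
  · rw [← Ideal.Quotient.mk_eq_mk_iff_sub_mem, map_prod, map_one]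
    refine Finset.prod_eq_one fun d _ => ?_
    rw [← map_one (Ideal.Quotient.mk P), Ideal.Quotient.mk_eq_mk_iff_sub_mem]
    have h := Ideal.smul_mem_pointwise_smul (d : G) _ _ hb1
    rwa [smul_sub, smul_one, d.2] at h
  · refine Ideal.prod_mem _ (Finset.mem_univ 1) ?_
    simpa using hb g hg

theorem exists_map_prodXSubSMul_eq [Fintype G] {P : Ideal B} {c : B}
    (hstab : MulAction.stabilizer G P ≤ MulAction.stabilizer G c) (hc : c - 1 ∈ P)
    (hmem : ∀ g : G, g • P ≠ P → c ∈ g • P) :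
    ∃ n, (prodXSubSMul G B c).map (Ideal.Quotient.mk P) = (X - 1) * X ^ n := by
  classical
  have hother (g : G) (hg : g • c ≠ c) : Ideal.Quotient.mk P (g • c) = 0 := by
    rw [Ideal.Quotient.eq_zero_iff_mem, ← Ideal.mem_inv_pointwise_smul_iff]
    exact hmem _ fun h => hg (by simpa using inv_mem (hstab h))
  have hfac (q : G ⧸ MulAction.stabilizer G c) (hq : q ≠ (1 : G)) :
      (X - C (MulAction.ofQuotientStabilizer G c q)).map (Ideal.Quotient.mk P) = X := by
    induction q using Quotient.inductionOn' with | h g => ?_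
    have hg : g • c ≠ c := fun h => hq (QuotientGroup.eq.2 (by simpa using h))
    simpa using hother g hg
  refine ⟨(Finset.univ.erase ((1 : G) : G ⧸ MulAction.stabilizer G c)).card, ?_⟩
  rw [prodXSubSMul, Polynomial.map_prod,
    ← Finset.mul_prod_erase _ _ (Finset.mem_univ ((1 : G) : G ⧸ MulAction.stabilizer G c)),
    Finset.prod_congr rfl fun q hq => hfac q (Finset.ne_of_mem_erase hq), Finset.prod_const]
  congr 1
  simpa [sub_eq_zero] using congrArg C (Ideal.Quotient.mk_eq_mk_iff_sub_mem _ _ |>.2 hc)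

variable {R : Type*} [CommRing R] [Algebra R B] [Algebra.IsInvariant R B G]

theorem exists_monic_map_eq_prodXSubSMul [Fintype G] (c : B) :
    ∃ f : R[X], f.Monic ∧ f.map (algebraMap R B) = prodXSubSMul G B c := by
  have hlift : prodXSubSMul G B c ∈ lifts (algebraMap R B) :=
    (lifts_iff_coeff_lifts _).2 fun n =>
      Algebra.IsInvariant.isInvariant (G := G) _ fun g => prodXSubSMul.coeff G B c g n
  obtain ⟨f, hf, -, hfm⟩ := lifts_and_natDegree_eq_and_monic hlift (prodXSubSMul.monic G B c)
  exact ⟨f, hfm, hf⟩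

theorem exists_algebraMap_eq_of_map_prodXSubSMul_eq [Fintype G] [HenselianLocalRing R] [IsDomain B]
    [SMulCommClass G R B] {P : Ideal B} [P.IsMaximal] {c : B} {n : ℕ}
    (hn : (prodXSubSMul G B c).map (Ideal.Quotient.mk P) = (X - 1) * X ^ n) :
    ∃ a : R, algebraMap R B a = c := by
  have : Algebra.IsIntegral R B := Algebra.IsInvariant.isIntegral R B G
  obtain ⟨f, hfm, hf⟩ := exists_monic_map_eq_prodXSubSMul (R := R) (G := G) c
  have hfP : f.map (algebraMap R (B ⧸ P)) = (X - 1) * X ^ n := by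
    rw [← hn, ← hf, Polynomial.map_map]; rfl
  have hmk (r : R) : algebraMap R (B ⧸ P) r = 0 ↔ r ∈ IsLocalRing.maximalIdeal R := by
    rw [← IsLocalRing.eq_maximalIdeal (Ideal.IsMaximal.under R P), Ideal.under_def,
      Ideal.mem_comap, ← Ideal.Quotient.eq_zero_iff_mem]
    rfl
  have hroot_mod : f.eval 1 ∈ IsLocalRing.maximalIdeal R :=
    (hmk _).1 (by rw [← eval_one_map, hfP]; simp)
  have hsimple : IsUnit (f.derivative.eval 1) := by
    by_contra h
    have hzero := (hmk _).2 h
    rw [← eval_one_map, ← derivative_map, hfP] at hzero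
    simp at hzero
  obtain ⟨a, ha, -⟩ := HenselianLocalRing.is_henselian f hfm 1 hroot_mod hsimple
  have hroot : (prodXSubSMul G B c).eval (algebraMap R B a) = 0 := by
    rw [← hf, eval_map_algebraMap, aeval_algebraMap_apply, coe_aeval_eq_eval, ha.eq_zero, map_zero]
  rw [prodXSubSMul, eval_prod, Finset.prod_eq_zero_iff] at hroot
  obtain ⟨q, -, hq⟩ := hroot
  induction q using Quotient.inductionOn' with | h d => ?_
  have hd : algebraMap R B a = d • c := by simpa [sub_eq_zero] using hq
  exact ⟨a, by rw [← smul_left_cancel_iff d, ← hd, smul_algebraMap]⟩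

end

-- Choose `c` that is `1` modulo `P` and `0` modulo the other conjugates of `P`: the polynomial of
-- its conjugates is `(X - 1) X ^ n` modulo `P`. Hensel's lemma lifts the simple root `1` and puts
-- `c` in `R`, where it cannot distinguish `P` from its conjugates.
theorem smul_eq_self_of_henselianLocalRing (R : Type*) {B G : Type*} [CommRing R]
    [HenselianLocalRing R] [CommRing B] [IsDomain B] [Algebra R B] [Group G] [Finite G]
    [MulSemiringAction G B] [SMulCommClass G R B] [Algebra.IsInvariant R B G]
    (P : Ideal B) [hP : P.IsMaximal] (g : G) : g • P = P := by
  have : Fintype G := Fintype.ofFinite G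
  obtain ⟨c, hstab, hc, hmem⟩ :=
    exists_stabilizer_le_and_sub_one_mem_and_forall_mem_smul (G := G) P
  obtain ⟨n, hn⟩ := exists_map_prodXSubSMul_eq hstab hc hmem
  obtain ⟨a, rfl⟩ := exists_algebraMap_eq_of_map_prodXSubSMul_eq (R := R) hn
  by_contra hg
  have haP : algebraMap R B a ∈ P := by
    have := hmem g hg
    rwa [← smul_algebraMap g, Ideal.smul_mem_pointwise_smul_iff] at this
  exact hP.ne_top ((Ideal.eq_top_iff_one P).2 (by simpa using sub_mem haP hc))

theorem isLocalRing_of_isInvariant (R B G : Type*) [CommRing R]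
    [HenselianLocalRing R] [CommRing B] [IsDomain B] [Algebra R B] [Group G] [Finite G]
    [MulSemiringAction G B] [SMulCommClass G R B] [Algebra.IsInvariant R B G] :
    IsLocalRing B := by
  have : Algebra.IsIntegral R B := Algebra.IsInvariant.isIntegral R B G
  obtain ⟨P, hP⟩ := Ideal.exists_maximal B
  refine .of_unique_max_ideal ⟨P, hP, fun Q hQ => ?_⟩
  have hunder : P.under R = Q.under R :=
    (IsLocalRing.eq_maximalIdeal (Ideal.IsMaximal.under R P)).trans
      (IsLocalRing.eq_maximalIdeal (Ideal.IsMaximal.under R Q)).symm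
  obtain ⟨g, rfl⟩ := Algebra.IsInvariant.exists_smul_of_under_eq R B G P Q hunder
  exact smul_eq_self_of_henselianLocalRing R P g

/-! ### Prolongations of henselian valuation rings -/

theorem exists_aeval_eq_zero_and_isUnit_coeff {R S : Type*} [CommRing R] [IsDomain R]
    [ValuationRing R] [CommRing S] [IsDomain S] [Algebra R S] [FaithfulSMul R S] {x : S}
    (hx : IsAlgebraic R x) : ∃ f : R[X], aeval x f = 0 ∧ ∃ n, IsUnit (f.coeff n) := by
  classical
  have : GCDMonoid R := IsBezout.toGCDDomain R
  have : NormalizedGCDMonoid R := Classical.choice inferInstance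
  obtain ⟨p, hp, hpx⟩ := hx
  refine ⟨p.primPart, ?_, ?_⟩
  · rw [p.eq_C_content_mul_primPart, map_mul, aeval_C] at hpx
    exact (mul_eq_zero.1 hpx).resolve_left (by simpa [content_eq_zero_iff] using hp)
  · by_contra! h
    have hle : p.primPart.contentIdeal ≤ IsLocalRing.maximalIdeal R := by
      rw [contentIdeal_def, Ideal.span_le]
      intro c hc
      obtain ⟨n, -, rfl⟩ := mem_coeffs_iff.1 hc
      exact h n
    rw [(isPrimitive_iff_contentIdeal_eq_top _).1 p.isPrimitive_primPart] at hle
    exact (IsLocalRing.maximalIdeal.isMaximal R).ne_top (top_le_iff.1 hle)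

-- A non-unit leading coefficient times `x` is a non-unit of `B`, so it can be absorbed into the
-- next coefficient without changing which coefficients are units, and the degree drops.
theorem mem_range_algebraMap_of_aeval_eq_zero {B A : Type*} [CommRing B] [IsLocalRing B]
    [CommRing A] [Algebra B A] [IsLocalHom (algebraMap B A)] [IsIntegrallyClosedIn B A]
    {f : B[X]} {x : A} (hfx : aeval x f = 0) {n : ℕ} (hn : IsUnit (f.coeff n)) :
    x ∈ (algebraMap B A).range := by
  induction hm : f.natDegree using Nat.strong_induction_on generalizing f with | h m ih => ?_
  by_cases hlead : IsUnit f.leadingCoeff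
  · rw [RingHom.mem_range, ← IsIntegrallyClosedIn.isIntegral_iff (R := B)]
    have := (isIntegral_leadingCoeff_smul f x hfx).smul (↑hlead.unit⁻¹ : B)
    simpa [smul_smul] using this
  obtain ⟨a, ha⟩ := IsIntegrallyClosedIn.isIntegral_iff.1 (isIntegral_leadingCoeff_smul f x hfx)
  have ha_nonunit : ¬ IsUnit a := fun h => by
    have h := h.map (algebraMap B A)
    rw [ha, Algebra.smul_def] at h
    exact hlead ((isUnit_of_mul_isUnit_left h).of_map)
  obtain _ | m := m
  · obtain ⟨r, rfl⟩ := natDegree_eq_zero.1 hm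
    cases n <;> simp_all
  · refine ih (f.eraseLead + C a * X ^ m).natDegree ?_ (f := f.eraseLead + C a * X ^ m) ?_ ?_ rfl
    · have : f.eraseLead.natDegree ≤ m := (eraseLead_natDegree_le f).trans (by lia)
      exact Nat.lt_succ_of_le (by compute_degree!)
    · simp [← self_sub_monomial_natDegree_leadingCoeff, hfx, hm, pow_succ', ← Algebra.smul_def,
        ← Algebra.smul_mul_assoc, ← ha]
    · have hnm : n ≠ m + 1 := by rintro rfl; exact hlead (by rwa [leadingCoeff, hm])
      rw [coeff_add, eraseLead_coeff_of_ne _ (hm ▸ hnm), coeff_C_mul_X_pow]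
      split_ifs
      · exact (IsLocalRing.isUnit_or_isUnit_of_isUnit_add (b := -a) (by simpa)).resolve_right
          (by simpa)
      · simpa

theorem isLocalHom_algebraMap_of_isIntegral (R B A : Type*) [CommRing R] [IsLocalRing R]
    [CommRing B] [IsLocalRing B] [CommRing A] [IsLocalRing A] [Algebra R B] [Algebra R A]
    [Algebra B A] [IsScalarTower R B A] [Algebra.IsIntegral R B] [IsLocalHom (algebraMap R A)] :
    IsLocalHom (algebraMap B A) := by
  refine ((IsLocalRing.local_hom_TFAE (algebraMap B A)).out 0 4).2 ?_
  have : ((IsLocalRing.maximalIdeal A).under B).IsMaximal := by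
    refine Ideal.isMaximal_of_isIntegral_of_isMaximal_comap (R := R) _ ?_
    rw [← Ideal.under_def, Ideal.under_under, Ideal.under_def, IsLocalRing.maximalIdeal_comap]
    infer_instance
  exact IsLocalRing.eq_maximalIdeal this

section

variable {K N : Type*} [Field K] [Field N] [Algebra K N]

/-- The inclusion of the valuation ring that a valuation ring `V` of `N` induces on a subfield. -/
instance comapAlgebra (V : ValuationSubring N) : Algebra (V.comap (algebraMap K N)) V :=
  (((algebraMap K N).comp (V.comap (algebraMap K N)).subtype).codRestrict V
    fun a => a.2).toAlgebra

instance (V : ValuationSubring N) : IsScalarTower (V.comap (algebraMap K N)) V N :=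
  .of_algebraMap_eq fun _ => rfl

instance (V : ValuationSubring N) :
    IsLocalHom (algebraMap (V.comap (algebraMap K N)) V) where
  map_nonunit a ha := by
    obtain ⟨u, hu⟩ := ha
    have hval : algebraMap K N a * (↑u⁻¹ : V) = 1 := by
      have := congrArg V.subtype u.mul_inv
      rwa [hu] at this
    have hinv : algebraMap K N (a : K)⁻¹ ∈ V := by
      rw [map_inv₀, inv_eq_of_mul_eq_one_right hval]
      exact (↑u⁻¹ : V).2
    have ha0 : (a : K) ≠ 0 := fun h => by simp [h] at hval
    exact IsUnit.of_mul_eq_one ⟨(a : K)⁻¹, hinv⟩ (Subtype.ext (mul_inv_cancel₀ ha0))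

theorem isLocalRing_integralClosure_of_finiteDimensional (R K N : Type*) [CommRing R]
    [IsDomain R] [IsIntegrallyClosed R] [HenselianLocalRing R] [Field K] [Field N] [Algebra R K]
    [IsFractionRing R K] [Algebra K N] [Algebra R N] [IsScalarTower R K N]
    [FiniteDimensional K N] [IsGalois K N] : IsLocalRing (integralClosure R N) := by
  have : IsFractionRing (integralClosure R N) N :=
    integralClosure.isFractionRing_of_finite_extension K N
  let := IsIntegralClosure.MulSemiringAction R K N (integralClosure R N)
  have := Algebra.isInvariant_of_isGalois R K N (integralClosure R N)
  have : SMulCommClass Gal(N/K) R (integralClosure R N) :=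
    ⟨fun σ r b => map_smul (galRestrict R K N (integralClosure R N) σ) r b⟩
  exact isLocalRing_of_isInvariant R (integralClosure R N) Gal(N/K)

theorem isLocalRing_integralClosure (R K N : Type*) [CommRing R]
    [IsDomain R] [IsIntegrallyClosed R] [HenselianLocalRing R] [Field K] [Field N] [Algebra R K]
    [IsFractionRing R K] [Algebra K N] [Algebra R N] [IsScalarTower R K N] [IsGalois K N] :
    IsLocalRing (integralClosure R N) := by
  refine .of_isUnit_or_isUnit_one_sub_self fun b => ?_
  let E' := FiniteGaloisIntermediateField.adjoin K {(b : N)}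
  let E := E'.toIntermediateField
  have : FiniteDimensional K E := E'.finiteDimensional
  have : IsGalois K E := E'.isGalois
  let ι : integralClosure R E →ₐ[R] integralClosure R N :=
    (E.val.restrictScalars R).mapIntegralClosure
  have : IsLocalRing (integralClosure R E) :=
    isLocalRing_integralClosure_of_finiteDimensional R K E
  have hbE : (b : N) ∈ E := FiniteGaloisIntermediateField.subset_adjoin K {(b : N)} rfl
  obtain ⟨b', hb'⟩ : ∃ b', ι b' = b :=
    ⟨⟨⟨b, hbE⟩, (isIntegral_algHom_iff (E.val.restrictScalars R) E.val.injective).1 b.2⟩, rfl⟩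
  rw [← hb', ← map_one ι, ← map_sub]
  exact (IsLocalRing.isUnit_or_isUnit_one_sub_self b').imp (·.map ι) (·.map ι)

theorem mem_valuationSubring_of_isIntegral (V : ValuationSubring N) {x : N}
    (hx : IsIntegral (V.comap (algebraMap K N)) x) : x ∈ V := by
  obtain ⟨y, rfl⟩ := IsIntegrallyClosed.isIntegral_iff.1 (hx.tower_top (A := V))
  exact y.2

theorem mem_valuationSubring_iff_isIntegral (V : ValuationSubring N)
    [HenselianLocalRing (V.comap (algebraMap K N))] [IsGalois K N] {x : N} :
    x ∈ V ↔ IsIntegral (V.comap (algebraMap K N)) x := by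
  set O := V.comap (algebraMap K N)
  let B := integralClosure O N
  refine ⟨fun hx => ?_, mem_valuationSubring_of_isIntegral V⟩
  have : IsLocalRing B := isLocalRing_integralClosure O K N
  let : Algebra B V :=
    (B.val.toRingHom.codRestrict V fun b => mem_valuationSubring_of_isIntegral V b.2).toAlgebra
  have : IsScalarTower O B V := .of_algebraMap_eq fun _ => rfl
  have : IsScalarTower B V N := .of_algebraMap_eq fun _ => rfl
  have : IsLocalHom (algebraMap B V) := isLocalHom_algebraMap_of_isIntegral O B V
  have : IsIntegrallyClosedIn B V := isIntegrallyClosedIn_iff.2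
    ⟨fun a b h => Subtype.ext (congrArg V.subtype h), fun {y} hy =>
      ⟨⟨y, isIntegral_trans y.1 (hy.map (IsScalarTower.toAlgHom B V N))⟩, rfl⟩⟩
  obtain ⟨f, hf, n, hn⟩ := exists_aeval_eq_zero_and_isUnit_coeff
    ((IsFractionRing.isAlgebraic_iff O K N).2 (Algebra.IsAlgebraic.isAlgebraic x))
  have hfB : aeval (⟨x, hx⟩ : V) (f.map (algebraMap O B)) = 0 := by
    rw [aeval_map_algebraMap]
    exact Subtype.ext (by simpa using (aeval_algebraMap_apply N (⟨x, hx⟩ : V) f).symm.trans hf)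
  obtain ⟨b, hb⟩ := mem_range_algebraMap_of_aeval_eq_zero hfB (n := n)
    (by rw [coeff_map]; exact hn.map _)
  obtain rfl : (b : N) = x := congrArg V.subtype hb
  exact b.2

theorem algEquiv_apply_mem_iff (V : ValuationSubring N)
    [HenselianLocalRing (V.comap (algebraMap K N))] [IsGalois K N] (σ : Gal(N/K))
    {x : N} : σ x ∈ V ↔ x ∈ V := by
  simp only [mem_valuationSubring_iff_isIntegral (K := K) V]
  exact isIntegral_algEquiv (σ.restrictScalars (V.comap (algebraMap K N)))

end

/-! ### Principal units over a separably closed field -/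

theorem exists_ne_map_eq_map_of_sum_eq_zero {R Γ ι : Type*} [Ring R]
    [LinearOrderedCommMonoidWithZero Γ] (v : Valuation R Γ) {s : Finset ι} {f : ι → R}
    (hs : s.Nonempty) (hsum : ∑ i ∈ s, f i = 0) (hf : ∀ i ∈ s, v (f i) ≠ 0) :
    ∃ i ∈ s, ∃ j ∈ s, i ≠ j ∧ v (f i) = v (f j) := by
  classical
  obtain ⟨j, hj, hmax⟩ := s.exists_max_image (fun i => v (f i)) hs
  by_contra! h
  have hlt : ∀ i ∈ s \ {j}, v (f i) < v (f j) := fun i hi => by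
    rw [Finset.mem_sdiff, Finset.mem_singleton] at hi
    exact (hmax i hi.1).lt_of_ne (h i hi.1 j hj hi.2)
  have := v.map_sum_eq_of_lt hj hlt
  rw [hsum, map_zero] at this
  exact hf j hj this.symm

theorem exists_valuation_pow_eq_of_isAlgebraic {K L Γ : Type*} [Field K] [Field L] [Algebra K L]
    [LinearOrderedCommGroupWithZero Γ] (v : Valuation L Γ) {x : L} (hx : IsAlgebraic K x) :
    ∃ n ≠ 0, ∃ a : K, v x ^ n = v (algebraMap K L a) := by
  obtain rfl | hx0 := eq_or_ne x 0
  · exact ⟨1, one_ne_zero, 0, by simp⟩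
  obtain ⟨p, hp, hpx⟩ := hx
  rw [aeval_def, eval₂_eq_sum, Polynomial.sum] at hpx
  obtain ⟨i, hi, j, hj, hij, hv⟩ := exists_ne_map_eq_map_of_sum_eq_zero v
    (support_nonempty.2 hp) hpx (by simp +contextual [hx0])
  wlog hlt : j < i generalizing i j
  · exact this j hj i hi hij.symm hv.symm (hij.lt_of_le (not_lt.1 hlt))
  refine ⟨i - j, Nat.sub_ne_zero_of_lt hlt, p.coeff j / p.coeff i, ?_⟩
  rw [mem_support_iff] at hi
  simp only [map_mul, map_pow] at hv
  rw [map_div₀, map_div₀, eq_div_iff (by simpa using hi), ← mul_left_inj' (pow_ne_zero j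
    (v.ne_zero_iff.2 hx0)), ← hv, mul_right_comm, ← pow_add, Nat.sub_add_cancel hlt.le, mul_comm]

theorem isSepClosed_residueField (R K : Type*) [CommRing R] [IsDomain R] [IsLocalRing R]
    [IsIntegrallyClosed R] [Field K] [Algebra R K] [IsFractionRing R K] [IsSepClosed K] :
    IsSepClosed (IsLocalRing.ResidueField R) := by
  refine .of_exists_root _ fun p hp hirr hsep => ?_
  obtain ⟨f, rfl, -, hf⟩ := lifts_and_natDegree_eq_and_monic
    ((mem_lifts p).2 (map_surjective _ IsLocalRing.residue_surjective p)) hp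
  have hfirr : Irreducible (f.map (algebraMap R K)) :=
    hf.irreducible_iff_irreducible_map_fraction_map.1
      (hf.irreducible_of_irreducible_map (IsLocalRing.residue R) f hirr)
  have hfsep : (f.map (algebraMap R K)).Separable := by
    rw [separable_iff_derivative_ne_zero hfirr, derivative_map,
      Polynomial.map_ne_zero_iff (IsFractionRing.injective R K)]
    intro hf'
    exact (separable_iff_derivative_ne_zero hirr).1 hsep (by simp [derivative_map, hf'])
  obtain ⟨x, hx⟩ := IsSepClosed.exists_root _ (degree_pos_of_irreducible hfirr).ne' hfsep
  obtain ⟨r, rfl⟩ := IsIntegrallyClosed.isIntegral_iff.1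
    (⟨f, hf, by rwa [IsRoot, eval_map] at hx⟩ : IsIntegral R x)
  refine ⟨IsLocalRing.residue R r, ?_⟩
  rw [IsRoot, eval_map_algebraMap, aeval_algebraMap_apply, coe_aeval_eq_eval,
    FaithfulSMul.algebraMap_eq_zero_iff] at hx
  rw [eval_map_apply, hx, map_zero]

theorem isIntegral_of_range_algebraMap_le {R k A : Type*} [CommRing R] [CommRing k] [CommRing A]
    [Algebra R A] [Algebra k A] (h : (algebraMap R A).range ≤ (algebraMap k A).range) {x : A}
    (hx : IsIntegral R x) : IsIntegral k x := by
  obtain ⟨f, hf, hfx⟩ := hx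
  obtain ⟨g, hg, -, hgm⟩ := lifts_and_natDegree_eq_and_monic
    ((lifts_iff_coeff_lifts _).2 fun n => h ⟨f.coeff n, (coeff_map (algebraMap R A) n).symm⟩)
    (hf.map (algebraMap R A))
  exact ⟨g, hgm, by rwa [← eval_map, hg, eval_map]⟩

section

variable {K L : Type*} [Field K] [Field L] [Algebra K L] (V : ValuationSubring L)

theorem exists_valuation_pow_expChar_pow_eq [IsSepClosed K] (q : ℕ)
    [hq : ExpChar (IsLocalRing.ResidueField V) q]
    (htors : ∀ x : L, ∃ n ≠ 0, ∃ a : K, V.valuation x ^ n = V.valuation (algebraMap K L a))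
    (x : L) : ∃ e, ∃ a : K, V.valuation x ^ q ^ e = V.valuation (algebraMap K L a) := by
  obtain ⟨n, hn, a, ha⟩ := htors x
  obtain ⟨e, m, hm, rfl⟩ : ∃ e m : ℕ, (m : IsLocalRing.ResidueField V) ≠ 0 ∧ n = q ^ e * m := by
    cases hq with
    | zero => exact ⟨0, n, by exact_mod_cast hn, by simp⟩
    | prime hq =>
      obtain ⟨e, m, hm, rfl⟩ := Nat.exists_eq_pow_mul_and_not_dvd hn q hq.ne_one
      exact ⟨e, m, (CharP.cast_eq_zero_iff _ q m).not.2 hm, rfl⟩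
  have : NeZero (m : K) := ⟨fun h => hm <| by
    have : ((m : V) : L) = 0 := by simpa using congrArg (algebraMap K L) h
    simpa using congrArg (IsLocalRing.residue V) (Subtype.ext this : (m : V) = 0)⟩
  have hm0 : m ≠ 0 := right_ne_zero_of_mul hn
  obtain ⟨b, rfl⟩ := IsSepClosed.exists_pow_nat_eq a m
  exact ⟨e, b, (pow_left_inj₀ zero_le zero_le hm0).1 (by rw [← pow_mul, ha, map_pow, map_pow])⟩

theorem exists_valuation_pow_expChar_pow_sub_lt_one [IsSepClosed K] (q : ℕ)
    [ExpChar (IsLocalRing.ResidueField V) q]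
    [Algebra.IsAlgebraic (IsLocalRing.ResidueField (V.comap (algebraMap K L)))
      (IsLocalRing.ResidueField V)] {u : L} (hu : u ∈ V) :
    ∃ e, ∃ a : K, V.valuation (u ^ q ^ e - algebraMap K L a) < 1 := by
  set k := IsLocalRing.ResidueField (V.comap (algebraMap K L))
  have : IsSepClosed k := isSepClosed_residueField (V.comap (algebraMap K L)) K
  have : ExpChar k q :=
    (algebraMap k (IsLocalRing.ResidueField V)).expChar (algebraMap k _).injective q
  obtain ⟨e, abar, ha⟩ := IsPurelyInseparable.pow_mem k q (IsLocalRing.residue V ⟨u, hu⟩)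
  obtain ⟨a, rfl⟩ := IsLocalRing.residue_surjective abar
  refine ⟨e, a, ?_⟩
  rw [IsLocalRing.ResidueField.algebraMap_residue, ← map_pow, eq_comm, ← sub_eq_zero, ← map_sub,
    IsLocalRing.residue_eq_zero_iff, ValuationSubring.valuation_lt_one_iff] at ha
  exact ha

theorem div_mem_principalUnitGroup_iff (x y : Lˣ) :
    x / y ∈ V.principalUnitGroup ↔ V.valuation ((x : L) - y) < V.valuation y := by
  rw [V.mem_principalUnitGroup_iff, Units.val_div_eq_div_val, div_sub_one y.ne_zero, map_div₀,
    div_lt_one₀ (by simp [zero_lt_iff])]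

theorem mem_principalUnitGroup_of_pow_expChar_pow_mem (q : ℕ)
    [ExpChar (IsLocalRing.ResidueField V) q] {e : ℕ} {x : Lˣ}
    (hx : x ^ q ^ e ∈ V.principalUnitGroup) : x ∈ V.principalUnitGroup := by
  have hq : q ^ e ≠ 0 := pow_ne_zero _ (expChar_ne_zero (IsLocalRing.ResidueField V) q)
  have hxV : (x : L) ∈ V := by
    rw [← V.valuation_le_one_iff, ← pow_le_one_iff_of_nonneg zero_le hq, ← map_pow]
    exact (V.principal_units_le_units hx).le
  have hres (y : V) : V.valuation ((y : L) - 1) < 1 ↔ IsLocalRing.residue V y = 1 := by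
    rw [← sub_eq_zero, ← map_one (IsLocalRing.residue V), ← map_sub,
      IsLocalRing.residue_eq_zero_iff, ValuationSubring.valuation_lt_one_iff]
    rfl
  have hpow := (hres (⟨x, hxV⟩ ^ q ^ e)).1 ((V.mem_principalUnitGroup_iff _).1 hx)
  refine (hres ⟨x, hxV⟩).2 (sub_eq_zero.1 (pow_eq_zero_iff hq |>.1 ?_))
  rw [sub_pow_expChar_pow, ← map_pow, hpow, one_pow, sub_self]

theorem exists_pow_div_mem_principalUnitGroup [IsSepClosed K] (q : ℕ)
    [ExpChar (IsLocalRing.ResidueField V) q]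
    [Algebra.IsAlgebraic (IsLocalRing.ResidueField (V.comap (algebraMap K L)))
      (IsLocalRing.ResidueField V)]
    (htors : ∀ x : L, ∃ n ≠ 0, ∃ a : K, V.valuation x ^ n = V.valuation (algebraMap K L a))
    (x : Lˣ) : ∃ e, ∃ z : Kˣ, x ^ q ^ e / Units.map (algebraMap K L) z ∈ V.principalUnitGroup := by
  obtain ⟨d, y, hy⟩ := exists_valuation_pow_expChar_pow_eq V q htors x
  have hy0 : y ≠ 0 := by rintro rfl; simp at hy
  have hu : V.valuation (x ^ q ^ d / algebraMap K L y) = 1 := by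
    rw [map_div₀, map_pow, hy, div_self (by simpa using hy0)]
  obtain ⟨e, c, hc⟩ := exists_valuation_pow_expChar_pow_sub_lt_one (K := K) V q
    ((V.valuation_le_one_iff _).1 hu.le)
  have hcv : V.valuation (algebraMap K L c) = 1 := by
    have hue : V.valuation ((x ^ q ^ d / algebraMap K L y) ^ q ^ e) = 1 := by
      rw [map_pow, hu, one_pow]
    exact (V.valuation.map_eq_of_sub_lt (by rwa [hue, V.valuation.map_sub_swap])).trans hue
  have hc0 : c ≠ 0 := by rintro rfl; simp at hcv
  have hmem := (div_mem_principalUnitGroup_iff V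
    ((x ^ q ^ d / Units.map (algebraMap K L) (.mk0 y hy0)) ^ q ^ e)
    (Units.map (algebraMap K L) (.mk0 c hc0))).2 (by simpa [hcv] using hc)
  refine ⟨d + e, .mk0 y hy0 ^ q ^ e * .mk0 c hc0, ?_⟩
  rwa [map_mul, map_pow, ← div_div, pow_add, pow_mul, ← div_pow]

theorem map_div_self_mem_principalUnitGroup [IsSepClosed K]
    [Algebra.IsAlgebraic (IsLocalRing.ResidueField (V.comap (algebraMap K L)))
      (IsLocalRing.ResidueField V)]
    (htors : ∀ x : L, ∃ n ≠ 0, ∃ a : K, V.valuation x ^ n = V.valuation (algebraMap K L a))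
    (σ : Lˣ →* Lˣ) (hσ : ∀ u ∈ V.principalUnitGroup, σ u ∈ V.principalUnitGroup)
    (hσK : ∀ z : Kˣ, σ (Units.map (algebraMap K L) z) / Units.map (algebraMap K L) z ∈
      V.principalUnitGroup) (x : Lˣ) : σ x / x ∈ V.principalUnitGroup := by
  obtain ⟨q, _⟩ := ExpChar.exists (IsLocalRing.ResidueField V)
  obtain ⟨e, z, hz⟩ := exists_pow_div_mem_principalUnitGroup V q htors x
  refine mem_principalUnitGroup_of_pow_expChar_pow_mem V q (e := e) ?_
  have := div_mem (mul_mem (hσ _ hz) (hσK z)) hz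
  rwa [_root_.map_div, div_mul_div_cancel, div_div_div_cancel_right, map_pow, ← div_pow] at this

end

/-! ### Descent to the subfield -/

theorem isEquiv_valuation_comap {K L : Type*} [Field K] [Field L] (V : ValuationSubring L)
    (f : K →+* L) : (V.comap f).valuation.IsEquiv (V.valuation.comap f) := by
  refine Valuation.isEquiv_iff_val_le_one.2 fun {x} => ?_
  rw [ValuationSubring.valuation_le_one_iff, Valuation.comap_apply,
    ValuationSubring.valuation_le_one_iff, ValuationSubring.mem_comap]

section

variable {K K' L : Type*} [Field K] [Field K'] [Field L] [Algebra K L] [Algebra K' L]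
  [IsGalois K' L] (V : ValuationSubring L) [HenselianLocalRing (V.comap (algebraMap K' L))]

theorem isAlgebraic_residueField_of_forall_exists_valuation_sub_lt_one
    (hres : ∀ y : K', algebraMap K' L y ∈ V →
      ∃ x : K, V.valuation (algebraMap K' L y - algebraMap K L x) < 1) :
    Algebra.IsAlgebraic (IsLocalRing.ResidueField (V.comap (algebraMap K L)))
      (IsLocalRing.ResidueField V) := by
  set O' := V.comap (algebraMap K' L)
  have hrange : (algebraMap O' (IsLocalRing.ResidueField V)).range ≤
      (algebraMap (IsLocalRing.ResidueField (V.comap (algebraMap K L)))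
        (IsLocalRing.ResidueField V)).range := by
    rintro _ ⟨y, rfl⟩
    obtain ⟨x, hx⟩ := hres y y.2
    have hxV : algebraMap K L x ∈ V := by
      simpa using sub_mem (ValuationSubring.mem_comap.1 y.2) ((V.valuation_le_one_iff _).1 hx.le)
    refine ⟨IsLocalRing.residue _ (⟨x, hxV⟩ : V.comap (algebraMap K L)), ?_⟩
    rw [IsLocalRing.ResidueField.algebraMap_residue, eq_comm, ← sub_eq_zero]
    exact (map_sub (IsLocalRing.residue V) _ _).symm.trans
      ((IsLocalRing.residue_eq_zero_iff _).2 ((V.valuation_lt_one_iff _).2 hx))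
  refine ⟨fun ubar => IsIntegral.isAlgebraic (isIntegral_of_range_algebraMap_le hrange ?_)⟩
  obtain ⟨u, rfl⟩ := IsLocalRing.residue_surjective ubar
  have hu : IsIntegral O' u := (isIntegral_algebraMap_iff (B := L) Subtype.val_injective).1
    ((mem_valuationSubring_iff_isIntegral V).1 u.2)
  exact hu.map (IsScalarTower.toAlgHom O' V (IsLocalRing.ResidueField V))

theorem valuation_algEquiv_sub_lt_of_forall_algebraMap [IsSepClosed K]
    (hres : ∀ y : K', algebraMap K' L y ∈ V →
      ∃ x : K, V.valuation (algebraMap K' L y - algebraMap K L x) < 1)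
    (hval : ∀ y : K', ∃ x : K, V.valuation (algebraMap K L x) = V.valuation (algebraMap K' L y))
    (σ : Gal(L/K')) (hσ : ∀ z : K, z ≠ 0 →
      V.valuation (σ (algebraMap K L z) - algebraMap K L z) < V.valuation (algebraMap K L z))
    {x : L} (hx : x ≠ 0) : V.valuation (σ x - x) < V.valuation x := by
  have := isAlgebraic_residueField_of_forall_exists_valuation_sub_lt_one V hres
  have htors (y : L) : ∃ n ≠ 0, ∃ a : K, V.valuation y ^ n = V.valuation (algebraMap K L a) := by
    obtain ⟨n, hn, b, hb⟩ := exists_valuation_pow_eq_of_isAlgebraic V.valuation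
      (Algebra.IsAlgebraic.isAlgebraic (R := K') y)
    obtain ⟨a, ha⟩ := hval b
    exact ⟨n, hn, a, hb.trans ha.symm⟩
  have hV : V.comap (σ : L →+* L) = V := ValuationSubring.ext _ _ fun y =>
    algEquiv_apply_mem_iff V σ
  have hlt_one (y : L) : V.valuation (σ y) < 1 ↔ V.valuation y < 1 := by
    have := (isEquiv_valuation_comap V (σ : L →+* L)).lt_one_iff_lt_one (x := y)
    rw [hV] at this
    exact this.symm
  have := map_div_self_mem_principalUnitGroup V htors (Units.map (σ : L →* L))
    (fun u hu => by
      rw [V.mem_principalUnitGroup_iff] at hu ⊢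
      simpa using (hlt_one (u - 1)).2 hu)
    (fun z => (div_mem_principalUnitGroup_iff V _ _).2 (hσ z z.ne_zero))
    (.mk0 x hx)
  exact (div_mem_principalUnitGroup_iff V _ _).1 this

end

theorem henselianLocalRing_of_isIntegrallyClosedIn (R S : Type*) [CommRing R] [IsLocalRing R]
    [CommRing S] [HenselianLocalRing S] [Algebra R S] [IsLocalHom (algebraMap R S)]
    [IsIntegrallyClosedIn R S] : HenselianLocalRing R := by
  refine ⟨fun f hf a ha hfa => ?_⟩
  have hmem {r : R} : algebraMap R S r ∈ IsLocalRing.maximalIdeal S ↔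
      r ∈ IsLocalRing.maximalIdeal R := by
    simp only [IsLocalRing.mem_maximalIdeal, mem_nonunits_iff, isUnit_map_iff]
  obtain ⟨b, hb, hba⟩ := HenselianLocalRing.is_henselian (f.map (algebraMap R S)) (hf.map _)
    (algebraMap R S a) (by rwa [eval_map_apply, hmem])
    (by rw [derivative_map, eval_map_apply]; exact hfa.map _)
  obtain ⟨r, rfl⟩ := IsIntegrallyClosedIn.isIntegral_iff.1
    (⟨f, hf, by rwa [IsRoot, eval_map] at hb⟩ : IsIntegral R b)
  refine ⟨r, ?_, by rwa [← map_sub, hmem] at hba⟩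
  rw [IsRoot, eval_map_apply] at hb
  exact (IsIntegralClosure.algebraMap_injective R R S) (hb.trans (map_zero _).symm)

section

variable {K L : Type*} [Field K] [Field L] [Algebra K L]

theorem isIntegrallyClosedIn_comap (V : ValuationSubring L) [IsIntegrallyClosedIn K L] :
    IsIntegrallyClosedIn (V.comap (algebraMap K L)) V := by
  refine isIntegrallyClosedIn_iff.2 ⟨fun a b h => Subtype.ext ((algebraMap K L).injective
    (congrArg V.subtype h)), fun {x} hx => ?_⟩
  obtain ⟨y, hy⟩ := IsIntegrallyClosedIn.isIntegral_iff.1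
    ((hx.map (IsScalarTower.toAlgHom (V.comap (algebraMap K L)) V L)).tower_top (A := K))
  replace hy : algebraMap K L y = x := hy
  exact ⟨⟨y, ValuationSubring.mem_comap.2 (hy ▸ x.2)⟩, Subtype.ext hy⟩

theorem isIntegrallyClosedIn_of_isAlgebraic
    (h : ∀ x : L, IsAlgebraic K x → ∃ y : K, algebraMap K L y = x) : IsIntegrallyClosedIn K L :=
  isIntegrallyClosedIn_iff.2 ⟨(algebraMap K L).injective, fun hx => h _ hx.isAlgebraic⟩

end

section

open IntermediateField

variable (F M F' Ω : Type*) [Field F] [Field M] [Field F'] [Field Ω] [Algebra F M]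
  [Algebra F F'] [Algebra F Ω] [Algebra M Ω] [Algebra F' Ω] [IsScalarTower F M Ω]
  [IsScalarTower F F' Ω]

theorem algebraMap_restrictRestrictAlgEquivMapHom_apply [Normal F M] (σ : Gal(Ω/F')) (x : M) :
    algebraMap M Ω (restrictRestrictAlgEquivMapHom F M F' Ω σ x) = σ (algebraMap M Ω x) :=
  AlgEquiv.restrictNormal_commutes (MulSemiringAction.toAlgAut Gal(Ω/F') F Ω σ) M x

theorem continuous_restrictRestrictAlgEquivMapHom [Normal F M] [Algebra.IsIntegral F' Ω] :
    Continuous (restrictRestrictAlgEquivMapHom F M F' Ω) := by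
  refine continuous_of_continuousAt_one _ fun s hs => ?_
  rw [map_one, krullTopology_mem_nhds_one_iff] at hs
  obtain ⟨E, hE, hEs⟩ := hs
  obtain ⟨S, rfl⟩ : E.FG := essFiniteType_iff.1 inferInstance
  rw [Filter.mem_map, krullTopology_mem_nhds_one_iff]
  have : Finite (algebraMap M Ω '' S) := (S.finite_toSet.image _).to_subtype
  refine ⟨adjoin F' (algebraMap M Ω '' S),
    finiteDimensional_adjoin fun x _ => Algebra.IsIntegral.isIntegral x, fun σ hσ => hEs ?_⟩
  rw [SetLike.mem_coe, IntermediateField.mem_fixingSubgroup_iff]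
  refine (forall_mem_adjoin_smul_eq_self_iff F
    (restrictRestrictAlgEquivMapHom F M F' Ω σ)).2 fun x hx => (algebraMap M Ω).injective ?_
  rw [AlgEquiv.smul_def, algebraMap_restrictRestrictAlgEquivMapHom_apply]
  exact hσ ⟨_, subset_adjoin F' _ ⟨x, hx, rfl⟩⟩

theorem restrictRestrictAlgEquivMapHom_surjective_of_isIntegrallyClosedIn [IsGalois F M]
    [IsGalois F' Ω] [IsIntegrallyClosedIn F F'] :
    Function.Surjective (restrictRestrictAlgEquivMapHom F M F' Ω) := by
  let r := restrictRestrictAlgEquivMapHom F M F' Ω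
  have hfixed : fixedField r.range = ⊥ := by
    refine eq_bot_iff.2 fun x hx => ?_
    rw [mem_fixedField_iff] at hx
    obtain ⟨y, hy⟩ : algebraMap M Ω x ∈ Set.range (algebraMap F' Ω) := by
      rw [InfiniteGalois.mem_range_algebraMap_iff_fixed]
      intro σ
      rw [← algebraMap_restrictRestrictAlgEquivMapHom_apply F, hx _ ⟨σ, rfl⟩]
    have hyint : IsIntegral F y := by
      rw [← isIntegral_algebraMap_iff (B := Ω) (algebraMap F' Ω).injective, hy]
      exact (Algebra.IsIntegral.isIntegral x).algebraMap
    obtain ⟨z, rfl⟩ := IsIntegrallyClosedIn.isIntegral_iff.1 hyint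
    refine mem_bot.2 ⟨z, (algebraMap M Ω).injective ?_⟩
    rw [← hy, ← IsScalarTower.algebraMap_apply, ← IsScalarTower.algebraMap_apply]
  have hclosed : IsClosed (r.range : Set Gal(M/F)) :=
    (isCompact_range (continuous_restrictRestrictAlgEquivMapHom F M F' Ω)).isClosed
  have := InfiniteGalois.fixingSubgroup_fixedField ⟨r.range, hclosed⟩
  rw [← MonoidHom.range_eq_top, ← fixingSubgroup_bot, ← hfixed]
  exact this.symm

theorem exists_algEquiv_forall_apply_algebraMap_eq [IsGalois F M] [IsGalois F' Ω]
    [IsIntegrallyClosedIn F F'] (τ : Gal(M/F)) :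
    ∃ σ : Gal(Ω/F'), ∀ x : M, σ (algebraMap M Ω x) = algebraMap M Ω (τ x) := by
  obtain ⟨σ, rfl⟩ := restrictRestrictAlgEquivMapHom_surjective_of_isIntegrallyClosedIn F M F' Ω τ
  exact ⟨σ, fun x => (algebraMap_restrictRestrictAlgEquivMapHom_apply F M F' Ω σ x).symm⟩

end

theorem valuation_algEquiv_sub_lt_of_immediate {F F' M Ω : Type*} [Field F] [Field F'] [Field M]
    [Field Ω] [Algebra F F'] [Algebra F M] [Algebra F Ω] [Algebra F' Ω] [Algebra M Ω]
    [IsScalarTower F F' Ω] [IsScalarTower F M Ω] [IsSepClosed M] [IsGalois F' Ω]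
    (V : ValuationSubring Ω) [HenselianLocalRing (V.comap (algebraMap F' Ω))]
    (hres : ∀ y : F', y ∈ V.comap (algebraMap F' Ω) →
      ∃ x : F, (V.comap (algebraMap F' Ω)).valuation (y - algebraMap F F' x) < 1)
    (hval : ∀ y : F', y ≠ 0 → ∃ x : F, (V.comap (algebraMap F' Ω)).valuation (algebraMap F F' x) =
      (V.comap (algebraMap F' Ω)).valuation y)
    (σ : Gal(Ω/F')) (hσ : ∀ z : M, z ≠ 0 →
      V.valuation (σ (algebraMap M Ω z) - algebraMap M Ω z) < V.valuation (algebraMap M Ω z))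
    {x : Ω} (hx : x ≠ 0) : V.valuation (σ x - x) < V.valuation x := by
  have hequiv := isEquiv_valuation_comap V (algebraMap F' Ω)
  have hFM (x : F) : algebraMap M Ω (algebraMap F M x) = algebraMap F' Ω (algebraMap F F' x) := by
    rw [← IsScalarTower.algebraMap_apply, ← IsScalarTower.algebraMap_apply]
  refine valuation_algEquiv_sub_lt_of_forall_algebraMap V (fun y hy => ?_) (fun y => ?_) σ hσ hx
  · obtain ⟨x, hx⟩ := hres y hy
    refine ⟨algebraMap F M x, ?_⟩
    rw [hFM, ← map_sub]
    exact hequiv.lt_one_iff_lt_one.1 hx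
  · obtain rfl | hy := eq_or_ne y 0
    · exact ⟨0, by simp⟩
    obtain ⟨x, hx⟩ := hval y hy
    exact ⟨algebraMap F M x, by rw [hFM]; exact hequiv.eq_iff.1 hx⟩

set_option maxHeartbeats 1000000 in
theorem stmt8 {F F' Ω' : Type*} [Field F] [Field F'] [Field Ω']
    [Algebra F F'] [Algebra F' Ω'] [Algebra F Ω'] [IsScalarTower F F' Ω']
    -- `Ω'` is a fixed separable closure of `F'`:
    [IsSepClosure F' Ω']
    -- `F` is relatively algebraically closed in `F'`:
    (hrac : ∀ x : F', IsAlgebraic F x → ∃ y : F, algebraMap F F' y = x)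
    -- valuations: `O'` on `F'`, `W` a prolongation to `Ω'`, `O` the restriction to `F`:
    (O' : ValuationSubring F') (W : ValuationSubring Ω')
    (hW : W.comap (algebraMap F' Ω') = O')
    (O : ValuationSubring F) (hO : O = O'.comap (algebraMap F F'))
    -- the extension `(F', O')/(F, O)` is immediate: same residue field and value group:
    (hres : ∀ y : F', y ∈ O' → ∃ x : F, algebraMap F F' x ∈ O' ∧
      O'.valuation (y - algebraMap F F' x) < 1)
    (hval : ∀ y : F', y ≠ 0 → ∃ x : F, x ≠ 0 ∧
      O'.valuation (algebraMap F F' x) = O'.valuation y)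
    -- `(F', O')` is henselian:
    (hhens : HenselianLocalRing ↥O')
    -- `(F', O')` is absolutely defectless: the ramification subgroup of the
    -- decomposition group of `W` in the absolute Galois group of `F'` is trivial:
    (hdefect : ∀ σ : Ω' ≃ₐ[F'] Ω', (∀ x : Ω', x ∈ W ↔ σ x ∈ W) →
      (∀ x : Ω', x ≠ 0 → W.valuation (σ x - x) < W.valuation x) → σ = 1) :
    -- then `(F, O)` is henselian and absolutely defectless, and restriction to the
    -- separable closure `M` of `F` inside `Ω'` is an isomorphism of absolute Galois
    -- groups:
    HenselianLocalRing ↥O ∧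
    (∀ τ : ↥(separableClosure F Ω') ≃ₐ[F] ↥(separableClosure F Ω'),
      (∀ x : ↥(separableClosure F Ω'),
        x ∈ W.comap (algebraMap ↥(separableClosure F Ω') Ω') ↔
        τ x ∈ W.comap (algebraMap ↥(separableClosure F Ω') Ω')) →
      (∀ x : ↥(separableClosure F Ω'), x ≠ 0 →
        (W.comap (algebraMap ↥(separableClosure F Ω') Ω')).valuation (τ x - x) <
        (W.comap (algebraMap ↥(separableClosure F Ω') Ω')).valuation x) → τ = 1) ∧
    (∀ τ : ↥(separableClosure F Ω') ≃ₐ[F] ↥(separableClosure F Ω'),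
      ∃! σ : Ω' ≃ₐ[F'] Ω',
        ∀ x : ↥(separableClosure F Ω'), σ (x : Ω') = ((τ x : ↥(separableClosure F Ω')) : Ω')) := by
  subst hW hO
  have : IsSepClosed Ω' := IsSepClosure.sep_closed F'
  have : IsGalois F' Ω' := IsSepClosure.isGalois
  have : IsSepClosed (separableClosure F Ω') := IsSepClosure.sep_closed F
  have : IsIntegrallyClosedIn F F' := isIntegrallyClosedIn_of_isAlgebraic hrac
  let M := separableClosure F Ω'
  have hlift (τ : Gal(M/F)) : ∃ σ : Gal(Ω'/F'), ∀ x : M, σ x = τ x :=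
    exists_algEquiv_forall_apply_algebraMap_eq F M F' Ω' τ
  have hone (σ : Gal(Ω'/F')) (h : ∀ z : M, z ≠ 0 → W.valuation (σ z - z) < W.valuation z) :
      σ = 1 :=
    hdefect σ (fun _ => (algEquiv_apply_mem_iff W σ).symm) fun _ =>
      valuation_algEquiv_sub_lt_of_immediate W (fun y hy => (hres y hy).imp fun _ => And.right)
        (fun y hy => (hval y hy).imp fun _ => And.right) σ h
  refine ⟨?_, fun τ _ hτ => ?_, fun τ => ?_⟩
  · have := isIntegrallyClosedIn_comap (K := F) (W.comap (algebraMap F' Ω'))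
    exact henselianLocalRing_of_isIntegrallyClosedIn _ (W.comap (algebraMap F' Ω'))
  · obtain ⟨σ, hσ⟩ := hlift τ
    obtain rfl : σ = 1 := hone σ fun z hz => by
      rw [hσ]; exact (isEquiv_valuation_comap W (algebraMap M Ω')).lt_iff_lt.1 (hτ z hz)
    exact AlgEquiv.ext fun x => Subtype.ext (hσ x).symm
  · obtain ⟨σ, hσ⟩ := hlift τ
    refine ⟨σ, hσ, fun ρ hρ => (inv_mul_eq_one.1 (hone (σ⁻¹ * ρ) fun z hz => ?_)).symm⟩
    have hfix : (σ⁻¹ * ρ) z = z := by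
      rw [AlgEquiv.mul_apply, hρ, ← hσ, ← AlgEquiv.mul_apply, inv_mul_cancel, AlgEquiv.one_apply]
    rw [hfix, sub_self, map_zero]
    simpa [zero_lt_iff] using hz
end

section
/- Let L₀/F₀ be a finite Galois extension and φ : Gal(L₀/F₀) ↪ A an embedding into a finite group A. Then there exists a Galois extension of valued fields (L, w)/(F, v) with residue fields Lw ≅ L₀ and Fv ≅ F₀, with Gal(L/F) ≅ A, such that φ(Gal(L₀/F₀)) is the decomposition subgroup of A with respect to w; moreover the extension is tame unramified (the inertia subgroup is trivial). -/
/-- A realization of the finite group `A` as Galois group of a valued Galois extension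
`(L, W)/(F, v)` with residue extension `L₀/F₀`, such that the image of
`Gal(L₀/F₀)` under `φ` is the decomposition subgroup, and the extension is tame
unramified (trivial inertia). -/
structure ValuedRealization (F₀ L₀ : Type) [Field F₀] [Field L₀] [Algebra F₀ L₀]
    (A : Type) [Group A] (φ : (L₀ ≃ₐ[F₀] L₀) →* A) where
  F : Type
  L : Type
  [fieldF : Field F]
  [fieldL : Field L]
  [alg : Algebra F L]
  [findim : FiniteDimensional F L]
  [galois : IsGalois F L]
  /-- the valuation (subring) on `L`; its restriction to `F` is `v`. -/
  W : ValuationSubring L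
  /-- `Gal(L/F) ≅ A`. -/
  e : (L ≃ₐ[F] L) ≃* A
  /-- the residue field of `W` is `L₀`. -/
  resL : IsLocalRing.ResidueField ↥W ≃+* L₀
  /-- the residue field of `v = W ∩ F` is `F₀`. -/
  resF : IsLocalRing.ResidueField ↥(W.comap (algebraMap F L)) ≃+* F₀
  /-- `φ (Gal(L₀/F₀))` is the decomposition subgroup of `A` w.r.t. `W`. -/
  decomp : ∀ a : A, a ∈ φ.range ↔
    ∃ σ : L ≃ₐ[F] L, (∀ x : L, x ∈ W ↔ σ x ∈ W) ∧ e σ = a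
  /-- the extension is tame unramified: the inertia subgroup is trivial. -/
  tame : ∀ σ : L ≃ₐ[F] L, (∀ x : L, x ∈ W ↔ σ x ∈ W) →
    (∀ x : L, x ∈ W → W.valuation (σ x - x) < 1) → σ = 1

open scoped HahnSeries

/-!
Let `x : A → L₀` be a normal basis of `L₀ / F₀`, indexed through `φ` and extended by zero, and let
`A` permute the indeterminates of `L = F₀(T_a : a ∈ A)`. Instead of extending the place
`T_a ↦ x_a` abstractly, which would give no control over its behaviour under `φ`, we embed `L` into
the Hahn series over `L₀` by `T_b ↦ x_b + ∑ c, x_{b c⁻¹} S ^ γ_c` with positive, linearly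
independent exponents `γ_c`. Since `g (x_b) = x_{φ(g) b}`, the group `Gal(L₀/F₀)` acts on the image
coefficientwise, so it preserves the order valuation, and it acts on residues in the natural way.
The map is injective because the matrix `(x_{b c⁻¹})` is invertible, by Dedekind's independence of
automorphisms.

If `a ∈ A` preserves the valuation ring, it maps the unit `T_1` to the unit `T_a`, whose residue
`x_a` vanishes off the range of `φ`; so `a = φ(g)`. If moreover `a` acts trivially on residues, then
`x_{φ(g)} = x_1`, so `g = 1`.
-/

section HahnSeries

open HahnSeries

section OrderedMonoid

variable {Γ : Type*} [AddCommMonoid Γ] [PartialOrder Γ] [IsOrderedCancelAddMonoid Γ]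

theorem hahnSeries_coeff_zero_mul {R : Type*} [NonUnitalNonAssocSemiring R] {x y : R⟦Γ⟧}
    (hx : ∀ i ∈ x.support, 0 ≤ i) (hy : ∀ i ∈ y.support, 0 ≤ i) :
    (x * y).coeff 0 = x.coeff 0 * y.coeff 0 := by
  rw [coeff_mul]
  refine Finset.sum_eq_single (0, 0) (fun ij hij hne => ?_) (fun h => ?_)
  · obtain ⟨hi, hj, hadd⟩ := Finset.mem_antidiagonal.mp hij
    obtain ⟨hi0, hj0⟩ := (add_eq_zero_iff_of_nonneg (hx _ hi) (hy _ hj)).mp hadd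
    exact absurd (Prod.ext hi0 hj0) hne
  · by_contra hne
    exact h (Finset.mem_antidiagonal.mpr
      ⟨left_ne_zero_of_mul hne, right_ne_zero_of_mul hne, add_zero 0⟩)

variable {k R S : Type*} [CommSemiring k] [Semiring R] [Semiring S] [Algebra k R] [Algebra k S]

variable (Γ) in
/-- Coefficientwise application of an algebra homomorphism to Hahn series, as an algebra
homomorphism. -/
noncomputable def hahnMapAlgHom (f : R →ₐ[k] S) : R⟦Γ⟧ →ₐ[k] S⟦Γ⟧ where
  toFun x := x.map f
  map_one' := HahnSeries.map_one (f : R →+* S).toMonoidWithZeroHom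
  map_mul' _ _ := HahnSeries.map_mul ((f : R →+* S) : R →ₙ+* S)
  map_zero' := HahnSeries.map_zero ((f : R →+ S) : ZeroHom R S)
  map_add' _ _ := HahnSeries.map_add (f : R →+ S)
  commutes' c := by
    ext i
    simp [HahnSeries.algebraMap_apply, C_apply, coeff_single, apply_ite f]

theorem hahnMapAlgHom_coeff (f : R →ₐ[k] S) (x : R⟦Γ⟧) (i : Γ) :
    (hahnMapAlgHom Γ f x).coeff i = f (x.coeff i) :=
  rfl

theorem hahnMapAlgHom_single (f : R →ₐ[k] S) (i : Γ) (r : R) :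
    hahnMapAlgHom Γ f (single i r) = single i (f r) :=
  HahnSeries.map_single (Γ := Γ) ((f : R →+ S) : ZeroHom R S)

theorem hahnSeries_single_linearCombination {σ K : Type*} [CommSemiring K] (γ : σ → Γ)
    (n : σ →₀ ℕ) :
    (single (Finsupp.linearCombination ℕ γ n) 1 : K⟦Γ⟧) =
      n.prod fun i k => single (γ i) (1 : K) ^ k := by
  induction n using Finsupp.induction_linear with
  | zero => simp
  | add m n hm hn =>
    rw [map_add, Finsupp.prod_add_index' (fun _ => pow_zero _) (fun _ _ _ => pow_add _ _ _), ← hm,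
      ← hn, single_mul_single, one_mul]
  | single i k => simp

theorem algebraicIndependent_hahnSeries_single {σ K : Type*} [CommRing K] {γ : σ → Γ}
    (hγ : LinearIndependent ℕ γ) : AlgebraicIndependent K (fun i => (single (γ i) 1 : K⟦Γ⟧)) := by
  classical
  have coeff_aeval (p : MvPolynomial σ K) (m : σ →₀ ℕ) :
      (MvPolynomial.aeval (fun i => (single (γ i) 1 : K⟦Γ⟧)) p).coeff
        (Finsupp.linearCombination ℕ γ m) = p.coeff m := by
    induction p using MvPolynomial.induction_on' with
    | monomial n a =>
      rw [MvPolynomial.aeval_monomial, ← hahnSeries_single_linearCombination,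
        MvPolynomial.coeff_monomial]
      simp [← Algebra.smul_def, coeff_single, hγ.eq_iff, eq_comm]
    | add p q hp hq => rw [map_add, coeff_add, hp, hq, MvPolynomial.coeff_add]
  rw [algebraicIndependent_iff_injective_aeval]
  intro p q h
  ext m
  rw [← coeff_aeval, ← coeff_aeval q, h]

end OrderedMonoid

section OrderedGroup

variable {Γ K : Type*} [AddCommGroup Γ] [LinearOrder Γ] [IsOrderedAddMonoid Γ] [Field K]

variable (Γ K) in
/-- The valuation ring of the order valuation on the field of Hahn series. -/
noncomputable def hahnIntegers : ValuationSubring K⟦Γ⟧ :=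
  (AddValuation.toValuation (addVal Γ K)).valuationSubring

theorem mem_hahnIntegers {x : K⟦Γ⟧} : x ∈ hahnIntegers Γ K ↔ ∀ i ∈ x.support, 0 ≤ i := by
  have mem_iff : x ∈ hahnIntegers Γ K ↔ 0 ≤ x.orderTop := by
    rw [← addVal_apply]
    exact Iff.rfl
  rw [mem_iff]
  refine ⟨fun h i hi => WithTop.coe_le_coe.mp (h.trans (orderTop_le_of_coeff_ne_zero hi)),
    fun h => ?_⟩
  rcases eq_or_ne x 0 with rfl | hx
  · simp
  · rw [← order_eq_orderTop_of_ne_zero hx]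
    exact WithTop.coe_le_coe.mpr (h _ (coeff_order_eq_zero.not.mpr hx))

theorem single_mem_hahnIntegers {i : Γ} (hi : 0 ≤ i) (r : K) : single i r ∈ hahnIntegers Γ K :=
  mem_hahnIntegers.mpr fun _ hj => hi.trans_eq (eq_of_mem_support_single hj).symm

theorem algebraMap_mem_hahnIntegers {k : Type*} [CommSemiring k] [Algebra k K] (c : k) :
    algebraMap k K⟦Γ⟧ c ∈ hahnIntegers Γ K :=
  single_mem_hahnIntegers le_rfl (algebraMap k K c)

theorem hahnMapAlgHom_mem_hahnIntegers {k K' : Type*} [CommSemiring k] [Field K'] [Algebra k K]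
    [Algebra k K'] (f : K →ₐ[k] K') {x : K⟦Γ⟧} (hx : x ∈ hahnIntegers Γ K) :
    hahnMapAlgHom Γ f x ∈ hahnIntegers Γ K' :=
  mem_hahnIntegers.mpr fun i hi => mem_hahnIntegers.mp hx i fun h => hi <| by
    rw [hahnMapAlgHom_coeff, h, map_zero]

variable (Γ K) in
/-- The residue map of the order valuation on Hahn series, which is the constant coefficient. -/
noncomputable def hahnResidue : hahnIntegers Γ K →+* K where
  toFun x := (x : K⟦Γ⟧).coeff 0
  map_one' := by simp
  map_zero' := by simp
  map_add' := by simp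
  map_mul' x y := hahnSeries_coeff_zero_mul (mem_hahnIntegers.mp x.2) (mem_hahnIntegers.mp y.2)

end OrderedGroup

end HahnSeries

section AlgebraicIndependence

theorem exists_pos_linearIndependent_real (ι : Type*) [Countable ι] :
    ∃ γ : ι → ℝ, (∀ i, 0 < γ i) ∧ LinearIndependent ℚ γ := by
  let b := Module.Basis.ofVectorSpace ℚ ℝ
  have : Infinite (Module.Basis.ofVectorSpaceIndex ℚ ℝ) := by
    rw [Cardinal.infinite_iff, b.mk_eq_rank'', Real.rank_rat_real]
    exact Cardinal.aleph0_le_continuum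
  obtain ⟨f, hf⟩ := exists_injective_nat ι
  let e : ι → Module.Basis.ofVectorSpaceIndex ℚ ℝ := Infinite.natEmbedding _ ∘ f
  have he : Function.Injective e := (Infinite.natEmbedding _).injective.comp hf
  choose u hu using fun r : ℝ => show ∃ u : ℚˣ, u • r = |r| by
    rcases abs_choice r with h | h
    · exact ⟨1, by simp [h]⟩
    · exact ⟨-1, by simp [h]⟩
  refine ⟨fun i => |b (e i)|, fun i => abs_pos.mpr (b.ne_zero _), ?_⟩
  simp only [← hu]
  exact (b.linearIndependent.comp e he).units_smul fun i => u (b (e i))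

open MvPolynomial

theorem algebraicIndependent_C_add_toMvPolynomial {m n R : Type*} [Finite m] [Fintype n]
    [DecidableEq m] [CommRing R] {M : Matrix m n R} {N : Matrix n m R} (hMN : M * N = 1)
    (x : m → R) : AlgebraicIndependent R (fun i => C (x i) + M.toMvPolynomial i) := by
  have := Fintype.ofFinite m
  refine .of_comp (bind₁ fun j => bind₁ (fun i => X i - C (x i)) (N.toMvPolynomial j)) ?_
  convert algebraicIndependent_X m R using 1
  funext i
  simp only [Function.comp_apply, map_add, algHom_C, algebraMap_eq]
  rw [← bind₁_bind₁, ← Matrix.toMvPolynomial_mul, hMN, Matrix.toMvPolynomial_one, bind₁_X_right,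
    add_sub_cancel]

theorem algebraicIndependent_algebraMap_add_sum_smul {m n R S : Type*} [Finite m] [Fintype n]
    [DecidableEq m] [CommRing R] [CommRing S] [Algebra R S] {y : n → S}
    (hy : AlgebraicIndependent R y) {M : Matrix m n R} {N : Matrix n m R} (hMN : M * N = 1)
    (x : m → R) : AlgebraicIndependent R (fun i => algebraMap R S (x i) + ∑ j, M i j • y j) := by
  convert (algebraicIndependent_C_add_toMvPolynomial hMN x).map' (f := aeval y) hy using 1
  funext i
  simp [Matrix.toMvPolynomial, aeval_monomial, Algebra.smul_def]

end AlgebraicIndependence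

section NormalBasis

variable {F₀ L₀ A : Type*} [Field F₀] [Field L₀] [Algebra F₀ L₀] [FiniteDimensional F₀ L₀]

theorem eq_zero_of_sum_mul_algEquiv_basis {κ : Type*} (b : Module.Basis κ F₀ L₀)
    {v : (L₀ ≃ₐ[F₀] L₀) → L₀} (hv : ∀ i, ∑ g, v g * g (b i) = 0) : v = 0 := by
  have hlin : ∑ g : L₀ ≃ₐ[F₀] L₀, v g • g.toLinearMap = 0 := b.ext fun i => by simpa using hv i
  have hli : LinearIndependent L₀ fun g : L₀ ≃ₐ[F₀] L₀ => g.toLinearMap :=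
    (linearIndependent_algHom_toLinearMap F₀ L₀ L₀).comp AlgEquiv.toAlgHom
      AlgEquiv.coe_toAlgHom_injective
  exact funext (Fintype.linearIndependent_iff.mp hli v hlin)

variable [IsGalois F₀ L₀] [Group A] (φ : (L₀ ≃ₐ[F₀] L₀) →* A)

/-- The normal basis of `L₀ / F₀` as a family indexed by `A`, transported along
`φ : Gal(L₀/F₀) → A` and extended by zero off the range of `φ`. -/
noncomputable def extendedNormalBasis : A → L₀ :=
  Function.extend φ (IsGalois.normalBasis F₀ L₀) 0

variable {φ}

theorem extendedNormalBasis_apply (hφ : Function.Injective φ) (g : L₀ ≃ₐ[F₀] L₀) :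
    extendedNormalBasis φ (φ g) = IsGalois.normalBasis F₀ L₀ g :=
  hφ.extend_apply _ _ g

theorem extendedNormalBasis_of_notMem_range {a : A} (ha : a ∉ φ.range) :
    extendedNormalBasis φ a = 0 :=
  Function.extend_apply' _ _ a ha

theorem extendedNormalBasis_one_ne_zero (hφ : Function.Injective φ) :
    extendedNormalBasis φ 1 ≠ 0 := by
  rw [← map_one φ, extendedNormalBasis_apply hφ]
  exact (IsGalois.normalBasis F₀ L₀).ne_zero 1

theorem extendedNormalBasis_map_mul (hφ : Function.Injective φ) (g : L₀ ≃ₐ[F₀] L₀) (a : A) :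
    extendedNormalBasis φ (φ g * a) = g (extendedNormalBasis φ a) := by
  by_cases ha : a ∈ φ.range
  · obtain ⟨h, rfl⟩ := ha
    rw [← map_mul, extendedNormalBasis_apply hφ, extendedNormalBasis_apply hφ,
      IsGalois.normalBasis_apply (g * h), IsGalois.normalBasis_apply h, AlgEquiv.mul_apply]
  · have hga : φ g * a ∉ φ.range := (φ.range.mul_mem_cancel_left ⟨g, rfl⟩).not.mpr ha
    rw [extendedNormalBasis_of_notMem_range ha, extendedNormalBasis_of_notMem_range hga, map_zero]

variable (φ) in
/-- The matrix `(x (b * c⁻¹))` over `b, c : A` formed from the extended normal basis `x`. -/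
noncomputable def extendedNormalBasisMatrix : Matrix A A L₀ :=
  .of fun b c => extendedNormalBasis φ (b * c⁻¹)

theorem isUnit_extendedNormalBasisMatrix [Fintype A] [DecidableEq A] (hφ : Function.Injective φ) :
    IsUnit (extendedNormalBasisMatrix φ) := by
  rw [← Matrix.linearIndependent_rows_iff_isUnit, Fintype.linearIndependent_iff]
  intro v hv a
  have sum_eq_zero (c : A) : ∑ b, v b * extendedNormalBasis φ (b * c⁻¹) = 0 := by
    simpa [extendedNormalBasisMatrix] using congrFun hv c
  suffices h : (fun g => v (φ g * a)) = 0 by simpa using congrFun h 1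
  refine eq_zero_of_sum_mul_algEquiv_basis (IsGalois.normalBasis F₀ L₀) fun k => ?_
  have summand_eq (g : L₀ ≃ₐ[F₀] L₀) : g (IsGalois.normalBasis F₀ L₀ k) =
      extendedNormalBasis φ (φ g * a * (φ k⁻¹ * a)⁻¹) := by
    rw [← extendedNormalBasis_apply hφ, ← extendedNormalBasis_map_mul hφ]
    congr 1
    rw [map_inv]
    group
  -- In the column `φ k⁻¹ * a` only the rows `φ g * a` have nonzero entries.
  rw [← sum_eq_zero (φ k⁻¹ * a)]
  refine Fintype.sum_of_injective (fun g => φ g * a) ((mul_left_injective a).comp hφ) _ _ ?_ ?_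
  · intro b hb
    rw [extendedNormalBasis_of_notMem_range, mul_zero]
    rintro ⟨g, hg⟩
    exact hb ⟨g * k⁻¹, by simp [hg, mul_assoc]⟩
  · intro g
    rw [summand_eq]

end NormalBasis

section RationalFunctions

open MvPolynomial

/-- The action on polynomials which permutes the indeterminates. It is not a global instance, since
it competes with the coefficientwise action. -/
noncomputable abbrev mvPolynomialPermAction (G σ k : Type*) [Group G] [MulAction G σ]
    [CommSemiring k] : MulSemiringAction G (MvPolynomial σ k) where
  smul g p := rename (g • ·) p
  one_smul p := by
    change rename (1 • ·) p = p
    simp only [one_smul]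
    exact rename_id_apply p
  mul_smul g h p := by
    change rename ((g * h) • ·) p = rename (g • ·) (rename (h • ·) p)
    simp only [rename_rename, Function.comp_def, mul_smul]
  smul_zero g := map_zero (rename (g • ·))
  smul_add g := map_add (rename (g • ·))
  smul_one g := map_one (rename (g • ·))
  smul_mul g := map_mul (rename (g • ·))

/-- The action on rational functions which permutes the indeterminates. -/
noncomputable abbrev rationalFunctionPermAction (G σ k : Type*) [Group G] [MulAction G σ]
    [Field k] : MulSemiringAction G (FractionRing (MvPolynomial σ k)) :=
  letI := mvPolynomialPermAction G σ k
  IsFractionRing.mulSemiringAction G (MvPolynomial σ k) (FractionRing (MvPolynomial σ k))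

variable {G σ k : Type*} [Group G] [MulAction G σ] [Field k]

attribute [local instance] rationalFunctionPermAction

theorem smul_algebraMap_mvPolynomial (g : G) (p : MvPolynomial σ k) :
    g • algebraMap (MvPolynomial σ k) (FractionRing (MvPolynomial σ k)) p =
      algebraMap _ _ (rename (g • ·) p) :=
  letI := mvPolynomialPermAction G σ k
  (algebraMap.coe_smul' g p (FractionRing (MvPolynomial σ k))).symm

theorem smulCommClass_rationalFunction :
    SMulCommClass G k (FractionRing (MvPolynomial σ k)) where
  smul_comm g c y := by
    have smul_const : g • algebraMap k (FractionRing (MvPolynomial σ k)) c =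
        algebraMap k (FractionRing (MvPolynomial σ k)) c := by
      rw [IsScalarTower.algebraMap_apply k (MvPolynomial σ k), smul_algebraMap_mvPolynomial,
        algebraMap_eq, rename_C]
    rw [Algebra.smul_def, smul_mul', smul_const, ← Algebra.smul_def]

variable {E : Type*} [Field E] [Algebra k E] {τ : σ → E}

/-- Evaluation of rational functions at an algebraically independent family. -/
noncomputable def rationalFunctionEval (hτ : AlgebraicIndependent k τ) :
    FractionRing (MvPolynomial σ k) →ₐ[k] E :=
  IsFractionRing.liftAlgHom (algebraicIndependent_iff_injective_aeval.mp hτ)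

theorem rationalFunctionEval_algebraMap (hτ : AlgebraicIndependent k τ) (p : MvPolynomial σ k) :
    rationalFunctionEval hτ (algebraMap _ _ p) = aeval τ p :=
  IsFractionRing.lift_algebraMap (algebraicIndependent_iff_injective_aeval.mp hτ) p

theorem rationalFunctionEval_smul (hτ : AlgebraicIndependent k τ) {g : G} {f : E →ₐ[k] E}
    (hf : ∀ s, f (τ s) = τ (g • s)) (y : FractionRing (MvPolynomial σ k)) :
    rationalFunctionEval hτ (g • y) = f (rationalFunctionEval hτ y) := by
  suffices h : (rationalFunctionEval hτ).toRingHom.comp (MulSemiringAction.toRingHom G _ g) =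
      f.toRingHom.comp (rationalFunctionEval hτ).toRingHom from RingHom.congr_fun h y
  refine IsFractionRing.ringHom_ext (A := MvPolynomial σ k) fun p => ?_
  have aeval_comp : f (aeval τ p) = aeval (fun s => f (τ s)) p := by
    rw [← comp_aeval_apply]
  simp [smul_algebraMap_mvPolynomial, rationalFunctionEval_algebraMap, aeval_rename, aeval_comp, hf,
    Function.comp_def]

end RationalFunctions

section ResidueField

open IsLocalRing

theorem mem_maximalIdeal_iff_map_eq_zero {R k : Type*} [CommRing R] [IsLocalRing R] [Field k]
    {f : R →+* k} (hf : Function.Surjective f) {r : R} : r ∈ maximalIdeal R ↔ f r = 0 := by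
  rw [← ker_eq_maximalIdeal f hf, RingHom.mem_ker]

/-- The isomorphism of the residue field of `R` with `k` induced by a surjection `R → k`. -/
noncomputable def residueFieldEquivOfSurjective {R k : Type*} [CommRing R] [IsLocalRing R]
    [Field k] (f : R →+* k) (hf : Function.Surjective f) : ResidueField R ≃+* k :=
  (Ideal.quotEquivOfEq (ker_eq_maximalIdeal f hf).symm).trans
    (RingHom.quotientKerEquivOfSurjective hf)

end ResidueField

section EquivariantPlace

variable {F₀ L₀ A : Type*} [Field F₀] [Field L₀] [Algebra F₀ L₀] [Group A]

/-- A place of `L` over `F₀` with finite values in `L₀`, equivariant for `φ : Gal(L₀/F₀) → A`,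
encoded by a valuation ring and a residue map. Surjectivity of the residue map, which makes its
kernel the maximal ideal, is not part of the structure. -/
structure EquivariantPlace (φ : (L₀ ≃ₐ[F₀] L₀) →* A) (L : Type*) [Field L] [Algebra F₀ L]
    [MulSemiringAction A L] where
  valuationSubring : ValuationSubring L
  residue : valuationSubring →+* L₀
  smul_mem : ∀ g {y : L}, y ∈ valuationSubring → φ g • y ∈ valuationSubring
  residue_smul : ∀ g (y : valuationSubring), residue ⟨φ g • y, smul_mem g y.2⟩ = g (residue y)
  algebraMap_mem : ∀ c, algebraMap F₀ L c ∈ valuationSubring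
  residue_algebraMap : ∀ c, residue ⟨algebraMap F₀ L c, algebraMap_mem c⟩ = algebraMap F₀ L₀ c

namespace EquivariantPlace

variable {φ : (L₀ ≃ₐ[F₀] L₀) →* A} {L : Type*} [Field L] [Algebra F₀ L] [MulSemiringAction A L]

section OfHahnSeries

variable {Γ : Type*} [AddCommGroup Γ] [LinearOrder Γ] [IsOrderedAddMonoid Γ] (j : L →ₐ[F₀] L₀⟦Γ⟧)
  (hj : ∀ g y, j (φ g • y) = hahnMapAlgHom Γ (g : L₀ →ₐ[F₀] L₀) (j y))

/-- The place obtained by restricting the order valuation on Hahn series along an equivariant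
embedding. -/
noncomputable def ofHahnSeries : EquivariantPlace φ L where
  valuationSubring := (hahnIntegers Γ L₀).comap (j : L →+* L₀⟦Γ⟧)
  residue := (hahnResidue Γ L₀).comp ((j : L →+* L₀⟦Γ⟧).restrict _ _ fun _ hy => hy)
  smul_mem g y hy := by
    rw [ValuationSubring.mem_comap] at hy ⊢
    exact (hj g y).symm ▸ hahnMapAlgHom_mem_hahnIntegers _ hy
  residue_smul g y := congrArg (HahnSeries.coeff · 0) (hj g y)
  algebraMap_mem c := by
    rw [ValuationSubring.mem_comap]
    exact (j.commutes c).symm ▸ algebraMap_mem_hahnIntegers c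
  residue_algebraMap c := by
    refine (congrArg (HahnSeries.coeff · 0) (j.commutes c)).trans ?_
    simp [HahnSeries.algebraMap_apply]

variable {j}

theorem mem_ofHahnSeries {y : L} :
    y ∈ (ofHahnSeries j hj).valuationSubring ↔ j y ∈ hahnIntegers Γ L₀ :=
  Iff.rfl

theorem ofHahnSeries_residue (y : (ofHahnSeries j hj).valuationSubring) :
    (ofHahnSeries j hj).residue y = (j y).coeff 0 :=
  rfl

end OfHahnSeries

variable (P : EquivariantPlace φ L)

theorem smul_mem_iff (g : L₀ ≃ₐ[F₀] L₀) {y : L} :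
    φ g • y ∈ P.valuationSubring ↔ y ∈ P.valuationSubring := by
  refine ⟨fun h => ?_, P.smul_mem g⟩
  simpa [smul_smul, ← map_mul] using P.smul_mem g⁻¹ h

theorem residue_surjective {ι : Type*} (b : Module.Basis ι F₀ L₀)
    (hb : ∀ i, b i ∈ P.residue.range) : Function.Surjective P.residue := by
  rw [← RingHom.range_eq_top, eq_top_iff]
  intro y _
  rw [← b.linearCombination_repr y, Finsupp.linearCombination_apply]
  refine Subring.sum_mem _ fun i _ => ?_
  simp only [Algebra.smul_def]
  exact mul_mem ⟨_, P.residue_algebraMap _⟩ (hb i)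

/-- The restriction of a place to the fixed field of `A`. -/
noncomputable abbrev fixedValuationSubring : ValuationSubring (FixedPoints.subfield A L) :=
  P.valuationSubring.comap (algebraMap (FixedPoints.subfield A L) L)

section FixedField

variable [FiniteDimensional F₀ L₀] [IsGalois F₀ L₀]

theorem residue_mem_range_of_smul_eq {y : P.valuationSubring} (hy : ∀ g, φ g • (y : L) = y) :
    P.residue y ∈ (algebraMap F₀ L₀).range :=
  (IsGalois.mem_bot_iff_fixed _).mpr fun g => by
    rw [← P.residue_smul]
    exact congrArg P.residue (Subtype.ext (hy g))

/-- The residue map of a place restricted to the fixed field of `A`; by Galois descent it takes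
values in `F₀`. -/
noncomputable def fixedResidue : P.fixedValuationSubring →+* F₀ :=
  (RingHom.rangeRestrictFieldEquiv (algebraMap F₀ L₀)).symm.toRingHom.comp <|
    (P.residue.comp
      ((algebraMap (FixedPoints.subfield A L) L).restrict P.fixedValuationSubring
        P.valuationSubring fun _ hy => hy)).codRestrict (algebraMap F₀ L₀).range fun y =>
          P.residue_mem_range_of_smul_eq fun g => (y : FixedPoints.subfield A L).2 (φ g)

theorem algebraMap_fixedResidue (y : P.fixedValuationSubring) :
    algebraMap F₀ L₀ (P.fixedResidue y) = P.residue ⟨(y : FixedPoints.subfield A L), y.2⟩ :=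
  congrArg Subtype.val ((RingHom.rangeRestrictFieldEquiv (algebraMap F₀ L₀)).apply_symm_apply _)

theorem fixedResidue_surjective [SMulCommClass A F₀ L] : Function.Surjective P.fixedResidue := by
  intro c
  have fixed : algebraMap F₀ L c ∈ FixedPoints.subfield A L := fun a => smul_algebraMap a c
  refine ⟨⟨⟨algebraMap F₀ L c, fixed⟩, P.algebraMap_mem c⟩, (algebraMap F₀ L₀).injective ?_⟩
  rw [algebraMap_fixedResidue]
  exact P.residue_algebraMap c

end FixedField

variable {P}

theorem residue_eq_zero_of_residue_smul_eq_zero (hP : Function.Surjective P.residue) {a : A}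
    (ha : ∀ y, y ∈ P.valuationSubring → a • y ∈ P.valuationSubring) {y : P.valuationSubring}
    (hy : P.residue ⟨a • y, ha y y.2⟩ = 0) : P.residue y = 0 := by
  rw [← mem_maximalIdeal_iff_map_eq_zero hP] at hy ⊢
  exact fun h => hy (h.map ((MulSemiringAction.toRingHom A L a).restrict _ _ ha))

section ExtendedNormalBasis

variable [FiniteDimensional F₀ L₀] [IsGalois F₀ L₀] {t : L}
  (ht : ∀ a : A, a • t ∈ P.valuationSubring)
  (hres : ∀ a, P.residue ⟨a • t, ht a⟩ = extendedNormalBasis φ a)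

include hres in
theorem residue_surjective_of_extendedNormalBasis (hφ : Function.Injective φ) :
    Function.Surjective P.residue :=
  P.residue_surjective (IsGalois.normalBasis F₀ L₀) fun g =>
    ⟨⟨φ g • t, ht _⟩, (hres _).trans (extendedNormalBasis_apply hφ g)⟩

include hres in
theorem mem_range_of_smul_mem (hφ : Function.Injective φ) {a : A}
    (ha : ∀ y, y ∈ P.valuationSubring → a • y ∈ P.valuationSubring) : a ∈ φ.range := by
  by_contra hna
  have residue_smul_eq_zero : P.residue ⟨a • (1 : A) • t, ha _ (ht 1)⟩ = 0 := by
    simp only [one_smul]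
    exact (hres a).trans (extendedNormalBasis_of_notMem_range hna)
  exact extendedNormalBasis_one_ne_zero hφ <| (hres 1).symm.trans <|
    residue_eq_zero_of_residue_smul_eq_zero (y := ⟨(1 : A) • t, ht 1⟩)
      (residue_surjective_of_extendedNormalBasis ht hres hφ) ha residue_smul_eq_zero

include hres in
theorem eq_one_of_residue_smul_eq (hφ : Function.Injective φ) {a : A}
    (ha : ∀ y, y ∈ P.valuationSubring → a • y ∈ P.valuationSubring)
    (heq : P.residue ⟨a • t, ht a⟩ = P.residue ⟨(1 : A) • t, ht 1⟩) : a = 1 := by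
  obtain ⟨g, rfl⟩ := mem_range_of_smul_mem ht hres hφ ha
  rw [hres, hres, ← map_one φ, extendedNormalBasis_apply hφ, extendedNormalBasis_apply hφ] at heq
  rw [(IsGalois.normalBasis F₀ L₀).injective heq, map_one]

include hres in
theorem faithfulSMul (hφ : Function.Injective φ) : FaithfulSMul A L where
  eq_of_smul_eq_smul {a b} hab := by
    have smul_eq (y : L) : (b⁻¹ * a) • y = y := by rw [mul_smul, hab, inv_smul_smul]
    have : b⁻¹ * a = 1 := eq_one_of_residue_smul_eq ht hres hφ
      (fun y hy => (smul_eq y).symm ▸ hy) (by simp only [smul_eq, one_smul])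
    exact (inv_mul_eq_one.mp this).symm

include hres in
theorem eq_one_of_valuation_smul_sub_lt_one (hφ : Function.Injective φ) {a : A}
    (ha : ∀ y, y ∈ P.valuationSubring → a • y ∈ P.valuationSubring)
    (hlt : ∀ y ∈ P.valuationSubring, P.valuationSubring.valuation (a • y - y) < 1) : a = 1 := by
  refine eq_one_of_residue_smul_eq ht hres hφ ha ?_
  have hsurj := residue_surjective_of_extendedNormalBasis ht hres hφ
  rw [← sub_eq_zero, ← map_sub, ← mem_maximalIdeal_iff_map_eq_zero hsurj,
    ValuationSubring.valuation_lt_one_iff]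
  simpa using hlt ((1 : A) • t) (ht 1)

end ExtendedNormalBasis

end EquivariantPlace

end EquivariantPlace

theorem EquivariantPlace.nonempty_valuedRealization {F₀ L₀ A L : Type} [Field F₀] [Field L₀]
    [Algebra F₀ L₀] [FiniteDimensional F₀ L₀] [IsGalois F₀ L₀] [Group A] [Finite A]
    {φ : (L₀ ≃ₐ[F₀] L₀) →* A} (hφ : Function.Injective φ) [Field L] [Algebra F₀ L]
    [MulSemiringAction A L] [SMulCommClass A F₀ L] (P : EquivariantPlace φ L) {t : L}
    (ht : ∀ a : A, a • t ∈ P.valuationSubring)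
    (hres : ∀ a, P.residue ⟨a • t, ht a⟩ = extendedNormalBasis φ a) :
    Nonempty (ValuedRealization F₀ L₀ A φ) := by
  have : FaithfulSMul A L := faithfulSMul ht hres hφ
  have surj : Function.Surjective P.residue := residue_surjective_of_extendedNormalBasis ht hres hφ
  let e := FixedPoints.toAlgAutMulEquiv A L
  refine ⟨{
    F := FixedPoints.subfield A L
    L := L
    W := P.valuationSubring
    e := e.symm
    resL := residueFieldEquivOfSurjective P.residue surj
    resF := residueFieldEquivOfSurjective P.fixedResidue P.fixedResidue_surjective
    decomp := fun a => ⟨?_, ?_⟩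
    tame := fun σ hσ hlt => ?_ }⟩
  · rintro ⟨g, rfl⟩
    exact ⟨e (φ g), fun y => (P.smul_mem_iff g).symm, e.symm_apply_apply _⟩
  · rintro ⟨σ, hσ, rfl⟩
    obtain ⟨a, rfl⟩ := e.surjective σ
    rw [e.symm_apply_apply]
    exact mem_range_of_smul_mem ht hres hφ fun y => (hσ y).mp
  · obtain ⟨a, rfl⟩ := e.surjective σ
    rw [eq_one_of_valuation_smul_sub_lt_one ht hres hφ (fun y => (hσ y).mp) hlt, map_one]

section HahnCoordinates

open HahnSeries

variable {F₀ L₀ A Γ : Type*} [Field F₀] [Field L₀] [Algebra F₀ L₀] [FiniteDimensional F₀ L₀]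
  [IsGalois F₀ L₀] [Group A] [Fintype A] {φ : (L₀ ≃ₐ[F₀] L₀) →* A}

section OrderedMonoid

variable [AddCommMonoid Γ] [PartialOrder Γ]

/-- Writing `x` for the extended normal basis, this is the family
`b ↦ x_b + ∑ c, x_{b c⁻¹} S ^ γ_c` of Hahn series over `L₀`, in powers of `S`. The coefficientwise
action of `Gal(L₀/F₀)` permutes it through `φ`. -/
noncomputable def hahnCoordinate (φ : (L₀ ≃ₐ[F₀] L₀) →* A) (γ : A → Γ) (b : A) : L₀⟦Γ⟧ :=
  single 0 (extendedNormalBasis φ b) +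
    ∑ c, single (γ c) (extendedNormalBasis φ (b * c⁻¹))

theorem hahnCoordinate_coeff_zero {γ : A → Γ} (hγ : ∀ c, 0 < γ c) (b : A) :
    (hahnCoordinate φ γ b).coeff 0 = extendedNormalBasis φ b := by
  simp [hahnCoordinate, coeff_single_of_ne (hγ _).ne]

variable [IsOrderedCancelAddMonoid Γ]

theorem algebraicIndependent_hahnCoordinate (hφ : Function.Injective φ) {γ : A → Γ}
    (hγ : LinearIndependent ℕ γ) : AlgebraicIndependent F₀ (hahnCoordinate φ γ) := by
  classical
  have hunit := isUnit_extendedNormalBasisMatrix hφ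
  have hindep : AlgebraicIndependent L₀ (hahnCoordinate φ γ) := by
    convert algebraicIndependent_algebraMap_add_sum_smul (algebraicIndependent_hahnSeries_single hγ)
      (Matrix.mul_nonsing_inv _ ((Matrix.isUnit_iff_isUnit_det _).mp hunit))
      (extendedNormalBasis φ) using 1
    funext b
    simp [hahnCoordinate, extendedNormalBasisMatrix, HahnSeries.algebraMap_apply, C_apply,
      Algebra.smul_def]
  exact hindep.restrictScalars (algebraMap F₀ L₀).injective

theorem hahnMapAlgHom_hahnCoordinate (hφ : Function.Injective φ) (γ : A → Γ) (g : L₀ ≃ₐ[F₀] L₀)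
    (b : A) :
    hahnMapAlgHom Γ (g : L₀ →ₐ[F₀] L₀) (hahnCoordinate φ γ b) = hahnCoordinate φ γ (φ g * b) := by
  simp [hahnCoordinate, hahnMapAlgHom_single, extendedNormalBasis_map_mul hφ, mul_assoc]

end OrderedMonoid

theorem hahnCoordinate_mem_hahnIntegers [AddCommGroup Γ] [LinearOrder Γ] [IsOrderedAddMonoid Γ]
    {γ : A → Γ} (hγ : ∀ c, 0 ≤ γ c) (b : A) : hahnCoordinate φ γ b ∈ hahnIntegers Γ L₀ :=
  add_mem (single_mem_hahnIntegers le_rfl _) <|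
    sum_mem fun c _ => single_mem_hahnIntegers (hγ c) _

end HahnCoordinates

theorem nonempty_valuedRealization_of_linearIndependent {F₀ L₀ A Γ : Type} [Field F₀] [Field L₀]
    [Algebra F₀ L₀] [FiniteDimensional F₀ L₀] [IsGalois F₀ L₀] [Group A] [Finite A]
    {φ : (L₀ ≃ₐ[F₀] L₀) →* A} (hφ : Function.Injective φ) [AddCommGroup Γ] [LinearOrder Γ]
    [IsOrderedAddMonoid Γ] {γ : A → Γ} (hpos : ∀ c, 0 < γ c) (hγ : LinearIndependent ℕ γ) :
    Nonempty (ValuedRealization F₀ L₀ A φ) := by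
  have := Fintype.ofFinite A
  let := rationalFunctionPermAction A A F₀
  have : SMulCommClass A F₀ (FractionRing (MvPolynomial A F₀)) := smulCommClass_rationalFunction
  have hindep := algebraicIndependent_hahnCoordinate hφ hγ
  have hequiv (g : L₀ ≃ₐ[F₀] L₀) (y : FractionRing (MvPolynomial A F₀)) :
      rationalFunctionEval hindep (φ g • y) =
        hahnMapAlgHom Γ (g : L₀ →ₐ[F₀] L₀) (rationalFunctionEval hindep y) :=
    rationalFunctionEval_smul hindep (hahnMapAlgHom_hahnCoordinate hφ γ g) y
  let P := EquivariantPlace.ofHahnSeries (rationalFunctionEval hindep) hequiv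
  let t : FractionRing (MvPolynomial A F₀) := algebraMap (MvPolynomial A F₀) _ (MvPolynomial.X 1)
  have eval_smul (a : A) : rationalFunctionEval hindep (a • t) = hahnCoordinate φ γ a := by
    simp [t, smul_algebraMap_mvPolynomial, rationalFunctionEval_algebraMap]
  have ht (a : A) : a • t ∈ P.valuationSubring := by
    rw [EquivariantPlace.mem_ofHahnSeries, eval_smul]
    exact hahnCoordinate_mem_hahnIntegers (fun c => (hpos c).le) a
  refine P.nonempty_valuedRealization hφ ht fun a => ?_
  rw [EquivariantPlace.ofHahnSeries_residue, eval_smul, hahnCoordinate_coeff_zero hpos]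

theorem stmt9 (F₀ L₀ : Type) [Field F₀] [Field L₀] [Algebra F₀ L₀]
    [FiniteDimensional F₀ L₀] [IsGalois F₀ L₀]
    (A : Type) [Group A] [Finite A]
    (φ : (L₀ ≃ₐ[F₀] L₀) →* A) (hφ : Function.Injective φ) :
    Nonempty (ValuedRealization F₀ L₀ A φ) := by
  obtain ⟨γ, hpos, hγ⟩ := exists_pos_linearIndependent_real A
  exact nonempty_valuedRealization_of_linearIndependent hφ hpos (hγ.restrict_scalars' ℕ)
end

section
/- Let (L, w)/(F, v) be a tame unramified finite Galois extension of valued fields with infinite residue field Fv. Then there is a primitive element x ∈ L with L = F(x), whose minimal polynomial f over F has coefficients in O_v, such that the reduction x̄ ∈ Lw is a primitive element for Lw/Fv, the reduction f̄ ∈ Fv[X] is a product of minimal polynomials of pairwise non-conjugate primitive elements of the Galois extension Lw/Fv, and f'(x) ∈ O_wˣ. -/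
/-!
Let `𝒪` be the valuation ring of `v` and `A` its integral closure in `L`. For `z` with `w z ≤ 1`,
an infinite residue field provides `c ∈ 𝒪` whose residue avoids those of all conjugates of `z`, and
then `(z - c)⁻¹` lies in `A`. Hence `A` surjects onto the residue field of `w`, and an automorphism
that is trivial on `A` modulo the maximal ideal of `w` lies in the inertia group, so it is the
identity. For `σ ≠ τ` the elements of `A` not separated by `σ` and `τ` thus form a proper
`𝒪`-submodule, and finitely many proper submodules do not cover `A` (again since the residue field
is infinite). An `x ∈ A` outside all of them has conjugates with pairwise distinct residues. Its
different `f'(x)`, a product of differences of conjugates, is a unit of `A`, so `A = 𝒪[x]` by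
trace duality, and every conjugate of `x` generates the residue field of `w`.
-/

section Unramified

open IsLocalRing Polynomial IntermediateField Valuation.HasExtension

theorem exists_forall_notMem_of_infinite_residueField {R M ι : Type*} [CommRing R] [IsLocalRing R]
    [Infinite (ResidueField R)] [AddCommGroup M] [Module R M] [Finite ι] (p : ι → Submodule R M)
    (hp : ∀ i, p i ≠ ⊤) : ∃ x, ∀ i, x ∉ p i := by
  -- By B. H. Neumann, some `p i` has finite index, but for `x ∉ p i` the multiples of `x` by
  -- representatives of the residue field are pairwise distinct modulo `p i`.
  by_contra! hcover
  have := Fintype.ofFinite ι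
  obtain ⟨i, -, hi⟩ := Submodule.exists_finiteIndex_of_cover (p := p) (s := Finset.univ)
    (Set.eq_univ_of_forall fun x => by simpa using hcover x)
  obtain ⟨x, hx⟩ : ∃ x, x ∉ p i := by simpa [Submodule.eq_top_iff'] using hp i
  have hsmul (r : R) (hr : r • x ∈ p i) : residue R r = 0 := by
    rw [residue_eq_zero_iff, mem_maximalIdeal, mem_nonunits_iff]
    exact fun hu => hx ((Submodule.smul_mem_iff_of_isUnit _ hu).1 hr)
  have : Finite (M ⧸ p i) := AddSubgroup.finite_quotient_of_finiteIndex
  have hinj : Function.Injective fun e : ResidueField R =>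
      (p i).mkQ (Function.surjInv residue_surjective e • x) := by
    intro e e' h
    rw [← sub_eq_zero, ← map_sub, ← sub_smul, Submodule.mkQ_apply,
      Submodule.Quotient.mk_eq_zero] at h
    simpa only [map_sub, Function.surjInv_eq, sub_eq_zero] using hsmul _ h
  exact not_finite_iff_infinite.2 ‹_› (Finite.of_injective _ hinj)

theorem aeval_derivative_minpoly_mul_mem_adjoin {R K L : Type*} [CommRing R] [IsDomain R]
    [IsIntegrallyClosed R] [Field K] [Algebra R K] [IsFractionRing R K] [Field L] [Algebra K L]
    [Algebra R L] [IsScalarTower R K L] [FiniteDimensional K L] [Algebra.IsSeparable K L]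
    {x b : L} (hx : IsIntegral R x) (hKx : K⟮x⟯ = ⊤) (hb : IsIntegral R b) :
    aeval x (derivative (minpoly K x)) * b ∈ Algebra.adjoin R {x} := by
  have hadjoin : Algebra.adjoin K {x} = ⊤ := by
    rw [← adjoin_simple_toSubalgebra_of_isAlgebraic (Algebra.IsAlgebraic.isAlgebraic x), hKx,
      top_toSubalgebra]
  have hdual : b ∈ (Algebra.traceForm K L).dualSubmodule
      (Subalgebra.toSubmodule (Algebra.adjoin R {x})) := fun y hy => by
    have hy : IsIntegral R y := adjoin_le_integralClosure hx hy
    rw [Submodule.mem_one, Algebra.traceForm_apply]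
    exact IsIntegrallyClosed.isIntegral_iff.1 (Algebra.isIntegral_trace (hb.mul hy))
  rw [traceForm_dualSubmodule_adjoin R K hadjoin hx] at hdual
  obtain ⟨y, hy, rfl⟩ := hdual
  have hne := (Algebra.IsSeparable.isSeparable K x).aeval_derivative_ne_zero (minpoly.aeval K x)
  simpa [mul_inv_cancel_left₀ hne] using! hy

theorem adjoin_simple_eq_top_of_forall_algEquiv_ne {F L : Type*} [Field F] [Field L] [Algebra F L]
    [FiniteDimensional F L] [IsGalois F L] {x : L} (hx : ∀ σ : L ≃ₐ[F] L, σ ≠ 1 → σ x ≠ x) :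
    F⟮x⟯ = ⊤ := by
  refine (Field.primitive_element_iff_algHom_eq_of_eval F L (IsGalois.splits F) x
    (AlgHom.id F L)).2 fun φ hφ => ?_
  obtain ⟨σ, rfl⟩ := (Algebra.IsAlgebraic.algEquivEquivAlgHom F L).surjective φ
  rw [not_imp_not.1 (hx σ) hφ.symm]
  rfl

variable {F L Γ Δ : Type*} [Field F] [Field L] [Algebra F L] [LinearOrderedCommGroupWithZero Γ]
  [LinearOrderedCommGroupWithZero Δ] {v : Valuation F Γ} {w : Valuation L Δ}

theorem valuation_aeval_derivative_minpoly_eq_one [IsGalois F L] {x : L}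
    (hx : ∀ σ : L ≃ₐ[F] L, σ ≠ 1 → w (σ x - x) = 1) :
    w (aeval x (derivative (minpoly F x))) = 1 := by
  classical
  have hint : IsIntegral F x := IsGalois.integral F x
  have hroot : x ∈ (minpoly F x).aroots L := (isConjRoot_iff_mem_minpoly_aroots hint).1 .refl
  have hnodup : ((minpoly F x).aroots L).Nodup :=
    nodup_roots (Separable.map (Algebra.IsSeparable.isSeparable F x))
  rw [← eval_map_algebraMap, ← derivative_map, (IsGalois.splits F x).eval_root_derivative
    ((minpoly.monic hint).map _) hroot, map_multiset_prod, Multiset.map_map]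
  refine Multiset.prod_eq_one fun _ hg => ?_
  obtain ⟨y, hy, rfl⟩ := Multiset.mem_map.1 hg
  obtain ⟨hyx, hy⟩ := hnodup.mem_erase_iff.1 hy
  obtain ⟨σ, rfl⟩ := isConjRoot_iff_exists_algEquiv.1
    ((isConjRoot_iff_mem_minpoly_aroots hint).2 hy).symm
  rw [Function.comp_apply, w.map_sub_swap]
  exact hx σ (by rintro rfl; exact hyx rfl)

variable [v.HasExtension w]

theorem exists_forall_one_le_valuation_sub_algebraMap [Infinite (ResidueField v.valuationSubring)]
    {ι : Type*} [Finite ι] (y : ι → L) :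
    ∃ c : v.valuationSubring, ∀ i, 1 ≤ w (y i - algebraMap F L c) := by
  let lift : ResidueField v.valuationSubring → v.valuationSubring :=
    Function.surjInv residue_surjective
  by_contra! hnear
  choose i hi using fun e => hnear (lift e)
  obtain ⟨e, e', hne, hee'⟩ := Finite.exists_ne_map_eq_of_infinite i
  have hlt : w (algebraMap F L (lift e - lift e' : v.valuationSubring)) < 1 := by
    simpa [hee'] using w.map_sub_lt (hi e') (hi e)
  rw [val_map_lt_one_iff v, ← Valuation.mem_maximalIdeal_iff, ← residue_eq_zero_iff, map_sub,
    Function.surjInv_eq residue_surjective, Function.surjInv_eq residue_surjective,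
    sub_eq_zero] at hlt
  exact hne hlt

theorem valuation_le_one_of_isIntegral {a : L} (ha : IsIntegral v.valuationSubring a) : w a ≤ 1 :=
  (Valuation.valuationSubring.integers w).isIntegral_iff_v_le_one.1
    (ha.tower_top (A := w.valuationSubring))

theorem isIntegral_of_forall_valuation_algEquiv_le_one [Normal F L] {a : L}
    (ha : ∀ σ : L ≃ₐ[F] L, w (σ a) ≤ 1) : IsIntegral v.valuationSubring a := by
  have hint : IsIntegral F a := Normal.isIntegral ‹_› a
  have hrange := (Normal.splits ‹_› a).mem_lift_of_roots_mem_range ((minpoly.monic hint).map _)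
    w.valuationSubring.subtype fun y hy => by
      obtain ⟨σ, rfl⟩ := isConjRoot_iff_exists_algEquiv.1
        ((isConjRoot_iff_mem_minpoly_aroots hint).2 hy).symm
      exact ⟨⟨σ a, ha σ⟩, rfl⟩
  have hcoeff (k : ℕ) : v ((minpoly F a).coeff k) ≤ 1 := by
    obtain ⟨y, hy⟩ := (lifts_iff_coeff_lifts _).1 hrange k
    rw [← val_map_le_one_iff v w, ← coeff_map, ← hy]
    exact y.2
  have hlift : minpoly F a ∈ lifts (algebraMap v.valuationSubring F) :=
    (lifts_iff_coeff_lifts _).2 fun k => ⟨⟨_, hcoeff k⟩, rfl⟩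
  obtain ⟨q, hq, -, hmonic⟩ := lifts_and_natDegree_eq_and_monic hlift (minpoly.monic hint)
  refine ⟨q, hmonic, ?_⟩
  rw [IsScalarTower.algebraMap_eq v.valuationSubring F L, ← eval₂_map, hq, ← aeval_def,
    minpoly.aeval]

theorem exists_isIntegral_valuation_one_sub_mul_lt_one {u : L}
    (hu : IsIntegral v.valuationSubring u) (hwu : w u = 1) :
    ∃ b, IsIntegral v.valuationSubring b ∧ w (1 - b * u) < 1 := by
  let A := integralClosure v.valuationSubring L
  let φ : A →+* w.valuationSubring :=
    A.val.toRingHom.codRestrict _ fun a => valuation_le_one_of_isIntegral a.2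
  have hφ (a : A) : a ∈ (maximalIdeal w.valuationSubring).comap φ ↔ w a < 1 :=
    Valuation.mem_maximalIdeal_iff _ w
  have hmax : ((maximalIdeal w.valuationSubring).comap φ).IsMaximal := by
    refine Ideal.isMaximal_of_isIntegral_of_isMaximal_comap (R := v.valuationSubring) _ ?_
    have : (maximalIdeal v.valuationSubring).IsMaximal := inferInstance
    rwa [← maximalIdeal_comap_algebraMap_eq_maximalIdeal v w] at this
  obtain ⟨b, m, hm, hbm⟩ := hmax.exists_inv (x := ⟨u, hu⟩) (by rw [hφ]; exact hwu.not_lt)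
  have hm_eq : (m : L) = 1 - b * u := eq_sub_of_add_eq' (congrArg Subtype.val hbm)
  exact ⟨b, b.2, hm_eq ▸ (hφ m).1 hm⟩

section ResidueApproximation

variable [FiniteDimensional F L] [Normal F L] [Infinite (ResidueField v.valuationSubring)]

theorem exists_valuation_sub_algebraMap_eq_one_and_isIntegral_inv {z : L} (hz : w z ≤ 1) :
    ∃ c : v.valuationSubring, w (z - algebraMap F L c) = 1 ∧
      IsIntegral v.valuationSubring (z - algebraMap F L c)⁻¹ := by
  obtain ⟨c, hc⟩ := exists_forall_one_le_valuation_sub_algebraMap (v := v) (w := w)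
    fun σ : L ≃ₐ[F] L => σ z
  refine ⟨c, (w.map_sub_le hz ((val_map_le_one_iff v w _).2 c.2)).antisymm (hc 1),
    isIntegral_of_forall_valuation_algEquiv_le_one (w := w) fun σ => ?_⟩
  rw [map_inv₀, map_sub, AlgEquiv.commutes, map_inv₀]
  exact inv_le_one_of_one_le₀ (hc σ)

theorem exists_isIntegral_valuation_sub_lt_one {z : L} (hz : w z ≤ 1) :
    ∃ a, IsIntegral v.valuationSubring a ∧ w (z - a) < 1 := by
  obtain ⟨c, hwc, hu⟩ := exists_valuation_sub_algebraMap_eq_one_and_isIntegral_inv (v := v) hz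
  obtain ⟨b, hb, hbu⟩ := exists_isIntegral_valuation_one_sub_mul_lt_one (w := w) hu
    (by rw [map_inv₀, hwc, inv_one])
  refine ⟨b + algebraMap F L c, hb.add (isIntegral_algebraMap (x := c)), ?_⟩
  have hne : z - algebraMap F L c ≠ 0 := w.ne_zero_iff.1 (hwc ▸ one_ne_zero)
  rwa [show z - (b + algebraMap F L c) =
    (z - algebraMap F L c) * (1 - b * (z - algebraMap F L c)⁻¹) by field_simp; ring,
    map_mul, hwc, one_mul]

theorem valuation_algEquiv_sub_lt_one_of_forall_isIntegral {σ : L ≃ₐ[F] L}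
    (hσ : ∀ a, IsIntegral v.valuationSubring a → w (σ a - a) < 1) {z : L} (hz : w z ≤ 1) :
    w (σ z - z) < 1 := by
  obtain ⟨c, hwd, hu⟩ := exists_valuation_sub_algebraMap_eq_one_and_isIntegral_inv (v := v) hz
  set d := z - algebraMap F L c with hd
  have hwd_inv : w d⁻¹ = 1 := by rw [map_inv₀, hwd, inv_one]
  have hwσd : w (σ d) = 1 := by
    have := w.map_eq_of_sub_lt ((hσ _ hu).trans_eq hwd_inv.symm)
    rwa [hwd_inv, map_inv₀, map_inv₀, inv_eq_one] at this
  have hdne : d ≠ 0 := w.ne_zero_iff.1 (hwd ▸ one_ne_zero)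
  have hσdne : σ d ≠ 0 := w.ne_zero_iff.1 (hwσd ▸ one_ne_zero)
  have hsub : σ z - z = (d⁻¹ - σ d⁻¹) * (σ d * d) := by
    rw [map_inv₀]
    field_simp
    simp [hd]
  rw [hsub, map_mul, map_mul, hwσd, hwd, one_mul, mul_one, w.map_sub_swap]
  exact hσ _ hu

theorem valuation_algEquiv_le_one_iff_of_forall_isIntegral {σ : L ≃ₐ[F] L}
    (hσ : ∀ a, IsIntegral v.valuationSubring a → w (σ a - a) < 1) (z : L) :
    w z ≤ 1 ↔ w (σ z) ≤ 1 := by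
  have hle {τ : L ≃ₐ[F] L} (hτ : ∀ a, IsIntegral v.valuationSubring a → w (τ a - a) < 1) {y : L}
      (hy : w y ≤ 1) : w (τ y) ≤ 1 := by
    simpa using w.map_add_le (valuation_algEquiv_sub_lt_one_of_forall_isIntegral hτ hy).le hy
  have hσsymm (a : L) (ha : IsIntegral v.valuationSubring a) : w (σ.symm a - a) < 1 := by
    rw [w.map_sub_swap]
    simpa only [σ.apply_symm_apply] using hσ (σ.symm a) (ha.map σ.symm)
  exact ⟨hle hσ, fun hz => by simpa only [σ.symm_apply_apply] using hle hσsymm hz⟩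

end ResidueApproximation

/-- The equalizer of the reductions of `σ` and `τ` modulo the maximal ideal of `w`, restricted to
the integral closure of the valuation ring of `v`: the elements that a generator separating `σ`
from `τ` has to avoid. -/
def residueEqualizer (v : Valuation F Γ) (w : Valuation L Δ) [v.HasExtension w] (σ τ : L ≃ₐ[F] L) :
    Submodule v.valuationSubring (integralClosure v.valuationSubring L) where
  carrier := {a | w (σ a - τ a) < 1}
  add_mem' {a b} ha hb := by
    simpa [add_sub_add_comm] using w.map_add_lt ha hb
  zero_mem' := by simp
  smul_mem' c a ha := by
    have hc : w (algebraMap F L c) ≤ 1 := (val_map_le_one_iff v w _).2 c.2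
    simpa [Algebra.smul_def, IsScalarTower.algebraMap_apply v.valuationSubring F L, ← mul_sub]
      using mul_lt_of_le_one_of_lt hc ha

theorem exists_isIntegral_forall_valuation_sub_eq_one [FiniteDimensional F L]
    [Infinite (ResidueField v.valuationSubring)]
    (hinertia : ∀ σ : L ≃ₐ[F] L,
      (∀ a, IsIntegral v.valuationSubring a → w (σ a - a) < 1) → σ = 1) :
    ∃ x, IsIntegral v.valuationSubring x ∧ ∀ σ τ : L ≃ₐ[F] L, σ ≠ τ → w (σ x - τ x) = 1 := by
  have hproper (q : {q : (L ≃ₐ[F] L) × (L ≃ₐ[F] L) // q.1 ≠ q.2}) :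
      residueEqualizer v w q.1.1 q.1.2 ≠ ⊤ := by
    obtain ⟨⟨σ, τ⟩, hne⟩ := q
    refine fun htop => hne (mul_inv_eq_one.1 (hinertia (σ * τ⁻¹) fun a ha => ?_))
    have hmem : w (σ (τ.symm a) - τ (τ.symm a)) < 1 :=
      htop.ge (Submodule.mem_top (x := ⟨τ.symm a, ha.map τ.symm⟩))
    rwa [τ.apply_symm_apply] at hmem
  obtain ⟨x, hx⟩ := exists_forall_notMem_of_infinite_residueField _ hproper
  have hle (σ : L ≃ₐ[F] L) : w (σ x) ≤ 1 := valuation_le_one_of_isIntegral (v := v) (x.2.map σ)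
  exact ⟨x, x.2, fun σ τ hne =>
    (w.map_sub_le (hle σ) (hle τ)).antisymm (not_lt.1 (hx ⟨(σ, τ), hne⟩))⟩

theorem mem_adjoin_of_forall_valuation_sub_eq_one [FiniteDimensional F L] [IsGalois F L]
    {x a : L} (hx : IsIntegral v.valuationSubring x)
    (hsep : ∀ σ τ : L ≃ₐ[F] L, σ ≠ τ → w (σ x - τ x) = 1) (ha : IsIntegral v.valuationSubring a) :
    a ∈ Algebra.adjoin v.valuationSubring {x} := by
  set d := aeval x (derivative (minpoly F x)) with hd
  have hwd (σ : L ≃ₐ[F] L) : w (σ d) = 1 := by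
    rw [hd, ← aeval_algHom_apply, ← minpoly.algEquiv_eq σ x]
    refine valuation_aeval_derivative_minpoly_eq_one fun τ hτ => ?_
    exact hsep (τ * σ) σ (by simpa using hτ)
  have hinv : IsIntegral v.valuationSubring d⁻¹ :=
    isIntegral_of_forall_valuation_algEquiv_le_one (w := w) fun σ => by
      rw [map_inv₀, map_inv₀, hwd, inv_one]
  have hprim : F⟮x⟯ = ⊤ := adjoin_simple_eq_top_of_forall_algEquiv_ne fun σ hσ heq => by
    simpa [heq] using hsep σ 1 hσ
  have hdne : d ≠ 0 := w.ne_zero_iff.1 ((hwd 1).trans_ne one_ne_zero)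
  simpa only [← hd, mul_inv_cancel_left₀ hdne] using
    aeval_derivative_minpoly_mul_mem_adjoin hx hprim (hinv.mul ha)

theorem exists_valuation_sub_aeval_lt_one [FiniteDimensional F L] [IsGalois F L]
    [Infinite (ResidueField v.valuationSubring)] {x z : L} (hx : IsIntegral v.valuationSubring x)
    (hsep : ∀ σ τ : L ≃ₐ[F] L, σ ≠ τ → w (σ x - τ x) = 1) (hz : w z ≤ 1) :
    ∃ p : v.valuationSubring[X], w (z - aeval x p) < 1 := by
  obtain ⟨a, ha, hza⟩ := exists_isIntegral_valuation_sub_lt_one (v := v) hz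
  have hmem := mem_adjoin_of_forall_valuation_sub_eq_one hx hsep ha
  rw [Algebra.adjoin_singleton_eq_range_aeval] at hmem
  obtain ⟨p, rfl⟩ := hmem
  exact ⟨p, hza⟩

end Unramified

theorem hasExtension_valuation_of_eq_comap {F L : Type*} [Field F] [Field L] [Algebra F L]
    {O : ValuationSubring F} {W : ValuationSubring L} (hO : O = W.comap (algebraMap F L)) :
    O.valuation.HasExtension W.valuation :=
  .ofComapInteger <| by
    simp only [ValuationSubring.integer_valuation, hO]
    rfl

set_option maxHeartbeats 1000000 in
theorem stmt10 {F L : Type*} [Field F] [Field L] [Algebra F L]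
    [FiniteDimensional F L] [IsGalois F L]
    (W : ValuationSubring L) (O : ValuationSubring F)
    (hO : O = W.comap (algebraMap F L))
    -- the extension is tame unramified: trivial inertia subgroup:
    (htame : ∀ σ : L ≃ₐ[F] L, (∀ x : L, x ∈ W ↔ σ x ∈ W) →
      (∀ x : L, x ∈ W → W.valuation (σ x - x) < 1) → σ = 1)
    -- the residue field of `(F, v)` is infinite:
    (hinf : Infinite (IsLocalRing.ResidueField ↥O)) :
    -- there is a primitive element `x` for `L/F` with minimal polynomial `f` over `O`
    -- such that the reduction of `x` is primitive for the residue extension, the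
    -- reduction of `f` is the product of the minimal polynomials of pairwise
    -- non-conjugate primitive elements (in particular it is separable), and
    -- `f'(x)` is a unit of `O_w`:
    ∃ x : L, IntermediateField.adjoin F {x} = ⊤ ∧
      (∀ k : ℕ, (minpoly F x).coeff k ∈ O) ∧
      -- distinct roots of `f` have distinct (unit-distance) reductions, i.e. the
      -- reduction of `f` is separable:
      (∀ σ τ : L ≃ₐ[F] L, σ x ≠ τ x → W.valuation (σ x - τ x) = 1) ∧
      -- the reduction of every root of `f` is a primitive element for the residue
      -- extension `Lw/Fv`:
      (∀ σ : L ≃ₐ[F] L, ∀ z : L, z ∈ W → ∃ p : Polynomial F,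
        (∀ k : ℕ, p.coeff k ∈ O) ∧ W.valuation (z - Polynomial.aeval (σ x) p) < 1) ∧
      -- `f'(x)` is a unit of the valuation ring of `w`:
      W.valuation (Polynomial.aeval x (Polynomial.derivative (minpoly F x))) = 1 := by
  have := hasExtension_valuation_of_eq_comap hO
  have : Infinite (IsLocalRing.ResidueField O.valuation.valuationSubring) := by
    rwa [O.valuationSubring_valuation]
  have hmem (r : O.valuation.valuationSubring) : algebraMap _ F r ∈ O :=
    (O.valuation_le_one_iff _).1 r.2
  obtain ⟨x, hx, hsep⟩ := exists_isIntegral_forall_valuation_sub_eq_one (v := O.valuation)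
    (w := W.valuation) fun σ hσ => htame σ
      (fun z => by simpa only [W.valuation_le_one_iff] using
        valuation_algEquiv_le_one_iff_of_forall_isIntegral hσ z)
      fun z hz => valuation_algEquiv_sub_lt_one_of_forall_isIntegral hσ
        ((W.valuation_le_one_iff z).2 hz)
  refine ⟨x, ?primitive, fun k => ?coeff, fun σ τ hne => ?separated, fun σ z hz => ?residue,
    ?derivative⟩
  case primitive =>
    exact adjoin_simple_eq_top_of_forall_algEquiv_ne fun σ hσ heq => by
      simpa [heq] using hsep σ 1 hσ
  case coeff =>
    rw [minpoly.isIntegrallyClosed_eq_field_fractions' F hx, Polynomial.coeff_map]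
    exact hmem _
  case separated => exact hsep σ τ fun h => hne (h ▸ rfl)
  case residue =>
    obtain ⟨p, hp⟩ := exists_valuation_sub_aeval_lt_one (hx.map σ)
      (fun ρ τ hne => hsep (ρ * σ) (τ * σ) (by simpa using hne)) ((W.valuation_le_one_iff z).2 hz)
    refine ⟨p.map (algebraMap _ F), fun k => ?_, by rwa [Polynomial.aeval_map_algebraMap]⟩
    rw [Polynomial.coeff_map]
    exact hmem _
  case derivative => exact valuation_aeval_derivative_minpoly_eq_one fun σ hσ => hsep σ 1 hσ
end

section
/- Let (F, v) be a non-trivially valued field, L/F a finite Galois extension, K/F a subextension with [K : F] = r, and assume v has at most r prolongations to L. Then K is a decomposition subfield of L/F with respect to v if and only if there is a monic polynomial h(X) = X^r + h_{r−1}X^{r−1} + ⋯ + h₀ ∈ F[X], irreducible over F, with a root in K, such that h₀, …, h_{r−2} and 1 + h_{r−1} all lie in the maximal ideal M_v. -/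
/-!
Distinct conjugates of a prolongation `W` of `v` are incomparable, so some `x` is congruent to `1`
modulo `M_W` and lies in the maximal ideals of the other conjugates. To find it, fix a conjugate `V`
and `c` with `c ∉ W` and `c ∈ M_V`; along the Sylvester sequence `sₙ` of `c`, the elements
`1 - 1 / sₙ` separate `W` from `V`, and for large `n` they are integral at each of the other
conjugates. Multiply over all `V`.

If `Gal(L/K)` is the stabilizer of `W`, let `y` be the product of the translates of `x` under it.
Then `y` is congruent to `1`, its other conjugates lie in `M_W`, and its stabilizer is that of `W`.
Thus `K = F(y)`, and the minimal polynomial of `y` is congruent to `X^(r-1) (X - 1)`.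

Conversely, let `h` be congruent to `X^(r-1) (X - 1)`. At every prolongation exactly one root of `h`
is congruent to `1`, and after conjugating `W` this root is the given `y ∈ K`. By uniqueness the
stabilizer of `W` fixes `y`, so it is contained in `Gal(L/K)`. Its index is the number of conjugates
of `W`, which is at most `r = [K : F]`, so the two groups are equal.
-/

section Valuation

variable {R Γ₀ : Type*} [LinearOrderedCommGroupWithZero Γ₀]

theorem valuation_eq_one_of_sub_one_lt_one [Ring R] (v : Valuation R Γ₀) {x : R}
    (hx : v (x - 1) < 1) : v x = 1 := by
  simpa using v.map_one_add_of_lt hx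

theorem valuation_mul_sub_one_lt_one [Ring R] (v : Valuation R Γ₀) {x y : R}
    (hx : v (x - 1) < 1) (hy : v (y - 1) < 1) : v (x * y - 1) < 1 := by
  rw [show x * y - 1 = x * (y - 1) + (x - 1) by noncomm_ring]
  refine v.map_add_lt ?_ hx
  rwa [map_mul, valuation_eq_one_of_sub_one_lt_one v hx, one_mul]

theorem valuation_prod_sub_one_lt_one [CommRing R] (v : Valuation R Γ₀) {ι : Type*}
    {s : Finset ι} {f : ι → R} (hf : ∀ i ∈ s, v (f i - 1) < 1) : v (∏ i ∈ s, f i - 1) < 1 :=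
  Finset.prod_induction f (fun x ↦ v (x - 1) < 1) (fun _ _ ↦ valuation_mul_sub_one_lt_one v)
    (by simp) hf

theorem valuation_prod_lt_one [CommRing R] (v : Valuation R Γ₀) {ι : Type*} {s : Finset ι}
    {f : ι → R} {i : ι} (hi : i ∈ s) (hlt : v (f i) < 1) (hle : ∀ j ∈ s, v (f j) ≤ 1) :
    v (∏ j ∈ s, f j) < 1 := by
  classical
  rw [map_prod, ← Finset.mul_prod_erase s _ hi]
  exact mul_lt_one_of_lt_of_le hlt
    (Finset.prod_le_one' fun j hj ↦ hle j (Finset.mem_of_mem_erase hj))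

/-- The map `x ↦ x² - x + 1`. Its iterates `s₁, s₂, …` at `c` form a Sylvester sequence:
`sₙ₊₁ = 1 + c (c - 1) s₁ ⋯ sₙ`, so no valuation with `v c ≤ 1` has `v sₙ < 1` for two values of
`n`. -/
def sylvesterStep [Ring R] (x : R) : R := x * (x - 1) + 1

theorem valuation_sylvesterStep_iterate_succ_sub_one_lt_one [Ring R] (v : Valuation R Γ₀) {x : R}
    (hx : v x < 1) (n : ℕ) : v (sylvesterStep^[n + 1] x - 1) < 1 := by
  induction n with
  | zero =>
    simpa [sylvesterStep, v.map_sub_swap x, v.map_one_sub_of_lt hx] using hx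
  | succ n ih =>
    rw [Function.iterate_succ_apply', sylvesterStep, add_sub_cancel_right, map_mul,
      valuation_eq_one_of_sub_one_lt_one v ih, one_mul]
    exact ih

theorem valuation_sylvesterStep_iterate_le_one [Ring R] (v : Valuation R Γ₀) {x : R}
    (hx : v x ≤ 1) (n : ℕ) : v (sylvesterStep^[n] x) ≤ 1 :=
  Function.Iterate.rec (fun y ↦ v y ≤ 1) hx
    (fun y hy ↦ v.map_add_le (by simpa using mul_le_one' hy (v.map_sub_le hy v.map_one.le))
      v.map_one.le) n

theorem one_lt_valuation_sylvesterStep_iterate [Ring R] (v : Valuation R Γ₀) {x : R}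
    (hx : 1 < v x) (n : ℕ) : 1 < v (sylvesterStep^[n] x) := by
  refine Function.Iterate.rec (fun y ↦ 1 < v y) hx (fun y hy ↦ ?_) n
  have hsub : v (y - 1) = v y := v.map_sub_eq_of_lt_left (by simpa using hy)
  have hmul : 1 < v (y * (y - 1)) := by simpa [hsub] using one_lt_mul'' hy hy
  rwa [sylvesterStep, v.map_add_eq_of_lt_left (by simpa using hmul)]

open Filter in
theorem eventually_valuation_sylvesterStep_iterate_eq_one [Ring R] (v : Valuation R Γ₀) {x : R}
    (hx : v x ≤ 1) : ∀ᶠ n in atTop, v (sylvesterStep^[n] x) = 1 := by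
  by_cases h : ∃ n, v (sylvesterStep^[n] x) < 1
  · obtain ⟨n, hn⟩ := h
    filter_upwards [eventually_ge_atTop (n + 1)] with m hm
    obtain ⟨k, rfl⟩ := Nat.exists_eq_add_of_le hm
    rw [show n + 1 + k = k + 1 + n by lia, Function.iterate_add_apply]
    exact valuation_eq_one_of_sub_one_lt_one v
      (valuation_sylvesterStep_iterate_succ_sub_one_lt_one v hn k)
  · push Not at h
    exact .of_forall fun n ↦ (valuation_sylvesterStep_iterate_le_one v hx n).antisymm (h n)

end Valuation

section Approximation

variable {L : Type*} [Field L]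

theorem exists_one_lt_valuation_and_valuation_lt_one {W V : ValuationSubring L}
    (hWV : ¬ W ≤ V) (hVW : ¬ V ≤ W) : ∃ c : L, 1 < W.valuation c ∧ V.valuation c < 1 := by
  obtain ⟨a, haW, haV⟩ := SetLike.not_le_iff_exists.1 hWV
  obtain ⟨b, hbV, hbW⟩ := SetLike.not_le_iff_exists.1 hVW
  rw [← ValuationSubring.valuation_le_one_iff] at haW haV hbW hbV
  rw [not_le] at haV hbW
  have ha : a ≠ 0 := by
    rintro rfl
    simp at haV
  refine ⟨b / a, ?_, ?_⟩
  · rw [map_div₀, one_lt_div₀ (by simpa [zero_lt_iff] using ha)]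
    exact haW.trans_lt hbW
  · rw [map_div₀, div_lt_one₀ (zero_lt_one.trans haV)]
    exact hbV.trans_lt haV

open Filter in
theorem exists_valuation_sub_one_lt_one_and_lt_one_of_forall_mem {W V : ValuationSubring L}
    (hWV : ¬ W ≤ V) (hVW : ¬ V ≤ W) {ι : Type*} (s : Finset ι) (A : ι → ValuationSubring L) :
    ∃ x : L, W.valuation (x - 1) < 1 ∧ V.valuation x < 1 ∧ ∀ i ∈ s, x ∈ A i := by
  obtain ⟨c, hWc, hVc⟩ := exists_one_lt_valuation_and_valuation_lt_one hWV hVW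
  have hunit : ∀ᶠ n in atTop, ∀ i ∈ s, (A i).valuation c ≤ 1 →
      (A i).valuation (sylvesterStep^[n] c) = 1 := by
    simp only [eventually_all_finset, eventually_imp_distrib_left]
    exact fun i _ ↦ eventually_valuation_sylvesterStep_iterate_eq_one _
  obtain ⟨n, hn⟩ := ((tendsto_add_atTop_nat 1).eventually hunit).exists
  have hbig : ∀ B : ValuationSubring L, 1 < B.valuation c →
      B.valuation (sylvesterStep^[n + 1] c)⁻¹ < 1 := fun B hB ↦ by
    rw [map_inv₀]
    exact inv_lt_one_of_one_lt₀ (one_lt_valuation_sylvesterStep_iterate B.valuation hB _)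
  refine ⟨1 - (sylvesterStep^[n + 1] c)⁻¹, ?_, ?_, fun i hi ↦ (A i).sub_mem (A i).one_mem ?_⟩
  · rw [sub_sub_cancel_left, Valuation.map_neg]
    exact hbig W hWc
  · have hsub := valuation_sylvesterStep_iterate_succ_sub_one_lt_one V.valuation hVc n
    have hone := valuation_eq_one_of_sub_one_lt_one V.valuation hsub
    have hne : sylvesterStep^[n + 1] c ≠ 0 := by
      rw [← V.valuation.ne_zero_iff, hone]
      exact one_ne_zero
    rwa [show 1 - (sylvesterStep^[n + 1] c)⁻¹ = (sylvesterStep^[n + 1] c - 1) /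
      sylvesterStep^[n + 1] c by field_simp, map_div₀, hone, div_one]
  · refine (A i).mem_of_valuation_le_one _ ?_
    rcases le_or_gt ((A i).valuation c) 1 with hc | hc
    · rw [map_inv₀, hn i hi hc, inv_one]
    · exact (hbig _ hc).le

theorem exists_valuation_sub_one_lt_one_and_forall_lt_one (W : ValuationSubring L) {ι : Type*}
    (s : Finset ι) (V : ι → ValuationSubring L) (hV : ∀ i ∈ s, ¬ W ≤ V i ∧ ¬ V i ≤ W) :
    ∃ x : L, W.valuation (x - 1) < 1 ∧ ∀ i ∈ s, (V i).valuation x < 1 := by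
  have hpair : ∀ i ∈ s, ∃ x : L, W.valuation (x - 1) < 1 ∧ (V i).valuation x < 1 ∧
      ∀ j ∈ s, x ∈ V j := fun i hi ↦
    exists_valuation_sub_one_lt_one_and_lt_one_of_forall_mem (hV i hi).1 (hV i hi).2 s V
  choose! x hxW hxV hxmem using hpair
  refine ⟨∏ i ∈ s, x i, valuation_prod_sub_one_lt_one _ hxW, fun i hi ↦ ?_⟩
  exact valuation_prod_lt_one _ hi (hxV i hi) fun j hj ↦
    ((V i).valuation_le_one_iff _).2 (hxmem j hj i hi)

end Approximation

section Prolongation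

variable {F L : Type*} [Field F] [Field L]

theorem exists_valuationSubring_comap_eq (O : ValuationSubring F) (f : F →+* L) :
    ∃ W : ValuationSubring L, W.comap f = O := by
  obtain ⟨W, hW, hlocal⟩ := IsLocalRing.exists_factor_valuationRing (f.comp O.subtype)
  refine ⟨W, SetLike.ext fun x ↦ ⟨fun hx ↦ ?_, fun hx ↦ hW ⟨x, hx⟩⟩⟩
  by_contra hxO
  have hx0 : x ≠ 0 := by
    rintro rfl
    exact hxO O.zero_mem
  let y : O := ⟨x⁻¹, (O.mem_or_inv_mem x).resolve_left hxO⟩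
  have hunit : IsUnit ((f.comp O.subtype).codRestrict W.toSubring hW y) :=
    .of_mul_eq_one ⟨f x, hx⟩ <| Subtype.ext <| by
      change f x⁻¹ * f x = 1
      rw [← map_mul, inv_mul_cancel₀ hx0, map_one]
  obtain ⟨z, hz⟩ := (hlocal.map_nonunit y hunit).exists_right_inv
  have hzx : (z : F) = x := by
    simpa [y, inv_mul_eq_one₀ hx0, eq_comm] using congrArg (Subtype.val : O → F) hz
  exact hxO (hzx ▸ z.2)

theorem valuation_comap_lt_one_iff (W : ValuationSubring L) (f : F →+* L) (x : F) :
    (W.comap f).valuation x < 1 ↔ W.valuation (f x) < 1 := by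
  simp only [← ValuationSubring.mem_nonunits_iff, ValuationSubring.mem_nonunits_iff_or,
    ValuationSubring.mem_comap, map_inv₀, map_eq_zero]

open scoped Pointwise

theorem valuation_smul_lt_one_iff {G : Type*} [Group G] [MulSemiringAction G L]
    (W : ValuationSubring L) (g : G) (x : L) :
    (g • W).valuation x < 1 ↔ W.valuation (g⁻¹ • x) < 1 := by
  simp only [← ValuationSubring.mem_nonunits_iff, ValuationSubring.mem_nonunits_iff_or,
    ValuationSubring.mem_pointwise_smul_iff_inv_smul_mem, smul_inv'', smul_eq_zero_iff_eq]

theorem comap_algebraMap_smul [Algebra F L] (W : ValuationSubring L) (σ : Gal(L/F)) :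
    (σ • W).comap (algebraMap F L) = W.comap (algebraMap F L) := by
  ext x
  simp only [ValuationSubring.mem_comap, ValuationSubring.mem_pointwise_smul_iff_inv_smul_mem,
    AlgEquiv.smul_def, AlgEquiv.commutes]

theorem mem_decompositionSubgroup_iff [Algebra F L] {W : ValuationSubring L} {σ : Gal(L/F)} :
    σ ∈ W.decompositionSubgroup F ↔ ∀ x, x ∈ W ↔ σ x ∈ W := by
  rw [MulAction.mem_stabilizer_iff, eq_comm, SetLike.ext_iff]
  refine ⟨fun h x ↦ ?_, fun h x ↦ ?_⟩
  · rw [h (σ x)]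
    exact ValuationSubring.smul_mem_pointwise_smul_iff.symm
  · rw [ValuationSubring.mem_pointwise_smul_iff_inv_smul_mem, h (σ⁻¹ • x), ← AlgEquiv.smul_def,
      smul_inv_smul]

end Prolongation

section Polynomial

open Polynomial IsLocalRing

section

variable {R Γ₀ : Type*} [Ring R] [LinearOrderedCommGroupWithZero Γ₀]

/-- Congruence of polynomials modulo the maximal ideal of a valuation `v`, coefficient by
coefficient. The polynomials themselves need not have integral coefficients. -/
def CoeffCongr (v : Valuation R Γ₀) (p q : R[X]) : Prop := ∀ i, v ((p - q).coeff i) < 1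

theorem coeffCongr_X_pow_mul_X_sub_one_iff (v : Valuation R Γ₀) {h : R[X]} (hm : h.Monic) {n : ℕ}
    (hdeg : h.natDegree = n + 1) : CoeffCongr v h (X ^ n * (X - 1)) ↔
      (∀ i < n, v (h.coeff i) < 1) ∧ v (1 + h.coeff n) < 1 := by
  have hcoeff (i : ℕ) : (h - X ^ n * (X - 1)).coeff i =
      h.coeff i - (if i = n + 1 then 1 else 0) + (if i = n then 1 else 0) := by
    rw [mul_sub, mul_one, ← pow_succ, coeff_sub, coeff_sub, coeff_X_pow, coeff_X_pow]
    abel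
  simp only [CoeffCongr, hcoeff]
  constructor
  · refine fun H ↦ ⟨fun i hi ↦ ?_, ?_⟩
    · simpa [hi.ne, show i ≠ n + 1 by lia] using H i
    · simpa [add_comm] using H n
  · rintro ⟨hlow, hn⟩ i
    rcases lt_trichotomy i n with hi | rfl | hi
    · simpa [hi.ne, show i ≠ n + 1 by lia] using hlow i hi
    · simpa [add_comm] using hn
    · obtain rfl | hi' := (Nat.succ_le_of_lt hi).eq_or_lt
      · simp [show h.coeff (n + 1) = 1 from hdeg ▸ hm.coeff_natDegree]
      · simp [hi.ne', hi'.ne', coeff_eq_zero_of_natDegree_lt (hdeg.trans_lt hi')]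

end

theorem coeffCongr_comap_iff {F L : Type*} [Field F] [Field L] (W : ValuationSubring L)
    (f : F →+* L) (p q : F[X]) : CoeffCongr (W.comap f).valuation p q ↔
      CoeffCongr W.valuation (p.map f) (q.map f) := by
  simp only [CoeffCongr, valuation_comap_lt_one_iff, ← Polynomial.map_sub, coeff_map]

variable {L : Type*} [Field L] {W : ValuationSubring L}

theorem valuation_sub_lt_one_iff_residue_eq (a b : W) :
    W.valuation (a - b : L) < 1 ↔ residue W a = residue W b := by
  rw [← sub_eq_zero, ← map_sub, residue_eq_zero_iff, ValuationSubring.valuation_lt_one_iff]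
  rfl

theorem coeffCongr_map_subtype_iff (P Q : W[X]) :
    CoeffCongr W.valuation (P.map W.subtype) (Q.map W.subtype) ↔
      P.map (residue W) = Q.map (residue W) := by
  simp only [CoeffCongr, Polynomial.ext_iff, coeff_sub, coeff_map, ValuationSubring.subtype_apply,
    valuation_sub_lt_one_iff_residue_eq]

theorem mem_of_isRoot_of_coeffCongr {h : L[X]} (hm : h.Monic) {Q : W[X]}
    (hcong : CoeffCongr W.valuation h (Q.map W.subtype)) {a : L} (ha : h.IsRoot a) : a ∈ W := by
  have hlifts : h ∈ lifts W.subtype := by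
    refine (lifts_iff_coeff_lifts _).2 fun i ↦ ⟨⟨h.coeff i, ?_⟩, rfl⟩
    have hi := W.add_mem _ _ (W.mem_of_valuation_le_one _ (hcong i).le) (Q.coeff i).2
    simpa [coeff_sub, coeff_map] using hi
  obtain ⟨P, rfl, -, hP⟩ := lifts_and_degree_eq_and_monic hlifts hm
  have hint : IsIntegral W a := ⟨P, hP, by rwa [IsRoot.def, eval_map] at ha⟩
  obtain ⟨b, rfl⟩ := IsIntegrallyClosed.isIntegral_iff.1 hint
  exact b.2

theorem prod_X_sub_C_eq_X_pow_mul_X_sub_one_iff {k : Type*} [CommRing k] [IsDomain k]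
    (t : Multiset k) (n : ℕ) : (t.map (X - C ·)).prod = X ^ n * (X - 1) ↔
      t = 1 ::ₘ Multiset.replicate n 0 := by
  have hprod : ((1 ::ₘ Multiset.replicate n (0 : k)).map (X - C ·)).prod = X ^ n * (X - 1) := by
    simp [mul_comm]
  rw [← hprod]
  refine ⟨fun h ↦ ?_, fun h ↦ h ▸ rfl⟩
  simpa only [roots_multiset_prod_X_sub_C] using congrArg roots h

theorem coeffCongr_prod_X_sub_C_iff (t : Multiset W) (n : ℕ) :
    CoeffCongr W.valuation ((t.map (↑)).map (X - C · : L → L[X])).prod (X ^ n * (X - 1)) ↔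
      t.map (residue W) = 1 ::ₘ Multiset.replicate n 0 := by
  have hmap {k : Type _} [Field k] (f : W →+* k) : (t.map (X - C ·)).prod.map f =
      ((t.map f).map (X - C ·)).prod := by
    simp [Polynomial.map_multiset_prod]
  have hX {k : Type _} [Field k] (f : W →+* k) :
      (X ^ n * (X - 1) : W[X]).map f = X ^ n * (X - 1) := by
    simp
  rw [← prod_X_sub_C_eq_X_pow_mul_X_sub_one_iff, ← hmap, ← hX (residue W),
    ← coeffCongr_map_subtype_iff, hmap, hX]
  rfl

theorem coeffCongr_X_pow_mul_X_sub_one_iff_roots {h : L[X]} (hm : h.Monic) (hs : h.Splits)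
    (n : ℕ) : CoeffCongr W.valuation h (X ^ n * (X - 1)) ↔ ∃ y s, h.roots = y ::ₘ s ∧
      s.card = n ∧ W.valuation (y - 1) < 1 ∧ ∀ a ∈ s, W.valuation a < 1 := by
  classical
  have hprod := hs.eq_prod_roots_of_monic hm
  constructor
  · intro hcong
    have hmem : ∀ a ∈ h.roots, a ∈ W := fun a ha ↦
      mem_of_isRoot_of_coeffCongr hm (Q := X ^ n * (X - 1)) (by simpa using hcong)
        (isRoot_of_mem_roots ha)
    obtain ⟨t, ht⟩ := CanLift.prf (β := Multiset W) h.roots hmem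
    rw [hprod, ← ht, coeffCongr_prod_X_sub_C_iff, ← Multiset.map_eq_cons] at hcong
    obtain ⟨y, hyt, hy, hzero⟩ := hcong
    refine ⟨y, (t.erase y).map (↑), ?_, ?_, ?_, ?_⟩
    · rw [← ht, ← Multiset.map_cons, Multiset.cons_erase hyt]
    · simpa using congrArg Multiset.card hzero
    · simpa using (valuation_sub_lt_one_iff_residue_eq y 1).2 (by rw [hy, map_one])
    · simp only [Multiset.mem_map, forall_exists_index, and_imp, forall_apply_eq_imp_iff₂]
      intro a ha
      have ha0 := Multiset.eq_of_mem_replicate (hzero ▸ Multiset.mem_map_of_mem (residue W) ha)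
      simpa using (valuation_sub_lt_one_iff_residue_eq a 0).2 (by rw [ha0, map_zero])
  · rintro ⟨y, s, hroots, rfl, hy, hs0⟩
    lift s to Multiset W using fun a ha ↦ W.mem_of_valuation_le_one _ (hs0 a ha).le
    lift y to W using W.mem_of_valuation_le_one _ (valuation_eq_one_of_sub_one_lt_one _ hy).le
    rw [hprod, hroots, ← Multiset.map_cons, coeffCongr_prod_X_sub_C_iff, Multiset.map_cons,
      Multiset.card_map]
    congr 1
    · simpa using (valuation_sub_lt_one_iff_residue_eq y 1).1 (by simpa using hy)
    · refine Multiset.eq_replicate.2 ⟨Multiset.card_map _ _, ?_⟩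
      simp only [Multiset.mem_map, forall_exists_index, and_imp, forall_apply_eq_imp_iff₂]
      intro a ha
      rw [residue_eq_zero_iff, ValuationSubring.valuation_lt_one_iff]
      exact hs0 _ (Multiset.mem_map_of_mem _ ha)

end Polynomial

section Galois

open scoped Pointwise
open MulAction

theorem valuation_smul_sub_one_lt_one {G L : Type*} [Group G] [Field L] [MulSemiringAction G L]
    {W : ValuationSubring L} {g : G} (hg : g ∈ stabilizer G W) {x : L}
    (hx : W.valuation (x - 1) < 1) : W.valuation (g • x - 1) < 1 := by
  have hinv : g⁻¹ • W = W := (stabilizer G W).inv_mem hg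
  rwa [← smul_one g, ← smul_sub, ← inv_inv g, ← valuation_smul_lt_one_iff, hinv]

theorem exists_valuation_sub_one_lt_one_and_forall_smul {G L : Type*} [Group G] [Finite G]
    [Field L] [MulSemiringAction G L] (W : ValuationSubring L) :
    ∃ y : L, W.valuation (y - 1) < 1 ∧ (∀ g ∈ stabilizer G W, g • y = y) ∧
      ∀ g ∉ stabilizer G W, W.valuation (g • y) < 1 := by
  classical
  have := Fintype.ofFinite G
  obtain ⟨x, hxW, hx⟩ := exists_valuation_sub_one_lt_one_and_forall_lt_one W
    {g : G | g ∉ stabilizer G W} (· • W) fun g hg ↦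
      ⟨fun h ↦ (Finset.mem_filter.1 hg).2 (smul_eq_of_le_smul h),
        fun h ↦ (Finset.mem_filter.1 hg).2 (smul_eq_of_smul_le h)⟩
  have hx_smul (g : G) (hg : g ∉ stabilizer G W) : W.valuation (g • x) < 1 := by
    have hinv : g⁻¹ ∉ stabilizer G W := mt (Subgroup.inv_mem_iff _).1 hg
    rw [← inv_inv g, ← valuation_smul_lt_one_iff]
    exact hx g⁻¹ (Finset.mem_filter.2 ⟨Finset.mem_univ _, hinv⟩)
  refine ⟨∏ g : stabilizer G W, g • x, ?_, fun g hg ↦ ?_, fun g hg ↦ ?_⟩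
  · exact valuation_prod_sub_one_lt_one _ fun g _ ↦ valuation_smul_sub_one_lt_one g.2 hxW
  · exact Finset.smul_prod_perm x (⟨g, hg⟩ : stabilizer G W)
  · have hlt (k : stabilizer G W) : W.valuation (g • k • x) < 1 := by
      rw [Subgroup.smul_def, smul_smul]
      exact hx_smul _ fun h ↦ hg ((Subgroup.mul_mem_cancel_right _ k.2).1 h)
    rw [Finset.smul_prod']
    exact valuation_prod_lt_one _ (Finset.mem_univ 1) (hlt 1) fun k _ ↦ (hlt k).le

theorem exists_valuation_sub_one_lt_one_and_stabilizer_eq {G L : Type*} [Group G] [Finite G]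
    [Field L] [MulSemiringAction G L] (W : ValuationSubring L) :
    ∃ y : L, W.valuation (y - 1) < 1 ∧ stabilizer G y = stabilizer G W ∧
      ∀ g : G, g • y ≠ y → W.valuation (g • y) < 1 := by
  obtain ⟨y, hy, hfix, hlt⟩ := exists_valuation_sub_one_lt_one_and_forall_smul (G := G) W
  refine ⟨y, hy, le_antisymm (fun g hg ↦ ?_) hfix, fun g hg ↦ hlt g (hg <| hfix g ·)⟩
  by_contra hgW
  have hlt := hlt g hgW
  rw [hg, valuation_eq_one_of_sub_one_lt_one _ hy] at hlt
  exact hlt.false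

variable {F L : Type*} [Field F] [Field L] [Algebra F L]

open IntermediateField in
theorem fixingSubgroup_adjoin_simple (y : L) :
    F⟮y⟯.fixingSubgroup = stabilizer Gal(L/F) y := by
  refine le_antisymm (fun σ hσ ↦ ?_) ?_
  · exact (mem_fixingSubgroup_iff _ _).1 hσ y (mem_adjoin_simple_self F y)
  · rw [← le_iff_le, adjoin_simple_le_iff]
    exact (mem_fixedField_iff _ _).2 fun σ hσ ↦ hσ

open Polynomial IntermediateField

theorem exists_roots_minpoly_eq_cons [Normal F L] [Algebra.IsSeparable F L]
    {W : ValuationSubring L} {y : L}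
    (hsmall : ∀ σ : Gal(L/F), σ • y ≠ y → W.valuation (σ • y) < 1) :
    ∃ s, ((minpoly F y).map (algebraMap F L)).roots = y ::ₘ s ∧ ∀ a ∈ s, W.valuation a < 1 := by
  have hint : IsIntegral F y := Algebra.IsIntegral.isIntegral y
  obtain ⟨s, hs⟩ := Multiset.exists_cons_of_mem
    (mem_aroots.2 ⟨minpoly.ne_zero hint, minpoly.aeval F y⟩)
  refine ⟨s, hs, fun a ha ↦ ?_⟩
  obtain ⟨σ, rfl⟩ := minpoly.exists_algEquiv_of_root' hint.isAlgebraic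
    (mem_aroots.1 (hs ▸ Multiset.mem_cons_of_mem ha)).2
  have hnodup : (y ::ₘ s).Nodup :=
    hs ▸ nodup_roots (Polynomial.Separable.map (Algebra.IsSeparable.isSeparable F y))
  exact hsmall σ fun h : σ y = y ↦ (Multiset.nodup_cons.1 hnodup).1 (h ▸ ha)

theorem exists_coeffCongr_of_fixingSubgroup_eq_decompositionSubgroup [FiniteDimensional F L]
    [IsGalois F L] {W : ValuationSubring L} {K : IntermediateField F L}
    (hK : K.fixingSubgroup = W.decompositionSubgroup F) {n : ℕ}
    (hn : Module.finrank F K = n + 1) :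
    ∃ h : F[X], h.Monic ∧ h.natDegree = n + 1 ∧ Irreducible h ∧ (∃ y ∈ K, aeval y h = 0) ∧
      CoeffCongr (W.comap (algebraMap F L)).valuation h (X ^ n * (X - 1)) := by
  obtain ⟨y, hy, hstab, hsmall⟩ :=
    exists_valuation_sub_one_lt_one_and_stabilizer_eq (G := Gal(L/F)) W
  have hint : IsIntegral F y := Algebra.IsIntegral.isIntegral y
  have hsplits := IsGalois.splits F y
  have hadjoin : F⟮y⟯ = K := by
    rw [← IsGalois.fixedField_fixingSubgroup F⟮y⟯, fixingSubgroup_adjoin_simple,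
      hstab.trans hK.symm, IsGalois.fixedField_fixingSubgroup]
  have hdeg : (minpoly F y).natDegree = n + 1 := by
    rw [← adjoin.finrank hint, hadjoin, hn]
  obtain ⟨s, hroots, hs⟩ := exists_roots_minpoly_eq_cons hsmall
  have hcard : s.card = n := by
    simpa [hroots, hdeg] using hsplits.natDegree_eq_card_roots.symm
  refine ⟨minpoly F y, minpoly.monic hint, hdeg, minpoly.irreducible hint,
    ⟨y, hadjoin ▸ mem_adjoin_simple_self F y, minpoly.aeval F y⟩, ?_⟩
  rw [coeffCongr_comap_iff]
  simpa using (coeffCongr_X_pow_mul_X_sub_one_iff_roots ((minpoly.monic hint).map _) hsplits n).2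
    ⟨y, s, hroots, hcard, hy, hs⟩

theorem exists_valuation_sub_one_lt_one_and_forall_root {W : ValuationSubring L} {h : F[X]}
    (hm : h.Monic) (hs : (h.map (algebraMap F L)).Splits) {n : ℕ}
    (hcong : CoeffCongr (W.comap (algebraMap F L)).valuation h (X ^ n * (X - 1))) :
    ∃ y, aeval y h = 0 ∧ W.valuation (y - 1) < 1 ∧
      ∀ a, aeval a h = 0 → W.valuation (a - 1) < 1 → a = y := by
  rw [coeffCongr_comap_iff] at hcong
  obtain ⟨y, s, hroots, -, hy, hsmall⟩ :=
    (coeffCongr_X_pow_mul_X_sub_one_iff_roots (hm.map _) hs n).1 (by simpa using hcong)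
  have hmem (a : L) : aeval a h = 0 ↔ a ∈ y ::ₘ s := by
    rw [← hroots, ← aroots_def, mem_aroots, and_iff_right hm.ne_zero]
  refine ⟨y, (hmem y).2 (Multiset.mem_cons_self y s), hy, fun a ha ha1 ↦ ?_⟩
  refine (Multiset.mem_cons.1 ((hmem a).1 ha)).resolve_right fun has ↦ ?_
  exact (hsmall a has).ne (valuation_eq_one_of_sub_one_lt_one _ ha1)

theorem decompositionSubgroup_le_stabilizer_of_coeffCongr {W : ValuationSubring L} {h : F[X]}
    (hm : h.Monic) (hs : (h.map (algebraMap F L)).Splits) {n : ℕ}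
    (hcong : CoeffCongr (W.comap (algebraMap F L)).valuation h (X ^ n * (X - 1))) {y : L}
    (hroot : aeval y h = 0) (hy : W.valuation (y - 1) < 1) :
    W.decompositionSubgroup F ≤ stabilizer Gal(L/F) y := by
  intro σ hσ
  obtain ⟨z, -, -, hz⟩ := exists_valuation_sub_one_lt_one_and_forall_root hm hs hcong
  have hσroot : aeval (σ • y) h = 0 := by
    rw [AlgEquiv.smul_def, aeval_algHom_apply, hroot, map_zero]
  exact (hz _ hσroot (valuation_smul_sub_one_lt_one hσ hy)).trans (hz y hroot hy).symm

theorem exists_comap_eq_and_valuation_sub_one_lt_one [Normal F L] (O : ValuationSubring F)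
    {h : F[X]} (hm : h.Monic) (hirr : Irreducible h) {n : ℕ}
    (hcong : CoeffCongr O.valuation h (X ^ n * (X - 1))) {y : L} (hroot : aeval y h = 0) :
    ∃ W : ValuationSubring L, W.comap (algebraMap F L) = O ∧ W.valuation (y - 1) < 1 := by
  obtain ⟨W, rfl⟩ := exists_valuationSubring_comap_eq O (algebraMap F L)
  have hmin : h = minpoly F y := minpoly.eq_of_irreducible_of_monic hirr hroot hm
  have hs : (h.map (algebraMap F L)).Splits :=
    hmin ▸ Normal.splits ‹Normal F L› y
  obtain ⟨z, hz, hz1, -⟩ := exists_valuation_sub_one_lt_one_and_forall_root hm hs hcong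
  obtain ⟨σ, rfl⟩ := minpoly.exists_algEquiv_of_root' (Algebra.IsAlgebraic.isAlgebraic y)
    (hmin ▸ hz)
  refine ⟨σ⁻¹ • W, comap_algebraMap_smul W σ⁻¹, ?_⟩
  rw [valuation_smul_lt_one_iff, inv_inv, smul_sub, smul_one]
  exact hz1

theorem fixingSubgroup_eq_decompositionSubgroup_of_le [FiniteDimensional F L]
    [IsGalois F L] {W : ValuationSubring L} {K : IntermediateField F L}
    (hle : W.decompositionSubgroup F ≤ K.fixingSubgroup)
    (hfin : {V : ValuationSubring L |
      V.comap (algebraMap F L) = W.comap (algebraMap F L)}.Finite)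
    (hcard : {V : ValuationSubring L |
      V.comap (algebraMap F L) = W.comap (algebraMap F L)}.ncard ≤ Module.finrank F K) :
    K.fixingSubgroup = W.decompositionSubgroup F := by
  refine (eq_of_le_of_not_lt hle fun hlt ↦ ?_).symm
  refine (Subgroup.index_strictAnti hlt).not_ge ?_
  have horbit : orbit Gal(L/F) W ⊆ {V | V.comap (algebraMap F L) = W.comap (algebraMap F L)} := by
    rintro _ ⟨σ, rfl⟩
    exact comap_algebraMap_smul W σ
  rw [ValuationSubring.decompositionSubgroup, index_stabilizer,
    ← finrank_eq_fixingSubgroup_index]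
  exact (Set.ncard_le_ncard horbit hfin).trans hcard

theorem exists_fixingSubgroup_eq_decompositionSubgroup_of_coeffCongr [FiniteDimensional F L]
    [IsGalois F L] {O : ValuationSubring F} {K : IntermediateField F L}
    (hfin : {W : ValuationSubring L | W.comap (algebraMap F L) = O}.Finite)
    (hcard : {W : ValuationSubring L | W.comap (algebraMap F L) = O}.ncard ≤ Module.finrank F K)
    {h : F[X]} (hm : h.Monic) (hdeg : h.natDegree = Module.finrank F K) (hirr : Irreducible h)
    {n : ℕ} (hcong : CoeffCongr O.valuation h (X ^ n * (X - 1))) {y : L} (hyK : y ∈ K)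
    (hroot : aeval y h = 0) :
    ∃ W : ValuationSubring L, W.comap (algebraMap F L) = O ∧
      K.fixingSubgroup = W.decompositionSubgroup F := by
  obtain ⟨W, rfl, hy⟩ := exists_comap_eq_and_valuation_sub_one_lt_one O hm hirr hcong hroot
  have hmin : h = minpoly F y := minpoly.eq_of_irreducible_of_monic hirr hroot hm
  have hadjoin : F⟮y⟯ = K := eq_of_le_of_finrank_eq (adjoin_simple_le_iff.2 hyK)
    (by rw [adjoin.finrank (Algebra.IsIntegral.isIntegral y), ← hmin, hdeg])
  refine ⟨W, rfl, fixingSubgroup_eq_decompositionSubgroup_of_le ?_ hfin hcard⟩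
  rw [← hadjoin, fixingSubgroup_adjoin_simple]
  exact decompositionSubgroup_le_stabilizer_of_coeffCongr hm
    (hmin ▸ IsGalois.splits F y) hcong hroot hy

end Galois

set_option maxHeartbeats 1000000 in
theorem stmt11 {F L : Type*} [Field F] [Field L] [Algebra F L]
    [FiniteDimensional F L] [IsGalois F L]
    (O : ValuationSubring F)
    -- `v` is non-trivial:
    (hnontriv : O ≠ ⊤)
    (K : IntermediateField F L) {r : ℕ}
    (hr : Module.finrank F K = r)
    -- `v` has at most `r` prolongations to `L`:
    (hprol : {W : ValuationSubring L | W.comap (algebraMap F L) = O}.Finite)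
    (hcard : {W : ValuationSubring L | W.comap (algebraMap F L) = O}.ncard ≤ r) :
    -- `K` is a decomposition subfield of `L/F` w.r.t. `v`, i.e. `Gal(L/K)` is the
    -- decomposition subgroup of some prolongation `W` of `v` to `L`, ...
    (∃ W : ValuationSubring L, W.comap (algebraMap F L) = O ∧
      ∀ σ : L ≃ₐ[F] L, σ ∈ K.fixingSubgroup ↔ (∀ x : L, x ∈ W ↔ σ x ∈ W))
    ↔
    -- ... iff there is a monic irreducible polynomial `h` of degree `r` over `F` with
    -- a root in `K` whose coefficients `h₀, …, h_{r-2}` and `1 + h_{r-1}` lie in `M_v`: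
    (∃ h : Polynomial F, h.Monic ∧ h.natDegree = r ∧ Irreducible h ∧
      (∃ y : L, y ∈ K ∧ Polynomial.aeval y h = 0) ∧
      (∀ i : ℕ, i + 2 ≤ r → O.valuation (h.coeff i) < 1) ∧
      O.valuation (1 + h.coeff (r - 1)) < 1) := by
  obtain ⟨n, rfl⟩ : ∃ n, r = n + 1 := ⟨r - 1, by have := Module.finrank_pos (R := F) (M := K); lia⟩
  have hdecomp (W : ValuationSubring L) : (∀ σ : Gal(L/F), σ ∈ K.fixingSubgroup ↔
      ∀ x, x ∈ W ↔ σ x ∈ W) ↔ K.fixingSubgroup = W.decompositionSubgroup F := by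
    simp only [SetLike.ext_iff, mem_decompositionSubgroup_iff]
  have hcoeff {h : Polynomial F} (hm : h.Monic) (hdeg : h.natDegree = n + 1) :
      ((∀ i, i + 2 ≤ n + 1 → O.valuation (h.coeff i) < 1) ∧
        O.valuation (1 + h.coeff (n + 1 - 1)) < 1) ↔
        CoeffCongr O.valuation h (.X ^ n * (.X - 1)) := by
    rw [coeffCongr_X_pow_mul_X_sub_one_iff O.valuation hm hdeg, Nat.add_sub_cancel]
    simp only [Nat.succ_le_iff, Nat.add_lt_add_iff_right]
  simp only [hdecomp]
  constructor
  · rintro ⟨W, rfl, hW⟩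
    obtain ⟨h, hm, hdeg, hirr, hy, hcong⟩ :=
      exists_coeffCongr_of_fixingSubgroup_eq_decompositionSubgroup hW hr
    exact ⟨h, hm, hdeg, hirr, hy, (hcoeff hm hdeg).2 hcong⟩
  · rintro ⟨h, hm, hdeg, hirr, ⟨y, hyK, hroot⟩, hcong⟩
    exact exists_fixingSubgroup_eq_decompositionSubgroup_of_coeffCongr hprol
      (hcard.trans_eq hr.symm) hm (hdeg.trans hr.symm) hirr ((hcoeff hm hdeg).1 hcong) hyK hroot
end
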